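/- Let k be a field, Z a quasicompact separated scheme over k, and A_Z a quasicoherent sheaf of k-algebras on Z. Let W be a full subcategory of the category Aff(Z) of affine open subsets of Z that is closed under pairwise intersections and whose objects cover Z, and let A_W be the presheaf of k-algebras on W given by the sections of A_Z. Let j* : μ(A_Z) → A_W-mod be the (exact) restriction functor sending a sheaf to the presheaf of its sections over objects of W. Then for all M, N in μ(A_Z) and all n ≥ 0, the induced map on Yoneda Ext groups Ext^n_{μ(A_Z)}(M, N) → Ext^n_{A_W-mod}(j*M, j*N) is an isomorphism, where Ext on the left is computed in the abelian category μ(A_Z) and Ext on the right in the abelian category of presheaves of left A_W-modules on W. -/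

import Mathlib

/-!
# Statement 16

Let `k` be a field, `Z` a quasicompact separated scheme over `k`, and `A_Z` a quasicoherent
sheaf of `k`-algebras on `Z`.  Let `W` be a full subcategory of the category `Aff(Z)` of
affine open subsets of `Z`, closed under pairwise intersections and whose objects cover
`Z`, and let `A_W` be the presheaf of `k`-algebras on `W` given by the sections of `A_Z`.
Let `j* : μ(A_Z) → A_W-mod` be the (exact) restriction functor, where `μ(A_Z)` is the
category of sheaves of left `A_Z`-modules quasicoherent as `O_Z`-modules and `A_W-mod` the
category of presheaves of left `A_W`-modules on `W`.  Then for all `M, N ∈ μ(A_Z)` and all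
`n ≥ 0`, the induced map on Yoneda Ext groups
`Ext^n_{μ(A_Z)}(M, N) → Ext^n_{A_W-mod}(j*M, j*N)` is an isomorphism.

Formalization.  Sheaves/presheaves of modules are formalized concretely (`AlgData`,
`LModData`, `LModHom` below).  Yoneda `Ext^n` for `n ≥ 1` is the set of `n`-extensions
`0 → N → E_n → ... → E_1 → M → 0` — with all objects in the relevant category: in
`μ(A_Z)`, sheaves quasicoherent over `O_Z` with sheaf-exactness; in `A_W-mod`, arbitrary
presheaves on `W` with sectionwise exactness — modulo the equivalence relation generated by
morphisms of `n`-extensions; `j*` acts on extensions by componentwise restriction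
(`NExt.reindex`), and that this lands in sectionwise exact sequences (exactness of `j*`) is
part of the statement.  For `n = 0`, `Ext⁰ = Hom` and the induced map is
`φ ↦ j*φ = φ.reindex`.  Quasicoherence is encoded by the localization criterion on basic
opens of affine opens, as before.
-/

open AlgebraicGeometry CategoryTheory TopologicalSpace

noncomputable section

variable (k : Type) [Field k] (X : Scheme.{0}) (G : Set X.Opens)

/-- A presheaf of `k`-algebras on the family `G` of open subsets of the scheme `X`
(for `G = Set.univ`, on all open subsets). -/
structure AlgData : Type 1 where
  sec : G → Type
  [ringSec : ∀ U, Ring (sec U)]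
  [algSec : ∀ U, Algebra k (sec U)]
  res : ∀ {U V : G}, (V : X.Opens) ≤ (U : X.Opens) → sec U →ₐ[k] sec V
  res_id : ∀ (U : G) (x : sec U), res (le_refl (U : X.Opens)) x = x
  res_comp : ∀ {U V W : G} (h1 : (W : X.Opens) ≤ V) (h2 : (V : X.Opens) ≤ U) (x : sec U),
    res h1 (res h2 x) = res (h1.trans h2) x

attribute [instance] AlgData.ringSec AlgData.algSec

variable {k X G}

/-- Reindexing a presheaf of algebras along an inclusion `G' ⊆ G` of families of opens. -/
def AlgData.reindex (A : AlgData k X G) {G' : Set X.Opens} (hG : G' ⊆ G) :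
    AlgData k X G' where
  sec U := A.sec ⟨U.1, hG U.2⟩
  res {U V} h := A.res (U := ⟨U.1, hG U.2⟩) (V := ⟨V.1, hG V.2⟩) h
  res_id U x := A.res_id _ x
  res_comp h1 h2 x := A.res_comp h1 h2 x

variable (k X G) in
/-- A presheaf of left `A`-modules over the presheaf of `k`-algebras `A`, on the family `G`
of open subsets of `X`. -/
structure LModData (A : AlgData k X G) : Type 1 where
  sec : G → Type
  [acgSec : ∀ U, AddCommGroup (sec U)]
  [modSec : ∀ U, Module k (sec U)]
  res : ∀ {U V : G}, (V : X.Opens) ≤ (U : X.Opens) → sec U →ₗ[k] sec V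
  res_id : ∀ (U : G) (x : sec U), res (le_refl (U : X.Opens)) x = x
  res_comp : ∀ {U V W : G} (h1 : (W : X.Opens) ≤ V) (h2 : (V : X.Opens) ≤ U) (x : sec U),
    res h1 (res h2 x) = res (h1.trans h2) x
  lsmul : ∀ U : G, A.sec U → sec U → sec U
  lsmul_one : ∀ U m, lsmul U 1 m = m
  lsmul_mul : ∀ U a b m, lsmul U a (lsmul U b m) = lsmul U (a * b) m
  lsmul_add : ∀ U a m m', lsmul U a (m + m') = lsmul U a m + lsmul U a m'
  add_lsmul : ∀ U a a' m, lsmul U (a + a') m = lsmul U a m + lsmul U a' m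
  lsmul_k : ∀ U (c : k) a m, lsmul U (c • a) m = c • lsmul U a m
  lsmul_res : ∀ {U V : G} (h : (V : X.Opens) ≤ U) a m,
    res h (lsmul U a m) = lsmul V (A.res h a) (res h m)

attribute [instance] LModData.acgSec LModData.modSec

namespace LModData

variable {A : AlgData k X G}

/-- The sheaf axiom: unique gluing of compatible local sections (compatibility measured on
all common refinements belonging to `G`; for `G = Set.univ` the usual sheaf condition). -/
def IsSheafCond (M : LModData k X G A) : Prop :=
  ∀ (U : G) (ι : Type) (V : ι → G) (hle : ∀ i, (V i : X.Opens) ≤ (U : X.Opens)),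
    ((⨆ i, (V i : X.Opens)) = (U : X.Opens)) →
    ∀ s : ∀ i, M.sec (V i),
      (∀ (i j : ι) (W : G) (h1 : (W : X.Opens) ≤ V i) (h2 : (W : X.Opens) ≤ V j),
        M.res h1 (s i) = M.res h2 (s j)) →
      ∃! t : M.sec U, ∀ i, M.res (hle i) t = s i

/-- Reindexing along an inclusion `G' ⊆ G` (e.g. restriction of a sheaf to the affine
open subsets). -/
def reindex (M : LModData k X G A) {G' : Set X.Opens} (hG : G' ⊆ G) :
    LModData k X G' (A.reindex hG) where
  sec U := M.sec ⟨U.1, hG U.2⟩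
  res {U V} h := M.res (U := ⟨U.1, hG U.2⟩) (V := ⟨V.1, hG V.2⟩) h
  res_id U x := M.res_id _ x
  res_comp h1 h2 x := M.res_comp h1 h2 x
  lsmul U := M.lsmul ⟨U.1, hG U.2⟩
  lsmul_one U := M.lsmul_one _
  lsmul_mul U := M.lsmul_mul _
  lsmul_add U := M.lsmul_add _
  add_lsmul U := M.add_lsmul _
  lsmul_k U := M.lsmul_k _
  lsmul_res h a m := M.lsmul_res h a m

end LModData

/-- A morphism of presheaves of left `A`-modules. -/
structure LModHom {k : Type} [Field k] {X : Scheme.{0}} {G : Set X.Opens}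
    {A : AlgData k X G} (P Q : LModData k X G A) where
  app : ∀ U : G, P.sec U →ₗ[k] Q.sec U
  comm_res : ∀ {U V : G} (h : (V : X.Opens) ≤ U) (x : P.sec U),
    app V (P.res h x) = Q.res h (app U x)
  comm_lsmul : ∀ (U : G) (a : A.sec U) (x : P.sec U),
    app U (P.lsmul U a x) = Q.lsmul U a (app U x)

/-- Reindexing a morphism along an inclusion `G' ⊆ G`. -/
def LModHom.reindex {A : AlgData k X G} {P Q : LModData k X G A} (f : LModHom P Q)
    {G' : Set X.Opens} (hG : G' ⊆ G) : LModHom (P.reindex hG) (Q.reindex hG) where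
  app U := f.app ⟨U.1, hG U.2⟩
  comm_res h x := f.comm_res h x
  comm_lsmul U a x := f.comm_lsmul _ a x

/-- An `n`-extension `0 → N → E_{n} → ... → E_1 → P → 0` of `P` by `N` in the category of
presheaves of left `A`-modules: a chain `obj (n+1) → obj n → ... → obj 0` together with
identifications `obj 0 ≅ P` and `N ≅ obj (n+1)` (the objects `obj i` for `i > n + 1` are
irrelevant padding).  Exactness of the resulting sequence
`0 → N ≅ obj (n+1) → obj n → ... → obj 1 → obj 0 ≅ P → 0` is imposed separately, either
sectionwise (for presheaf categories) or locally (for sheaf categories). -/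
structure NExt {k : Type} [Field k] {X : Scheme.{0}} {G : Set X.Opens} (n : ℕ)
    {A : AlgData k X G} (P N : LModData k X G A) : Type 1 where
  obj : ℕ → LModData k X G A
  d : ∀ i : ℕ, LModHom (obj (i + 1)) (obj i)
  isoP : LModHom (obj 0) P
  isoP_bij : ∀ U : G, Function.Bijective (isoP.app U)
  isoN : LModHom N (obj (n + 1))
  isoN_bij : ∀ U : G, Function.Bijective (isoN.app U)

namespace NExt

variable {A : AlgData k X G} {P N : LModData k X G A} {n : ℕ}

/-- Exactness of the `n`-extension as a sequence of *presheaves*: sectionwise exactness. -/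
def SectionwiseExact (E : NExt n P N) : Prop :=
  (∀ U : G, Function.Injective ((E.d n).app U)) ∧
  (∀ j < n, ∀ (U : G) (x : (E.obj (j + 1)).sec U),
    (E.d j).app U x = 0 ↔ x ∈ Set.range ((E.d (j + 1)).app U)) ∧
  (∀ U : G, Function.Surjective ((E.d 0).app U))

/-- Exactness of the `n`-extension as a sequence of *sheaves*: injectivity at the left end,
complexes with locally vanishing homology in the middle, local surjectivity at the right
end. -/
def LocallyExact (E : NExt n P N) : Prop :=
  (∀ U : G, Function.Injective ((E.d n).app U)) ∧
  (∀ j < n, ∀ (U : G) (y : (E.obj (j + 2)).sec U),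
    (E.d j).app U ((E.d (j + 1)).app U y) = 0) ∧
  (∀ j < n, ∀ (U : G) (x : (E.obj (j + 1)).sec U), (E.d j).app U x = 0 →
    ∀ p : X, p ∈ (U : X.Opens) → ∃ (V : G) (hV : (V : X.Opens) ≤ U), p ∈ (V : X.Opens) ∧
      (E.obj (j + 1)).res hV x ∈ Set.range ((E.d (j + 1)).app V)) ∧
  (∀ (U : G) (x : (E.obj 0).sec U) (p : X), p ∈ (U : X.Opens) →
    ∃ (V : G) (hV : (V : X.Opens) ≤ U), p ∈ (V : X.Opens) ∧
      (E.obj 0).res hV x ∈ Set.range ((E.d 0).app V))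

/-- A morphism of `n`-extensions inducing the identity on `P` and on `N`; the equivalence
relation generated by these is the Yoneda equivalence of `n`-extensions. -/
def MorRel (E E' : NExt n P N) : Prop :=
  ∃ f : ∀ i : ℕ, LModHom (E.obj i) (E'.obj i),
    (∀ (i : ℕ) (U : G) (x : (E.obj (i + 1)).sec U),
      (f i).app U ((E.d i).app U x) = (E'.d i).app U ((f (i + 1)).app U x)) ∧
    (∀ (U : G) (x : (E.obj 0).sec U), E'.isoP.app U ((f 0).app U x) = E.isoP.app U x) ∧
    (∀ (U : G) (m : N.sec U), (f (n + 1)).app U (E.isoN.app U m) = E'.isoN.app U m)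

/-- Reindexing an `n`-extension along an inclusion `G' ⊆ G` (restriction to a subfamily of
opens). -/
def reindex (E : NExt n P N) {G' : Set X.Opens} (hG : G' ⊆ G) :
    NExt n (P.reindex hG) (N.reindex hG) where
  obj i := (E.obj i).reindex hG
  d i := (E.d i).reindex hG
  isoP := E.isoP.reindex hG
  isoP_bij U := E.isoP_bij _
  isoN := E.isoN.reindex hG
  isoN_bij U := E.isoN_bij _

end NExt

/-- The Yoneda `Ext^n`-set of `n`-extensions of `P` by `N` satisfying the condition `Cond`
(membership of the objects in the relevant abelian category, and the relevant exactness),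
modulo the equivalence relation generated by morphisms of `n`-extensions. -/
def YExt (n : ℕ) {A : AlgData k X G} (P N : LModData k X G A)
    (Cond : NExt n P N → Prop) : Type 1 :=
  Quot (fun (E E' : {E : NExt n P N // Cond E}) => NExt.MorRel E.1 E'.1)

end

noncomputable section

variable {k : Type} [Field k] {Z : Scheme.{0}}

/-- The left `O_Z`-module sheaf underlying `M` (via `str : O_Z → A_Z` and the `A_Z`-action)
is quasicoherent: for every affine open `U` and `f ∈ O_Z(U)`, the restriction
`M(U) → M(U_f)` is the localization of `M(U)` at the powers of `f`. -/
def IsQCohMod {A : AlgData k Z Set.univ}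
    (str : ∀ U : Z.Opens, Γ(Z, U) →+* A.sec ⟨U, trivial⟩)
    (M : LModData k Z Set.univ A) : Prop :=
  ∀ (U : Z.Opens), IsAffineOpen U → ∀ f : Γ(Z, U),
    (∀ y : M.sec ⟨Z.basicOpen f, trivial⟩, ∃ (p : ℕ) (m : M.sec ⟨U, trivial⟩),
      M.lsmul ⟨Z.basicOpen f, trivial⟩
          ((str (Z.basicOpen f) (Z.presheaf.map (homOfLE (Z.basicOpen_le f)).op f)) ^ p) y =
        M.res (U := ⟨U, trivial⟩) (V := ⟨Z.basicOpen f, trivial⟩) (Z.basicOpen_le f) m) ∧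
    (∀ m : M.sec ⟨U, trivial⟩,
      M.res (U := ⟨U, trivial⟩) (V := ⟨Z.basicOpen f, trivial⟩) (Z.basicOpen_le f) m = 0 →
        ∃ p : ℕ, M.lsmul ⟨U, trivial⟩ ((str U f) ^ p) m = 0)

/-!
Let `B` be the basis of all affine opens contained in a member of `W`. On `B` a quasicoherent
sheaf is the same as a presheaf of modules all of whose restriction maps are base changes over the
structure sheaf; between such presheaves local exactness is sectionwise exactness, and restriction
from `B` to `W` is fully faithful.

For `U ∈ W` and an injective `A(U)`-module `J`, the direct image of the presheaf associated with
`J` on the part of `W` below `U` is quasicoherent, and it is acyclic for `Ext` out of quasicoherent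
objects in the category of presheaves on `W`: direct image is right adjoint to restriction to `U`,
the associated presheaf is left adjoint to sections over `U` and agrees with its argument on
quasicoherent objects, and all these functors are exact where needed. By quasicompactness every
quasicoherent object embeds in a finite product of such objects. Hence every derived `Ext` class
between quasicoherent objects, and every equality of two Yoneda classes, is realised by extensions
with quasicoherent terms spliced from acyclic coresolutions.
-/

section YonedaExtensions

open Limits Abelian

universe w v u

variable {𝓑 : Type u} [Category.{v} 𝓑] [Abelian 𝓑]

/-- Yoneda `n`-extensions of `P` by `N` in an abelian category,
`0 ⟶ N ≅ obj (n + 1) ⟶ obj n ⟶ ⋯ ⟶ obj 1 ⟶ obj 0 ≅ P ⟶ 0`; the objects `obj i` with `i > n + 1`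
carry no information. -/
structure YonedaExtension (n : ℕ) (P N : 𝓑) where
  obj : ℕ → 𝓑
  d : ∀ i, obj (i + 1) ⟶ obj i
  isoP : obj 0 ≅ P
  isoN : N ≅ obj (n + 1)
  mono_d : Mono (d n)
  epi_d : Epi (d 0)
  d_comp_d : ∀ j < n, d (j + 1) ≫ d j = 0
  exact : ∀ (j : ℕ) (hj : j < n), (ShortComplex.mk _ _ (d_comp_d j hj)).Exact

/-- The pullback of a short exact sequence `S` along a map to its third term. -/
abbrev pullbackShortComplex {S : ShortComplex 𝓑} {P : 𝓑} (α : P ⟶ S.X₃) : ShortComplex 𝓑 :=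
  .mk (pullback.lift (f := S.g) (g := α) S.f 0 (by simp)) (pullback.snd S.g α)
    (pullback.lift_snd _ _ _)

/-- The canonical map from the pullback of a short exact sequence. -/
abbrev pullbackShortComplexFst {S : ShortComplex 𝓑} {P : 𝓑} (α : P ⟶ S.X₃) :
    pullbackShortComplex α ⟶ S where
  τ₁ := 𝟙 _
  τ₂ := pullback.fst _ _
  τ₃ := α
  comm₁₂ := (Category.id_comp _).trans (pullback.lift_fst _ _ _).symm
  comm₂₃ := pullback.condition

lemma pullbackShortComplex_shortExact {S : ShortComplex 𝓑} (hS : S.ShortExact) {P : 𝓑}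
    (α : P ⟶ S.X₃) : (pullbackShortComplex α).ShortExact := by
  have := hS.mono_f
  have := hS.epi_g
  refine { exact := ?_, mono_f := mono_of_mono_fac (pullback.lift_fst _ _ _) }
  refine ShortComplex.exact_of_f_is_kernel _ (KernelFork.IsLimit.ofι _ _
    (fun x hx => hS.exact.lift (x ≫ pullback.fst _ _) ?_) (fun x hx => ?_) fun x hx y hy => ?_)
  · rw [Category.assoc, pullback.condition, reassoc_of% hx, zero_comp]
  · refine pullback.hom_ext ?_ ?_
    · rw [Category.assoc, pullback.lift_fst, hS.exact.lift_f]
    · rw [Category.assoc, pullback.lift_snd, comp_zero]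
      exact hx.symm
  · rw [← cancel_mono S.f, hS.exact.lift_f, ← hy, Category.assoc, pullback.lift_fst]

/-- A map of short complexes factors through the pullback along its last component. -/
abbrev liftPullbackShortComplex {T S : ShortComplex 𝓑} (φ : T ⟶ S) :
    T ⟶ pullbackShortComplex φ.τ₃ where
  τ₁ := φ.τ₁
  τ₂ := pullback.lift φ.τ₂ T.g φ.comm₂₃
  τ₃ := 𝟙 _
  comm₁₂ := by
    refine pullback.hom_ext ?_ ?_
    · rw [Category.assoc, Category.assoc, pullback.lift_fst, pullback.lift_fst, φ.comm₁₂]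
    · rw [Category.assoc, Category.assoc, pullback.lift_snd, pullback.lift_snd, T.zero, comp_zero]
  comm₂₃ := (pullback.lift_snd _ _ _).trans (Category.comp_id _).symm

/-- A map of short complexes modified by a map from the third to the second term. -/
abbrev twist {T S : ShortComplex 𝓑} (φ : T ⟶ S) (γ : T.X₃ ⟶ S.X₂) : T ⟶ S where
  τ₁ := φ.τ₁
  τ₂ := φ.τ₂ + T.g ≫ γ
  τ₃ := φ.τ₃ + γ ≫ S.g
  comm₁₂ := by rw [Preadditive.comp_add, T.zero_assoc, zero_comp, add_zero, φ.comm₁₂]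
  comm₂₃ := by rw [Preadditive.add_comp, Preadditive.comp_add, φ.comm₂₃, Category.assoc]

namespace YonedaExtension

variable {n : ℕ} {P P' N : 𝓑}

attribute [instance] mono_d epi_d

/-- A family of maps of `n`-extensions over `α : P ⟶ P'` that is the identity on `N`. -/
structure Hom (α : P ⟶ P') (E : YonedaExtension n P N) (E' : YonedaExtension n P' N) where
  app : ∀ i, E.obj i ⟶ E'.obj i
  comm : ∀ i ≤ n, app (i + 1) ≫ E'.d i = E.d i ≫ app i
  comm_isoP : app 0 ≫ E'.isoP.hom = E.isoP.hom ≫ α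
  comm_isoN : E.isoN.hom ≫ app (n + 1) = E'.isoN.hom

/-- The composite with a map of extensions inducing the identity at both ends. -/
def Hom.comp {α : P ⟶ P'} {E : YonedaExtension n P N} {E' E'' : YonedaExtension n P' N}
    (f : Hom α E E') (g : Hom (𝟙 P') E' E'') : Hom α E E'' where
  app i := f.app i ≫ g.app i
  comm i hi := by rw [Category.assoc, g.comm i hi, ← Category.assoc, f.comm i hi, Category.assoc]
  comm_isoP := by rw [Category.assoc, g.comm_isoP, Category.comp_id, f.comm_isoP]
  comm_isoN := by rw [← Category.assoc, f.comm_isoN, g.comm_isoN]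

/-- The last step `0 ⟶ K ⟶ obj 1 ⟶ P ⟶ 0` of an extension of positive length. -/
def lastStep (E : YonedaExtension n P N) : ShortComplex 𝓑 :=
  .mk (kernel.ι (E.d 0 ≫ E.isoP.hom)) (E.d 0 ≫ E.isoP.hom) (kernel.condition _)

lemma lastStep_shortExact (E : YonedaExtension n P N) : E.lastStep.ShortExact where
  exact := ShortComplex.exact_kernel _
  mono_f := inferInstanceAs (Mono (kernel.ι (E.d 0 ≫ E.isoP.hom)))
  epi_g := inferInstanceAs (Epi (E.d 0 ≫ E.isoP.hom))

lemma d_one_comp (E : YonedaExtension (n + 1) P N) : E.d 1 ≫ E.d 0 ≫ E.isoP.hom = 0 := by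
  rw [← Category.assoc, E.d_comp_d 0 n.succ_pos, zero_comp]

lemma exact_lift_iff {X Y Z W : 𝓑} {f : X ⟶ Y} {g : Y ⟶ Z} {ι : Z ⟶ W} [Mono ι]
    (w : f ≫ g = 0) (w' : f ≫ g ≫ ι = 0) :
    (ShortComplex.mk f g w).Exact ↔ (ShortComplex.mk f (g ≫ ι) w').Exact :=
  ShortComplex.exact_iff_of_epi_of_isIso_of_mono
    (S₁ := .mk f g w) (S₂ := .mk f (g ≫ ι) w') { τ₁ := 𝟙 X, τ₂ := 𝟙 Y, τ₃ := ι }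

instance (E : YonedaExtension n P N) : Mono E.lastStep.f := E.lastStep_shortExact.mono_f

/-- The map from `obj 2` onto the first syzygy of an extension. -/
def toSyzygy (E : YonedaExtension (n + 1) P N) : E.obj 2 ⟶ E.lastStep.X₁ :=
  kernel.lift _ (E.d 1) E.d_one_comp

lemma toSyzygy_comp_f (E : YonedaExtension (n + 1) P N) : E.toSyzygy ≫ E.lastStep.f = E.d 1 :=
  kernel.lift_ι _ _ _

/-- The `n`-extension of the first syzygy that is left after removing the last step of an
`(n + 1)`-extension. -/
def tail (E : YonedaExtension (n + 1) P N) : YonedaExtension n E.lastStep.X₁ N where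
  obj
    | 0 => E.lastStep.X₁
    | j + 1 => E.obj (j + 2)
  d
    | 0 => E.toSyzygy
    | j + 1 => E.d (j + 2)
  isoP := Iso.refl _
  isoN := E.isoN
  mono_d := by
    cases n with
    | zero =>
      have : Mono (E.toSyzygy ≫ E.lastStep.f) := E.toSyzygy_comp_f ▸ E.mono_d
      exact mono_of_mono _ E.lastStep.f
    | succ n => exact E.mono_d
  epi_d := ((exact_lift_iff (E.d_comp_d 0 n.succ_pos) E.d_one_comp).1
    (E.exact 0 n.succ_pos)).epi_kernelLift
  d_comp_d
    | 0, hj => by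
      change E.d 2 ≫ E.toSyzygy = 0
      rw [← cancel_mono E.lastStep.f, Category.assoc, toSyzygy_comp_f, zero_comp]
      exact E.d_comp_d 1 (by omega)
    | j + 1, hj => E.d_comp_d (j + 2) (by omega)
  exact
    | 0, hj => by
      refine (exact_lift_iff (ι := E.lastStep.f) _ ?_).2 ?_
      all_goals simp only [toSyzygy_comp_f]
      exacts [E.d_comp_d 1 (by omega), E.exact 1 (by omega)]
    | j + 1, hj => E.exact (j + 2) (by omega)

/-- Splicing a short exact sequence `0 ⟶ X₁ ⟶ X₂ ⟶ X₃ ⟶ 0` with an extension of `X₁`. -/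
def cons {S : ShortComplex 𝓑} (hS : S.ShortExact) (U : YonedaExtension n S.X₁ N) :
    YonedaExtension (n + 1) S.X₃ N where
  obj
    | 0 => S.X₃
    | 1 => S.X₂
    | j + 2 => U.obj (j + 1)
  d
    | 0 => S.g
    | 1 => U.d 0 ≫ U.isoP.hom ≫ S.f
    | j + 2 => U.d (j + 1)
  isoP := Iso.refl _
  isoN := U.isoN
  mono_d := by
    have := hS.mono_f
    cases n with
    | zero => exact inferInstanceAs (Mono (U.d 0 ≫ U.isoP.hom ≫ S.f))
    | succ n => exact U.mono_d
  epi_d := hS.epi_g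
  d_comp_d
    | 0, _ => by simp
    | 1, hj => by simp [reassoc_of% U.d_comp_d 0 (by omega)]
    | j + 2, hj => U.d_comp_d (j + 1) (by omega)
  exact
    | 0, _ => by
      refine (ShortComplex.exact_iff_of_epi_of_isIso_of_mono (S₁ := .mk _ S.g _)
        (S₂ := .mk _ S.g S.zero)
        { τ₁ := U.d 0 ≫ U.isoP.hom, τ₂ := 𝟙 _, τ₃ := 𝟙 _ }).2 hS.exact
    | 1, hj => by
      have := hS.mono_f
      exact (exact_lift_iff (ι := U.isoP.hom ≫ S.f) (U.d_comp_d 0 (by omega)) _).1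
        (U.exact 0 (by omega))
    | j + 2, hj => U.exact (j + 1) (by omega)

/-- The map on last steps induced by a map of extensions. -/
def Hom.lastStep {α : P ⟶ P'} {E : YonedaExtension n P N} {E' : YonedaExtension n P' N}
    (f : Hom α E E') : E.lastStep ⟶ E'.lastStep where
  τ₁ := kernel.map _ _ (f.app 1) α (by
    rw [Category.assoc, ← f.comm_isoP, ← Category.assoc, ← f.comm 0 n.zero_le, Category.assoc])
  τ₂ := f.app 1
  τ₃ := α
  comm₁₂ := by simp [YonedaExtension.lastStep]
  comm₂₃ := by
    simp only [YonedaExtension.lastStep, Category.assoc, ← f.comm_isoP]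
    rw [← Category.assoc, f.comm 0 n.zero_le, Category.assoc]

/-- The map on tails induced by a map of extensions. -/
def Hom.tail {α : P ⟶ P'} {E : YonedaExtension (n + 1) P N} {E' : YonedaExtension (n + 1) P' N}
    (f : Hom α E E') : Hom f.lastStep.τ₁ E.tail E'.tail where
  app
    | 0 => f.lastStep.τ₁
    | j + 1 => f.app (j + 2)
  comm
    | 0, _ => by
      change f.app 2 ≫ E'.toSyzygy = E.toSyzygy ≫ f.lastStep.τ₁
      rw [← cancel_mono E'.lastStep.f, Category.assoc, Category.assoc, toSyzygy_comp_f,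
        f.lastStep.comm₁₂, reassoc_of% toSyzygy_comp_f]
      exact f.comm 1 (by omega)
    | j + 1, hj => f.comm (j + 2) (by omega)
  comm_isoP := (Category.comp_id _).trans (Category.id_comp _).symm
  comm_isoN := f.comm_isoN

/-- A map of an extension to a spliced one, from maps on last steps and on tails. -/
def Hom.toCons {E : YonedaExtension (n + 1) P N} {S : ShortComplex 𝓑} {hS : S.ShortExact}
    {U : YonedaExtension n S.X₁ N} (φ : E.lastStep ⟶ S) (f : Hom φ.τ₁ E.tail U) :
    Hom φ.τ₃ E (cons hS U) where
  app
    | 0 => E.isoP.hom ≫ φ.τ₃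
    | 1 => φ.τ₂
    | j + 2 => f.app (j + 1)
  comm
    | 0, _ => φ.comm₂₃.trans (Category.assoc _ _ _)
    | 1, _ => by
      let f₀ : E.lastStep.X₁ ⟶ U.obj 0 := f.app 0
      let f₁ : E.obj 2 ⟶ U.obj 1 := f.app 1
      have h₀ : f₁ ≫ U.d 0 = E.toSyzygy ≫ f₀ := f.comm 0 n.zero_le
      have hP : f₀ ≫ U.isoP.hom = φ.τ₁ := f.comm_isoP.trans (Category.id_comp _)
      have h₁ : f₁ ≫ U.d 0 ≫ U.isoP.hom ≫ S.f = E.d 1 ≫ φ.τ₂ := by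
        rw [reassoc_of% h₀, reassoc_of% hP, φ.comm₁₂, reassoc_of% toSyzygy_comp_f]
        rfl
      exact h₁
    | j + 2, hj => f.comm (j + 1) (by omega)
  comm_isoP := Category.comp_id _
  comm_isoN := f.comm_isoN

/-- The comparison of a short exact sequence with the last step of a splice. -/
def toLastStepCons {S : ShortComplex 𝓑} (hS : S.ShortExact) (U : YonedaExtension n S.X₁ N) :
    S ⟶ (cons hS U).lastStep where
  τ₁ := kernel.lift (S.g ≫ 𝟙 S.X₃) S.f (by simp)
  τ₂ := 𝟙 S.X₂
  τ₃ := 𝟙 S.X₃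
  comm₁₂ := (kernel.lift_ι _ _ _).trans (Category.comp_id _).symm
  comm₂₃ := by
    change 𝟙 _ ≫ S.g ≫ 𝟙 _ = S.g ≫ 𝟙 _
    simp

/-- The comparison of an extension with the tail of a splice. -/
def Hom.toTailCons {S : ShortComplex 𝓑} (hS : S.ShortExact) (U : YonedaExtension n S.X₁ N) :
    Hom (toLastStepCons hS U).τ₁ U (cons hS U).tail where
  app
    | 0 => U.isoP.hom ≫ (toLastStepCons hS U).τ₁
    | j + 1 => 𝟙 _
  comm
    | 0, _ => by
      have hτ : (toLastStepCons hS U).τ₁ ≫ (cons hS U).lastStep.f = S.f := kernel.lift_ι _ _ _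
      refine (Category.id_comp _).trans ((cancel_mono (cons hS U).lastStep.f).1
        ((toSyzygy_comp_f _).trans ?_))
      let ι : (cons hS U).lastStep.X₁ ⟶ S.X₂ := (cons hS U).lastStep.f
      have hd : U.d 0 ≫ U.isoP.hom ≫ S.f = (U.d 0 ≫ U.isoP.hom ≫ (toLastStepCons hS U).τ₁) ≫ ι := by
        rw [Category.assoc, Category.assoc]
        exact congrArg (U.d 0 ≫ U.isoP.hom ≫ ·) hτ.symm
      exact hd
    | _ + 1, _ => (Category.id_comp _).trans (Category.comp_id _).symm
  comm_isoP := Category.comp_id _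
  comm_isoN := Category.comp_id _

/-- The extension of length zero given by the identity of `N`. -/
def refl (N : 𝓑) : YonedaExtension 0 N N where
  obj _ := N
  d _ := 𝟙 N
  isoP := Iso.refl N
  isoN := Iso.refl N
  mono_d := inferInstance
  epi_d := inferInstance
  d_comp_d _ hj := absurd hj (Nat.not_lt_zero _)
  exact _ hj := absurd hj (Nat.not_lt_zero _)

/-- An extension of length zero maps to the identity extension. -/
def Hom.toRefl (E : YonedaExtension 0 P N) :
    have : IsIso (E.d 0) := isIso_of_mono_of_epi _
    Hom (E.isoP.inv ≫ inv (E.d 0) ≫ E.isoN.inv) E (refl N) :=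
  have : IsIso (E.d 0) := isIso_of_mono_of_epi _
  { app
      | 0 => inv (E.d 0) ≫ E.isoN.inv
      | 1 => E.isoN.inv
      | _ + 2 => 0
    comm := by
      rintro i hi
      obtain rfl := Nat.le_zero.1 hi
      simp [refl]
    comm_isoP := by simp [refl]
    comm_isoN := by simp [refl] }

lemma nonempty_hom_cons_pullback {S : ShortComplex 𝓑} {hS : S.ShortExact}
    {E : YonedaExtension (n + 1) P N} {U : YonedaExtension n S.X₁ N} {φ : E.lastStep ⟶ S}
    (f : Hom φ.τ₁ E.tail U) {α : P ⟶ S.X₃} (hα : φ.τ₃ = α) :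
    Nonempty (Hom (𝟙 P) E (.cons (pullbackShortComplex_shortExact hS α) U)) := by
  obtain rfl := hα
  exact ⟨.toCons (liftPullbackShortComplex φ) f⟩

variable {C : ObjectProperty 𝓑}

lemma prop_obj_cons {S : ShortComplex 𝓑} {hS : S.ShortExact} {U : YonedaExtension n S.X₁ N}
    (h₂ : C S.X₂) (h₃ : C S.X₃) (hU : ∀ i, C (U.obj i)) : ∀ i, C ((cons hS U).obj i)
  | 0 => h₃
  | 1 => h₂
  | i + 2 => hU (i + 1)

variable [C.IsClosedUnderKernels]

lemma prop_lastStep_X₁ {E : YonedaExtension n P N} (hP : C P) (hE : ∀ i, C (E.obj i)) :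
    C E.lastStep.X₁ :=
  C.prop_kernel _ (hE 1) hP

lemma prop_obj_tail {E : YonedaExtension (n + 1) P N} (hP : C P) (hE : ∀ i, C (E.obj i)) :
    ∀ i, C (E.tail.obj i)
  | 0 => prop_lastStep_X₁ hP hE
  | i + 1 => hE (i + 2)

end YonedaExtension

lemma prop_pullback {C : ObjectProperty 𝓑} [C.IsClosedUnderKernels] [C.IsClosedUnderFiniteProducts]
    {X Y Z : 𝓑} (f : X ⟶ Z) (g : Y ⟶ Z) (hX : C X) (hY : C Y) (hZ : C Z) : C (pullback f g) :=
  C.prop_of_isLimit_kernelFork (PullbackToBiproductIsKernel.isLimitPullbackToBiproduct f g)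
    (C.prop_of_isLimit_binaryFan (BinaryBiproduct.isLimit X Y) hX hY) hZ

variable [HasExt.{w} 𝓑]

/-- Every object of `C` embeds, with cokernel in `C`, into an object of `C` that is acyclic for
`Ext` out of objects of `C`. -/
def HasAcyclicEmbeddings (C : ObjectProperty 𝓑) : Prop :=
  ∀ X, C X → ∃ S : ShortComplex 𝓑, S.ShortExact ∧ S.X₁ = X ∧ C S.X₂ ∧ C S.X₃ ∧
    ∀ Y, C Y → ∀ (n : ℕ) (e : Ext.{w} Y S.X₂ (n + 1)), e = 0

namespace YonedaExtension

variable {n : ℕ} {M P P' R N : 𝓑} {C : ObjectProperty 𝓑}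

/-- The class in `Ext^1` of the last step of an extension. -/
def lastStepClass (E : YonedaExtension n P N) : Ext.{w} P E.lastStep.X₁ 1 :=
  E.lastStep_shortExact.extClass

lemma Hom.mk₀_comp_lastStepClass {α : P ⟶ P'} {E : YonedaExtension n P N}
    {E' : YonedaExtension n P' N} (f : Hom α E E') :
    (Ext.mk₀ α).comp E'.lastStepClass.{w} (zero_add 1) =
      E.lastStepClass.{w}.comp (Ext.mk₀ f.lastStep.τ₁) (add_zero 1) :=
  (E.lastStep_shortExact.extClass_naturality E'.lastStep_shortExact f.lastStep).symm

/-- The class of an `n`-extension in `Ext^n`: the Yoneda product of the classes of the short exact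
sequences it is spliced from. -/
def cls : ∀ {n : ℕ} {P : 𝓑}, YonedaExtension n P N → Ext.{w} P N n
  | 0, _, E =>
    have : IsIso (E.d 0) := isIso_of_mono_of_epi _
    Ext.mk₀ (E.isoP.inv ≫ inv (E.d 0) ≫ E.isoN.inv)
  | _ + 1, _, E => E.lastStepClass.comp (cls E.tail) (add_comm 1 _)

lemma Hom.mk₀_comp_cls : ∀ {n : ℕ} {P P' : 𝓑} {α : P ⟶ P'} {E : YonedaExtension n P N}
    {E' : YonedaExtension n P' N}, Hom α E E' →
    (Ext.mk₀ α).comp E'.cls.{w} (zero_add n) = E.cls.{w}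
  | 0, _, _, α, E, E', f => by
    have : IsIso (E.d 0) := isIso_of_mono_of_epi _
    have : IsIso (E'.d 0) := isIso_of_mono_of_epi _
    rw [cls, cls, Ext.mk₀_comp_mk₀]
    congr 1
    rw [← cancel_epi E.isoP.hom, ← cancel_epi (E.d 0), ← cancel_epi E.isoN.hom,
      ← reassoc_of% f.comm_isoP, ← reassoc_of% f.comm 0 le_rfl, reassoc_of% f.comm_isoN]
    simp
  | n + 1, _, _, α, E, E', f => by
    rw [cls, cls, ← f.tail.mk₀_comp_cls,
      ← Ext.comp_assoc_of_second_deg_zero, ← f.mk₀_comp_lastStepClass]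
    exact (Ext.comp_assoc _ _ _ _ _ (by omega)).symm

lemma Hom.cls_eq {E E' : YonedaExtension n M N} (f : Hom (𝟙 M) E E') :
    E.cls.{w} = E'.cls.{w} :=
  f.mk₀_comp_cls.symm.trans (Ext.mk₀_id_comp _)

lemma cls_cons {S : ShortComplex 𝓑} (hS : S.ShortExact) (U : YonedaExtension n S.X₁ N) :
    (cons hS U).cls.{w} = hS.extClass.comp U.cls.{w} (add_comm 1 n) := by
  have h : hS.extClass.comp (Ext.mk₀ (toLastStepCons hS U).τ₁) (add_zero 1) =
      (cons hS U).lastStepClass.{w} :=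
    (hS.extClass_naturality (cons hS U).lastStep_shortExact (toLastStepCons hS U)).trans
      (Ext.mk₀_id_comp _)
  rw [cls, ← h, ← (Hom.toTailCons hS U).mk₀_comp_cls, Ext.comp_assoc_of_second_deg_zero]

lemma cls_refl (N : 𝓑) : (refl N).cls.{w} = Ext.mk₀ (𝟙 N) :=
  congrArg Ext.mk₀ (by simp [refl])

lemma extClass_pullbackShortComplex {S : ShortComplex 𝓑} (hS : S.ShortExact) {P : 𝓑}
    (α : P ⟶ S.X₃) : (pullbackShortComplex_shortExact hS α).extClass =
      (Ext.mk₀ α).comp hS.extClass (zero_add 1) :=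
  (Ext.comp_mk₀_id _).symm.trans ((pullbackShortComplex_shortExact hS α).extClass_naturality hS
    (pullbackShortComplexFst α))

lemma cls_comp_of_hom_lastStep {S : ShortComplex 𝓑} {hS : S.ShortExact}
    {E : YonedaExtension (n + 1) P N} {U : YonedaExtension n S.X₁ N} {φ : E.lastStep ⟶ S}
    (f : Hom φ.τ₁ E.tail U) :
    ((Ext.mk₀ φ.τ₃).comp hS.extClass (zero_add 1)).comp U.cls.{w} (add_comm 1 n) = E.cls := by
  refine Eq.trans ?_ (Hom.toCons (hS := hS) φ f).mk₀_comp_cls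
  rw [cls_cons, Ext.comp_assoc _ _ _ (zero_add 1) (add_comm 1 n) (by omega)]

/-- The `n`-extension of an object of `C` by `N` obtained by splicing `n` steps of an acyclic
coresolution of `N`, characterised by what the comparison of Yoneda classes needs. -/
structure IsUniversal (C : ObjectProperty 𝓑) (U : YonedaExtension n R N) : Prop where
  prop_end : C R
  prop_obj (i : ℕ) : C (U.obj i)
  exists_hom (P : 𝓑) (hP : C P) (E : YonedaExtension n P N) (hE : ∀ i, C (E.obj i)) :
    ∃ α, Nonempty (Hom α E U)
  comp_cls_surjective (M : 𝓑) (hM : C M) (j m : ℕ) (hm : j + n = m) (x : Ext.{w} M N m) :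
    ∃ y : Ext.{w} M R j, y.comp U.cls.{w} hm = x
  comp_cls_injective (M : 𝓑) (hM : C M) (j m : ℕ) (hm : j + 1 + n = m)
    (y : Ext.{w} M R (j + 1)) (hy : y.comp U.cls.{w} hm = 0) : y = 0

lemma IsUniversal.refl (hN : C N) : IsUniversal.{w} C (.refl N) where
  prop_end := hN
  prop_obj _ := hN
  exists_hom _ _ E _ := ⟨_, ⟨.toRefl E⟩⟩
  comp_cls_surjective _ _ _ _ hm x := by
    subst hm
    exact ⟨x, by rw [cls_refl]; exact x.comp_mk₀_id⟩
  comp_cls_injective _ _ _ _ hm y hy := by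
    subst hm
    rw [cls_refl] at hy
    exact y.comp_mk₀_id.symm.trans hy

lemma exists_hom_of_extClass_comp_eq_zero {T S : ShortComplex 𝓑} (hT : T.ShortExact)
    (β : T.X₁ ⟶ S.X₁)
    (h : hT.extClass.comp (Ext.mk₀ (β ≫ S.f)) (add_zero 1) = (0 : Ext.{w} _ _ 1)) :
    ∃ φ : T ⟶ S, φ.τ₁ = β := by
  obtain ⟨x, hx⟩ := Ext.contravariant_sequence_exact₁ hT _ _ (add_zero 1) h
  obtain ⟨γ, rfl⟩ := (Ext.mk₀_bijective _ _).2 x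
  rw [Ext.mk₀_comp_mk₀] at hx
  have hγ : T.f ≫ γ = β ≫ S.f := (Ext.mk₀_bijective _ _).1 hx
  have := hT.epi_g
  exact ⟨{ τ₁ := β, τ₂ := γ, comm₁₂ := hγ.symm
           τ₃ := hT.exact.desc (γ ≫ S.g) (by rw [reassoc_of% hγ, S.zero, comp_zero])
           comm₂₃ := (hT.exact.g_desc _ _).symm }, rfl⟩

lemma IsUniversal.exists_hom_lastStep [C.IsClosedUnderKernels] {S : ShortComplex 𝓑}
    {U : YonedaExtension n S.X₁ N}
    (hU : IsUniversal.{w} C U) (hJ : ∀ (X : 𝓑), C X → ∀ e : Ext.{w} X S.X₂ 1, e = 0)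
    {E : YonedaExtension (n + 1) P N} (hP : C P) (hE : ∀ i, C (E.obj i)) :
    ∃ φ : E.lastStep ⟶ S, Nonempty (Hom φ.τ₁ E.tail U) := by
  obtain ⟨β, hβ⟩ := hU.exists_hom _ (prop_lastStep_X₁ hP hE) E.tail (prop_obj_tail hP hE)
  obtain ⟨φ, rfl⟩ := exists_hom_of_extClass_comp_eq_zero E.lastStep_shortExact β (hJ P hP _)
  exact ⟨φ, hβ⟩

lemma IsUniversal.cons [C.IsClosedUnderKernels] {S : ShortComplex 𝓑} (hS : S.ShortExact)
    {U : YonedaExtension n S.X₁ N} (hU : IsUniversal.{w} C U) (h₂ : C S.X₂) (h₃ : C S.X₃)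
    (hJ : ∀ (X : 𝓑), C X → ∀ (m : ℕ) (e : Ext.{w} X S.X₂ (m + 1)), e = 0) :
    IsUniversal.{w} C (cons hS U) where
  prop_end := h₃
  prop_obj := prop_obj_cons h₂ h₃ hU.prop_obj
  exists_hom P hP E hE := by
    obtain ⟨φ, ⟨f⟩⟩ := hU.exists_hom_lastStep (fun X hX ↦ hJ X hX 0) hP hE
    exact ⟨φ.τ₃, ⟨.toCons φ f⟩⟩
  comp_cls_surjective M hM j m hm x := by
    obtain ⟨y, rfl⟩ := hU.comp_cls_surjective M hM (j + 1) m (by omega) x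
    obtain ⟨z, rfl⟩ := Ext.covariant_sequence_exact₁ M hS y (hJ M hM _ _) rfl
    exact ⟨z, by rw [cls_cons, Ext.comp_assoc _ _ _ rfl (add_comm 1 n) (by omega)]⟩
  comp_cls_injective M hM j m hm y hy := by
    rw [cls_cons, ← Ext.comp_assoc _ _ _ rfl (add_comm 1 n) (by omega)] at hy
    obtain ⟨z, rfl⟩ := Ext.covariant_sequence_exact₃ M hS y rfl
      (hU.comp_cls_injective M hM (j + 1) m (by omega) _ hy)
    rw [hJ M hM j z, Ext.zero_comp]

lemma exists_isUniversal [C.IsClosedUnderKernels] (h : HasAcyclicEmbeddings.{w} C) (hN : C N)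
    (n : ℕ) : ∃ (R : 𝓑) (U : YonedaExtension n R N), U.IsUniversal.{w} C := by
  induction n with
  | zero => exact ⟨N, .refl N, .refl hN⟩
  | succ n ih =>
    obtain ⟨R, U, hU⟩ := ih
    obtain ⟨S, hS, rfl, h₂, h₃, hJ⟩ := h R hU.prop_end
    exact ⟨S.X₃, .cons hS U, .cons hS hU h₂ h₃ hJ⟩

variable [C.IsClosedUnderKernels] [C.IsClosedUnderFiniteProducts]

lemma exists_cls_eq (h : HasAcyclicEmbeddings.{w} C) (hM : C M) (hN : C N)
    (x : Ext.{w} M N (n + 1)) :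
    ∃ E : YonedaExtension (n + 1) M N, (∀ i, C (E.obj i)) ∧ E.cls.{w} = x := by
  obtain ⟨R, U, hU⟩ := exists_isUniversal h hN n
  obtain ⟨S, hS, rfl, h₂, h₃, hJ⟩ := h R hU.prop_end
  obtain ⟨y, rfl⟩ := hU.comp_cls_surjective M hM 1 (n + 1) (add_comm 1 n) x
  obtain ⟨z, rfl⟩ := Ext.covariant_sequence_exact₁ M hS y (hJ M hM 0 _) (zero_add 1)
  obtain ⟨α, rfl⟩ := (Ext.mk₀_bijective _ _).2 z
  refine ⟨cons (pullbackShortComplex_shortExact hS α) U,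
    prop_obj_cons (prop_pullback _ _ h₂ hM h₃) hM hU.prop_obj, ?_⟩
  rw [cls_cons, extClass_pullbackShortComplex]

lemma exists_hom_of_cls_eq (h : HasAcyclicEmbeddings.{w} C) (hM : C M) (hN : C N)
    {E E' : YonedaExtension (n + 1) M N} (hE : ∀ i, C (E.obj i)) (hE' : ∀ i, C (E'.obj i))
    (hcls : E.cls.{w} = E'.cls.{w}) :
    ∃ V : YonedaExtension (n + 1) M N, (∀ i, C (V.obj i)) ∧
      Nonempty (Hom (𝟙 M) E V) ∧ Nonempty (Hom (𝟙 M) E' V) := by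
  obtain ⟨R, U, hU⟩ := exists_isUniversal h hN n
  obtain ⟨S, hS, rfl, h₂, h₃, hJ⟩ := h R hU.prop_end
  obtain ⟨φ, ⟨f⟩⟩ := hU.exists_hom_lastStep (hJ · · 0) hM hE
  obtain ⟨φ', ⟨f'⟩⟩ := hU.exists_hom_lastStep (hJ · · 0) hM hE'
  let α : M ⟶ S.X₃ := φ.τ₃
  let α' : M ⟶ S.X₃ := φ'.τ₃
  have hα : ((Ext.mk₀ (α - α')).comp hS.extClass (zero_add 1)).comp U.cls.{w}
      (add_comm 1 n) = 0 := by
    rw [sub_eq_add_neg, Ext.mk₀_add, Ext.mk₀_neg, Ext.add_comp, Ext.add_comp, Ext.neg_comp,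
      Ext.neg_comp, ← sub_eq_add_neg, sub_eq_zero]
    exact (cls_comp_of_hom_lastStep f).trans (hcls.trans (cls_comp_of_hom_lastStep f').symm)
  obtain ⟨x, hx⟩ := Ext.covariant_sequence_exact₃ M hS _ (zero_add 1)
    (hU.comp_cls_injective M hM 0 _ (by omega) _ hα)
  obtain ⟨γ, rfl⟩ := (Ext.mk₀_bijective _ _).2 x
  rw [Ext.mk₀_comp_mk₀] at hx
  have hγ : (twist φ' γ).τ₃ = α :=
    (congrArg (α' + ·) ((Ext.mk₀_bijective _ _).1 hx)).trans (add_sub_cancel α' α)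
  exact ⟨cons (pullbackShortComplex_shortExact hS α) U,
    prop_obj_cons (prop_pullback _ _ h₂ hM h₃) hM hU.prop_obj,
    nonempty_hom_cons_pullback (hS := hS) f rfl,
    nonempty_hom_cons_pullback (hS := hS) (φ := twist φ' γ) f' hγ⟩

end YonedaExtension

end YonedaExtensions

section ExtAdjunction

open Limits Abelian

universe w w' v v' u u'

variable {𝓐 : Type u} [Category.{v} 𝓐] [Abelian 𝓐] [HasExt.{w} 𝓐]
  {𝓑 : Type u'} [Category.{v'} 𝓑] [Abelian 𝓑] [HasExt.{w'} 𝓑]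

lemma forall_ext_one_eq_zero_iff {S : ShortComplex 𝓐} (hS : S.ShortExact) [Injective S.X₂]
    (Y : 𝓐) : (∀ e : Ext.{w} Y S.X₁ 1, e = 0) ↔
      Function.Surjective fun f : Y ⟶ S.X₂ ↦ f ≫ S.g := by
  refine ⟨fun h f ↦ ?_, fun h e ↦ ?_⟩
  · obtain ⟨x, hx⟩ := Ext.covariant_sequence_exact₃ Y hS (Ext.mk₀ f) (zero_add 1) (h _)
    obtain ⟨g, rfl⟩ := (Ext.mk₀_bijective _ _).2 x
    exact ⟨g, (Ext.mk₀_bijective _ _).1 ((Ext.mk₀_comp_mk₀ _ _).symm.trans hx)⟩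
  · obtain ⟨x, rfl⟩ := Ext.covariant_sequence_exact₁ Y hS e (Ext.eq_zero_of_injective _)
      (zero_add 1)
    obtain ⟨f, rfl⟩ := (Ext.mk₀_bijective _ _).2 x
    obtain ⟨g, rfl⟩ := h f
    rw [← Ext.mk₀_comp_mk₀, Ext.comp_assoc_of_second_deg_zero, hS.comp_extClass, Ext.comp_zero]

lemma forall_ext_succ_eq_zero_iff {S : ShortComplex 𝓐} (hS : S.ShortExact) [Injective S.X₂]
    (Y : 𝓐) (n : ℕ) : (∀ e : Ext.{w} Y S.X₁ (n + 2), e = 0) ↔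
      ∀ e : Ext.{w} Y S.X₃ (n + 1), e = 0 := by
  refine ⟨fun h e ↦ ?_, fun h e ↦ ?_⟩
  · obtain ⟨x, rfl⟩ := Ext.covariant_sequence_exact₃ Y hS e rfl (h _)
    rw [Ext.eq_zero_of_injective x, Ext.zero_comp]
  · obtain ⟨x, rfl⟩ := Ext.covariant_sequence_exact₁ Y hS e (Ext.eq_zero_of_injective _) rfl
    rw [h x, Ext.zero_comp]

lemma forall_ext_eq_zero_iff_of_adjunction [EnoughInjectives 𝓑] {F : 𝓐 ⥤ 𝓑} {G : 𝓑 ⥤ 𝓐}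
    (adj : F ⊣ G) [F.PreservesMonomorphisms] [G.PreservesZeroMorphisms]
    (hG : ∀ S : ShortComplex 𝓑, S.ShortExact → (S.map G).ShortExact) (Y : 𝓐) (N : 𝓑) (n : ℕ) :
    (∀ e : Ext.{w'} (F.obj Y) N (n + 1), e = 0) ↔
      ∀ e : Ext.{w} Y (G.obj N) (n + 1), e = 0 := by
  obtain ⟨p⟩ := EnoughInjectives.presentation N
  let S : ShortComplex 𝓑 := .mk _ _ (cokernel.condition p.f)
  have hS : S.ShortExact := { exact := ShortComplex.exact_cokernel p.f }
  have hGS : (S.map G).ShortExact := hG S hS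
  have : Injective (S.map G).X₂ := Injective.injective_of_adjoint adj p.J
  cases n with
  | zero =>
    refine (forall_ext_one_eq_zero_iff hS _).trans
      (Iff.trans ⟨fun h f ↦ ?_, fun h f ↦ ?_⟩ (forall_ext_one_eq_zero_iff hGS Y).symm)
    · obtain ⟨g, hg⟩ := h ((adj.homEquiv Y _).symm f)
      exact ⟨adj.homEquiv Y _ g, (adj.homEquiv_naturality_right g S.g).symm.trans
        ((adj.homEquiv Y _).symm_apply_eq.1 hg.symm).symm⟩
    · obtain ⟨g, hg⟩ := h (adj.homEquiv Y _ f)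
      exact ⟨(adj.homEquiv Y _).symm g, (adj.homEquiv_naturality_right_symm g S.g).symm.trans
        ((adj.homEquiv Y _).symm_apply_eq.2 hg)⟩
  | succ n =>
    exact (forall_ext_succ_eq_zero_iff hS _ n).trans
      ((forall_ext_eq_zero_iff_of_adjunction adj hG Y S.X₃ n).trans
        (forall_ext_succ_eq_zero_iff hGS Y n).symm)
end ExtAdjunction

section ClosureProperties

open Limits

universe v u v' u'

attribute [local instance] Abelian.hasFiniteBiproducts

variable {𝓐 : Type u} [Category.{v} 𝓐] [Abelian 𝓐] {𝓑 : Type u'} [Category.{v'} 𝓑] [Abelian 𝓑]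

lemma isClosedUnderFiniteProducts_of_biproduct {C : ObjectProperty 𝓐}
    [C.IsClosedUnderIsomorphisms]
    (h : ∀ (J : Type) [Finite J] (f : J → 𝓐), (∀ j, C (f j)) → C (⨁ f)) :
    C.IsClosedUnderFiniteProducts where
  isClosedUnderLimitsOfShape J _ :=
    { limitsOfShape_le := by
        rintro X ⟨D⟩
        exact C.prop_of_iso ((biproduct.isLimit _).conePointsIsoOfNatIso D.isLimit
          Discrete.natIsoFunctor.symm) (h J (fun j ↦ D.diag.obj ⟨j⟩) fun j ↦ D.prop_diag_obj _) }

lemma prop_biproduct {C : ObjectProperty 𝓐} [C.IsClosedUnderFiniteProducts] {J : Type} [Finite J]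
    {f : J → 𝓐} (h : ∀ j, C (f j)) : C (⨁ f) :=
  C.prop_of_isLimit_fan (biproduct.isLimit f) h

lemma shortExact_inv_comp {S : ShortComplex 𝓐} (hS : S.ShortExact) {K : 𝓐} (e : S.X₁ ≅ K) :
    (ShortComplex.mk (e.inv ≫ S.f) S.g
      (by rw [Category.assoc, S.zero, comp_zero])).ShortExact :=
  ShortComplex.shortExact_of_iso (ShortComplex.isoMk e (.refl _) (.refl _)) hS

variable (C : ObjectProperty 𝓐) (F : 𝓐 ⥤ 𝓑)

instance [C.IsClosedUnderFiniteProducts] [F.Additive] :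
    (C.map F).IsClosedUnderFiniteProducts :=
  isClosedUnderFiniteProducts_of_biproduct fun J _ f hf ↦ by
    choose Y hY e using hf
    exact (C.map F).prop_of_iso (F.mapBiproduct Y ≪≫ biproduct.mapIso fun j ↦ (e j).some)
      (C.prop_map_obj F (prop_biproduct hY))

lemma isClosedUnderKernels_map [C.IsClosedUnderKernels] [PreservesFiniteLimits F]
    (hF : ∀ X Y, C X → C Y → Function.Surjective (F.map : (X ⟶ Y) → _)) :
    (C.map F).IsClosedUnderKernels where
  kernels_le := by
    rintro _ ⟨f, k, hk, ⟨X, hX, ⟨e⟩⟩, ⟨Y, hY, ⟨e'⟩⟩⟩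
    obtain ⟨g, hg⟩ := hF X Y hX hY (e.hom ≫ f ≫ e'.inv)
    have : F.map g ≫ e'.hom = e.hom ≫ f := by rw [hg, Category.assoc, Category.assoc, e'.inv_hom_id,
      Category.comp_id]
    exact (C.map F).prop_of_iso (PreservesKernel.iso F g ≪≫ kernel.mapIso _ _ e e' this ≪≫
      (kernelIsKernel f).conePointUniqueUpToIso hk) (C.prop_map_obj F (C.prop_kernel g hX hY))

end ClosureProperties

section SemilinearBaseChange

variable {R S T : Type} [CommRing R] [CommRing S] [CommRing T]
  {ρ : R →+* S} {σ : S →+* T} {τ : R →+* T} [RingHomCompTriple ρ σ τ]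
  {M N L : Type} [AddCommGroup M] [AddCommGroup N] [AddCommGroup L]
  [Module R M] [Module S N] [Module T L]

variable (ρ N) in
lemma isScalarTower_compHom :
    letI := ρ.toAlgebra
    letI := Module.compHom N ρ
    IsScalarTower R S N :=
  letI := ρ.toAlgebra
  letI := Module.compHom N ρ
  ⟨fun r s n ↦ mul_smul (ρ r) s n⟩

/-- A semilinear map `g : M → N` over a homomorphism `R → S` of commutative rings exhibits `N` as
the base change `S ⊗[R] M`. This is Mathlib's `IsBaseChange` for the algebra and module structures
induced by `R → S`. -/
def IsBaseChangeAlong (g : M →ₛₗ[ρ] N) : Prop :=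
  letI := ρ.toAlgebra
  letI := Module.compHom N ρ
  haveI := isScalarTower_compHom ρ N
  IsBaseChange S (⟨⟨g, map_add g⟩, g.map_smulₛₗ⟩ : M →ₗ[R] N)

namespace IsBaseChangeAlong

lemma existsUnique_lift {g : M →ₛₗ[ρ] N} (hg : IsBaseChangeAlong g) (f : M →ₛₗ[τ] L) :
    ∃! f' : N →ₛₗ[σ] L, ∀ x, f' (g x) = f x := by
  let := ρ.toAlgebra
  let := Module.compHom N ρ
  have := isScalarTower_compHom ρ N
  let := Module.compHom L σ
  let := Module.compHom L τ
  have : IsScalarTower R S L := ⟨fun r s n ↦ by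
    change σ (ρ r * s) • n = τ r • σ s • n
    rw [map_mul, RingHomCompTriple.comp_apply, mul_smul]⟩
  let fR : M →ₗ[R] L := ⟨⟨f, map_add f⟩, f.map_smulₛₗ⟩
  let l : N →ₗ[S] L := IsBaseChange.lift hg fR
  refine ⟨⟨⟨l, map_add l⟩, l.map_smul⟩, fun x ↦ IsBaseChange.lift_eq hg fR x, fun f' hf' ↦ ?_⟩
  have : (⟨⟨f', map_add f'⟩, f'.map_smulₛₗ⟩ : N →ₗ[S] L) = l :=
    IsBaseChange.algHom_ext hg _ _ fun x ↦ (hf' x).trans (IsBaseChange.lift_eq hg fR x).symm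
  exact LinearMap.ext fun x ↦ congr($this x)

lemma hom_ext {g : M →ₛₗ[ρ] N} (hg : IsBaseChangeAlong g) {f f' : N →ₛₗ[σ] L}
    (h : ∀ x, f (g x) = f' (g x)) : f = f' :=
  have : RingHomCompTriple ρ σ (σ.comp ρ) := ⟨rfl⟩
  (hg.existsUnique_lift (f'.comp g : M →ₛₗ[σ.comp ρ] L)).unique h fun _ ↦ rfl

lemma of_existsUnique_lift {g : M →ₛₗ[ρ] N}
    (h : ∀ (Q : Type) [AddCommGroup Q] [Module S Q] (f : M →ₛₗ[ρ] Q),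
      ∃! f' : N →ₗ[S] Q, ∀ x, f' (g x) = f x) : IsBaseChangeAlong g := by
  let := ρ.toAlgebra
  let := Module.compHom N ρ
  have := isScalarTower_compHom ρ N
  refine IsBaseChange.of_lift_unique _ fun Q _ _ _ _ f ↦ ?_
  let : AddCommGroup Q := Module.addCommMonoidToAddCommGroup S
  obtain ⟨f', hf', huniq⟩ := h Q ⟨⟨f, map_add f⟩, fun r x ↦
    (f.map_smul r x).trans (algebraMap_smul S r (f x)).symm⟩
  exact ⟨f', LinearMap.ext hf', fun f'' hf'' ↦ huniq f'' fun x ↦ congr($hf'' x)⟩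

lemma comp_iff {g : M →ₛₗ[ρ] N} (hg : IsBaseChangeAlong g) {h : N →ₛₗ[σ] L} :
    IsBaseChangeAlong (h.comp g : M →ₛₗ[τ] L) ↔ IsBaseChangeAlong h := by
  refine ⟨fun hc ↦ of_existsUnique_lift fun Q _ _ f ↦ ?_,
    fun hh ↦ of_existsUnique_lift fun Q _ _ f ↦ ?_⟩
  · obtain ⟨f', hf', huniq⟩ :=
      hc.existsUnique_lift (σ := RingHom.id T) (f.comp g : M →ₛₗ[τ] Q)
    refine ⟨f', fun x ↦ ?_, fun f'' hf'' ↦ huniq _ fun x ↦ hf'' _⟩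
    exact congr($(hg.hom_ext (f := (f'.comp h : N →ₛₗ[σ] Q)) (f' := f) hf') x)
  · obtain ⟨f', hf', huniq⟩ := hg.existsUnique_lift (σ := σ) f
    obtain ⟨f'', hf'', huniq'⟩ := hh.existsUnique_lift (σ := RingHom.id T) f'
    refine ⟨f'', fun x ↦ (hf'' _).trans (hf' x), fun e he ↦ huniq' e fun y ↦ ?_⟩
    exact congr($(huniq (e.comp h : N →ₛₗ[σ] Q) he) y)

lemma id_iff_bijective {N' : Type} [AddCommGroup N'] [Module S N'] {e : N →ₗ[S] N'} :
    IsBaseChangeAlong e ↔ Function.Bijective e := by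
  refine ⟨fun he ↦ ?_, fun he ↦ of_existsUnique_lift fun Q _ _ f ↦ ?_⟩
  · obtain ⟨e', he', -⟩ := he.existsUnique_lift (σ := RingHom.id S) (LinearMap.id (M := N))
    have right_inv : e ∘ₗ e' = LinearMap.id := he.hom_ext fun x ↦ congrArg e (he' x)
    exact Function.bijective_iff_has_inverse.2 ⟨e', he', fun x ↦ congr($right_inv x)⟩
  · let e' := LinearEquiv.ofBijective e he
    refine ⟨f ∘ₗ e'.symm, fun x ↦ congrArg f (e'.symm_apply_apply x), fun f' hf' ↦ ?_⟩
    exact LinearMap.ext fun y ↦ (congrArg f' (e'.apply_symm_apply y)).symm.trans (hf' _)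

lemma bijective_of_comp_eq {g : M →ₛₗ[ρ] N} (hg : IsBaseChangeAlong g) {N' : Type}
    [AddCommGroup N'] [Module S N'] {g' : M →ₛₗ[ρ] N'} (hg' : IsBaseChangeAlong g')
    (e : N →ₗ[S] N') (he : ∀ x, e (g x) = g' x) : Function.Bijective e :=
  id_iff_bijective.1 (hg.comp_iff.1 ((LinearMap.ext he : (e.comp g : M →ₛₗ[ρ] N') = g') ▸ hg'))

lemma of_bijective {M' N' : Type} [AddCommGroup M'] [AddCommGroup N'] [Module R M'] [Module S N']
    {g : M →ₛₗ[ρ] N} {g' : M' →ₛₗ[ρ] N'} (hg' : IsBaseChangeAlong g') {e : M →ₗ[R] M'}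
    {e' : N →ₗ[S] N'} (comm : ∀ x, g' (e x) = e' (g x)) (he : Function.Bijective e)
    (he' : Function.Bijective e') : IsBaseChangeAlong g := by
  let e'' := LinearEquiv.ofBijective e' he'
  have comp_eq : (e''.symm.toLinearMap.comp (g'.comp e : M →ₛₗ[ρ] N') : M →ₛₗ[ρ] N) = g :=
    LinearMap.ext fun x ↦ (congrArg e''.symm (comm x)).trans (e''.symm_apply_apply (g x))
  exact comp_eq ▸ ((id_iff_bijective.2 he).comp_iff.2 hg').comp_iff.2
    (id_iff_bijective.2 e''.symm.bijective)

lemma pi {ι : Type} [Finite ι] {M N : ι → Type} [∀ i, AddCommGroup (M i)]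
    [∀ i, AddCommGroup (N i)] [∀ i, Module R (M i)] [∀ i, Module S (N i)]
    {g : ∀ i, M i →ₛₗ[ρ] N i} (hg : ∀ i, IsBaseChangeAlong (g i))
    {h : (∀ i, M i) →ₛₗ[ρ] ∀ i, N i} (hh : ∀ x i, h x i = g i (x i)) : IsBaseChangeAlong h := by
  let := ρ.toAlgebra
  let := fun i ↦ Module.compHom (N i) ρ
  have (i : ι) := isScalarTower_compHom ρ (N i)
  let gR (i : ι) : M i →ₗ[R] N i := ⟨⟨g i, map_add _⟩, (g i).map_smulₛₗ⟩
  have eq_pi : (⟨⟨h, map_add h⟩, h.map_smulₛₗ⟩ : (∀ i, M i) →ₗ[R] ∀ i, N i) =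
      .pi fun i ↦ gR i ∘ₗ .proj i := LinearMap.ext fun x ↦ funext (hh x)
  exact (congrArg (IsBaseChange S) eq_pi).mpr (IsBaseChange.pi gR hg)

section Exact

variable {M₁ M₂ M₃ N₁ N₂ N₃ : Type} [AddCommGroup M₁] [AddCommGroup M₂] [AddCommGroup M₃]
  [AddCommGroup N₁] [AddCommGroup N₂] [AddCommGroup N₃] [Module R M₁] [Module R M₂] [Module R M₃]
  [Module S N₁] [Module S N₂] [Module S N₃]
  {g₁ : M₁ →ₛₗ[ρ] N₁} {g₂ : M₂ →ₛₗ[ρ] N₂} {g₃ : M₃ →ₛₗ[ρ] N₃}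
  {a : M₁ →ₗ[R] M₂} {b : M₂ →ₗ[R] M₃} {a' : N₁ →ₗ[S] N₂} {b' : N₂ →ₗ[S] N₃}

lemma of_left_exact (hρ : ρ.Flat) (hg₂ : IsBaseChangeAlong g₂) (hg₃ : IsBaseChangeAlong g₃)
    (comm₁ : ∀ x, g₂ (a x) = a' (g₁ x)) (comm₂ : ∀ x, g₃ (b x) = b' (g₂ x))
    (hab : Function.Exact a b) (ha : Function.Injective a)
    (hab' : Function.Exact a' b') (ha' : Function.Injective a') : IsBaseChangeAlong g₁ := by
  let := ρ.toAlgebra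
  let := Module.compHom N₁ ρ
  let := Module.compHom N₂ ρ
  let := Module.compHom N₃ ρ
  have := isScalarTower_compHom ρ N₁
  have := isScalarTower_compHom ρ N₂
  have := isScalarTower_compHom ρ N₃
  have : Module.Flat R S := hρ
  exact IsBaseChange.of_left_exact S (f := a) (g := b) (f' := a') (g' := b') _ _ _
    (LinearMap.ext comm₁) (LinearMap.ext comm₂) hg₂ hg₃ hab ha hab' ha'

lemma of_right_exact (hg₁ : IsBaseChangeAlong g₁) (hg₂ : IsBaseChangeAlong g₂)
    (comm₁ : ∀ x, g₂ (a x) = a' (g₁ x)) (comm₂ : ∀ x, g₃ (b x) = b' (g₂ x))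
    (hab : Function.Exact a b) (hb : Function.Surjective b)
    (hab' : Function.Exact a' b') (hb' : Function.Surjective b') : IsBaseChangeAlong g₃ := by
  let := ρ.toAlgebra
  let := Module.compHom N₁ ρ
  let := Module.compHom N₂ ρ
  let := Module.compHom N₃ ρ
  have := isScalarTower_compHom ρ N₁
  have := isScalarTower_compHom ρ N₂
  have := isScalarTower_compHom ρ N₃
  exact IsBaseChange.of_right_exact S (f := a) (g := b) (f' := a') (g' := b') _ _ _
    (LinearMap.ext comm₁) (LinearMap.ext comm₂) hg₁ hg₂ hab hb hab' hb'

lemma linearMap_comp_equiv (hg₁ : IsBaseChangeAlong g₁) (hg₂ : IsBaseChangeAlong g₂)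
    (comm : ∀ x, g₂ (a x) = a' (g₁ x)) :
    letI := ρ.toAlgebra
    letI := Module.compHom N₁ ρ
    letI := Module.compHom N₂ ρ
    haveI := isScalarTower_compHom ρ N₁
    haveI := isScalarTower_compHom ρ N₂
    a' ∘ₗ (IsBaseChange.equiv hg₁).toLinearMap =
      (IsBaseChange.equiv hg₂).toLinearMap ∘ₗ a.baseChange S := by
  let := ρ.toAlgebra
  let := Module.compHom N₁ ρ
  let := Module.compHom N₂ ρ
  have := isScalarTower_compHom ρ N₁
  have := isScalarTower_compHom ρ N₂
  exact TensorProduct.AlgebraTensorModule.ext fun s x ↦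
    (congrArg a' (IsBaseChange.equiv_tmul hg₁ s x)).trans <| (a'.map_smul s _).trans <|
      (congrArg (s • ·) (comm x).symm).trans (IsBaseChange.equiv_tmul hg₂ s (a x)).symm

lemma injective_of_flat (hρ : ρ.Flat) (hg₁ : IsBaseChangeAlong g₁) (hg₂ : IsBaseChangeAlong g₂)
    (comm : ∀ x, g₂ (a x) = a' (g₁ x)) (ha : Function.Injective a) : Function.Injective a' := by
  let := ρ.toAlgebra
  let := Module.compHom N₁ ρ
  let := Module.compHom N₂ ρ
  have := isScalarTower_compHom ρ N₁
  have := isScalarTower_compHom ρ N₂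
  have : Module.Flat R S := hρ
  have : Function.Injective (a' ∘ IsBaseChange.equiv hg₁) := by
    refine (congrArg (Function.Injective ∘ DFunLike.coe) (linearMap_comp_equiv hg₁ hg₂ comm)).mpr ?_
    exact (IsBaseChange.equiv hg₂).injective.comp
      (Module.Flat.lTensor_preserves_injective_linearMap a ha)
  exact (Function.Injective.of_comp_iff' a' (IsBaseChange.equiv hg₁).bijective).1 this

lemma surjective_of_surjective (hg₁ : IsBaseChangeAlong g₁) (hg₂ : IsBaseChangeAlong g₂)
    (comm : ∀ x, g₂ (a x) = a' (g₁ x)) (ha : Function.Surjective a) : Function.Surjective a' := by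
  let := ρ.toAlgebra
  let := Module.compHom N₁ ρ
  let := Module.compHom N₂ ρ
  have := isScalarTower_compHom ρ N₁
  have := isScalarTower_compHom ρ N₂
  refine Function.Surjective.of_comp (g := IsBaseChange.equiv hg₁)
    ((congrArg (Function.Surjective ∘ DFunLike.coe) (linearMap_comp_equiv hg₁ hg₂ comm)).mpr ?_)
  exact (IsBaseChange.equiv hg₂).surjective.comp (LinearMap.lTensor_surjective S ha)

lemma exact_of_flat (hρ : ρ.Flat) (hg₁ : IsBaseChangeAlong g₁) (hg₂ : IsBaseChangeAlong g₂)
    (hg₃ : IsBaseChangeAlong g₃) (comm₁ : ∀ x, g₂ (a x) = a' (g₁ x))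
    (comm₂ : ∀ x, g₃ (b x) = b' (g₂ x)) (hab : Function.Exact a b) : Function.Exact a' b' := by
  let := ρ.toAlgebra
  let := Module.compHom N₁ ρ
  let := Module.compHom N₂ ρ
  let := Module.compHom N₃ ρ
  have := isScalarTower_compHom ρ N₁
  have := isScalarTower_compHom ρ N₂
  have := isScalarTower_compHom ρ N₃
  have : Module.Flat R S := hρ
  have exact_baseChange : Function.Exact (a.baseChange S) (b.baseChange S) :=
    Module.Flat.lTensor_exact S hab
  exact exact_baseChange.of_ladder_linearEquiv_of_exact (linearMap_comp_equiv hg₁ hg₂ comm₁)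
    (linearMap_comp_equiv hg₂ hg₃ comm₂)

end Exact

lemma iff_of_isLocalizationAway (f : R) (hf : letI := ρ.toAlgebra; IsLocalization.Away f S)
    {g : M →ₛₗ[ρ] N} : IsBaseChangeAlong g ↔
      (∀ y, ∃ (n : ℕ) (x : M), ρ f ^ n • y = g x) ∧ ∀ x, g x = 0 → ∃ n : ℕ, f ^ n • x = 0 := by
  let := ρ.toAlgebra
  let := Module.compHom N ρ
  have := isScalarTower_compHom ρ N
  let gR : M →ₗ[R] N := ⟨⟨g, map_add g⟩, g.map_smulₛₗ⟩
  refine (isLocalizedModule_iff_isBaseChange (.powers f) S gR).symm.trans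
    ⟨fun h ↦ ⟨fun y ↦ ?_, fun x hx ↦ ?_⟩,
      fun h ↦ ⟨fun ⟨_, n, hn⟩ ↦ ?_, fun y ↦ ?_, fun {x y} hxy ↦ ?_⟩⟩
  · obtain ⟨⟨x, _, n, rfl⟩, hx⟩ := h.surj y
    exact ⟨n, x, by rw [← map_pow]; exact hx⟩
  · obtain ⟨⟨_, n, rfl⟩, hn⟩ := (IsLocalizedModule.eq_zero_iff (.powers f) gR).1 hx
    exact ⟨n, hn⟩
  · obtain rfl := hn
    have isUnit : IsUnit (ρ (f ^ n)) :=
      IsLocalization.map_units S (⟨f ^ n, n, rfl⟩ : Submonoid.powers f)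
    have bijective := (Module.End.isUnit_iff _).1 (isUnit.map (algebraMap S (Module.End S N)))
    exact (Module.End.isUnit_iff _).2 bijective
  · obtain ⟨n, x, hx⟩ := h.1 y
    exact ⟨(x, ⟨f ^ n, n, rfl⟩), by rw [← map_pow] at hx; exact hx⟩
  · obtain ⟨n, hn⟩ := h.2 (x - y) ((map_sub g x y).trans (sub_eq_zero.2 hxy))
    exact ⟨⟨f ^ n, n, rfl⟩, by rwa [smul_sub, sub_eq_zero] at hn⟩

end IsBaseChangeAlong

end SemilinearBaseChange

section ExtensionOfScalars

open scoped TensorProduct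

variable {B B' : Type} [Ring B] [Ring B'] (φ : B →+* B') (J : Type) [AddCommGroup J] [Module B J]

/-- The relations making `B' ⊗[ℤ] J` balanced over `B`. -/
def balancingRelations : Submodule B' (B' ⊗[ℤ] J) :=
  Submodule.span B' (Set.range fun x : B' × B × J ↦
    (x.1 * φ x.2.1) ⊗ₜ[ℤ] x.2.2 - x.1 ⊗ₜ[ℤ] (x.2.1 • x.2.2))

/-- The tensor product `B' ⊗[B] J` over a ring `B` that need not be commutative. -/
def ExtendedScalars : Type := (B' ⊗[ℤ] J) ⧸ balancingRelations φ J

namespace ExtendedScalars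

instance : AddCommGroup (ExtendedScalars φ J) :=
  inferInstanceAs (AddCommGroup ((B' ⊗[ℤ] J) ⧸ balancingRelations φ J))

instance : Module B' (ExtendedScalars φ J) :=
  inferInstanceAs (Module B' ((B' ⊗[ℤ] J) ⧸ balancingRelations φ J))

/-- The canonical map `j ↦ 1 ⊗ j`. -/
def of : J →ₛₗ[φ] ExtendedScalars φ J where
  toFun j := (balancingRelations φ J).mkQ (1 ⊗ₜ j)
  map_add' _ _ := congrArg (balancingRelations φ J).mkQ (TensorProduct.tmul_add _ _ _)
  map_smul' b j :=
    ((Submodule.Quotient.eq (balancingRelations φ J)).2 (Submodule.subset_span ⟨(1, b, j), by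
      simp only [one_mul, TensorProduct.smul_tmul', smul_eq_mul, mul_one]⟩)).symm

variable {φ J}

@[elab_as_elim]
lemma induction_on {p : ExtendedScalars φ J → Prop} (x : ExtendedScalars φ J)
    (smul_of : ∀ (b : B') j, p (b • of φ J j)) (add : ∀ x y, p x → p y → p (x + y)) : p x := by
  obtain ⟨x, rfl⟩ := (balancingRelations φ J).mkQ_surjective x
  induction x with
  | zero =>
    have : (balancingRelations φ J).mkQ 0 = (0 : B') • of φ J 0 :=
      (map_zero _).trans (zero_smul B' _).symm
    exact this ▸ smul_of 0 0
  | tmul b j =>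
    have : (balancingRelations φ J).mkQ (b ⊗ₜ j) = b • of φ J j :=
      congrArg ((balancingRelations φ J).mkQ <| · ⊗ₜ j) (mul_one b).symm
    exact this ▸ smul_of b j
  | add x y hx hy => exact add _ _ hx hy

variable {B'' N : Type} [Ring B''] {ψ : B' →+* B''} {χ : B →+* B''} [RingHomCompTriple φ ψ χ]
  [AddCommGroup N] [Module B'' N]

lemma hom_ext {f g : ExtendedScalars φ J →ₛₗ[ψ] N} (h : ∀ j, f (of φ J j) = g (of φ J j)) :
    f = g :=
  LinearMap.ext fun x ↦ induction_on x (fun b j ↦ by rw [map_smulₛₗ, map_smulₛₗ, h])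
    fun x y hx hy ↦ by rw [map_add, map_add, hx, hy]

variable (ψ) in
/-- The semilinear map `b ⊗ j ↦ ψ b • f j`. -/
def lift (f : J →ₛₗ[χ] N) : ExtendedScalars φ J →ₛₗ[ψ] N :=
  let g : B' ⊗[ℤ] J →+ N := TensorProduct.liftAddHom
    (.mk' (fun b ↦ (smulAddHom B'' N (ψ b)).comp f.toAddMonoidHom) fun b c ↦
      AddMonoidHom.ext fun j ↦ by simp)
    fun r b j ↦ by simp [-zsmul_eq_mul, smul_comm r]
  Submodule.liftQ _
    { toFun := g
      map_add' := map_add g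
      map_smul' b x := by
        induction x with
        | zero => simp
        | tmul c j => simp [g, TensorProduct.smul_tmul', mul_smul]
        | add x y hx hy => simp only [smul_add, map_add, hx, hy] }
    (Submodule.span_le.2 (by
      rintro _ ⟨⟨b', b, j⟩, rfl⟩
      simp [g, mul_smul, RingHomCompTriple.comp_apply]))

lemma lift_of (f : J →ₛₗ[χ] N) (j : J) : lift ψ f (of φ J j) = f j := by
  change ψ 1 • f j = f j
  rw [map_one, one_smul]

section BaseChange

variable {R S : Type} [CommRing R] [CommRing S] {ρ : R →+* S}
  [Module R B] [Module S B'] [IsScalarTower S B' B'] [Module R J] [IsScalarTower R B J]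

/-- Right multiplication of `B'` makes the `S`-linear maps out of `B'` a left `B'`-module. -/
abbrev moduleLinearMap (Q : Type) [AddCommGroup Q] [Module S Q] : Module B' (B' →ₗ[S] Q) where
  smul c l := l ∘ₗ LinearMap.mulRight S c
  one_smul l := LinearMap.ext fun b ↦ congrArg l (mul_one b)
  mul_smul c d l := LinearMap.ext fun b ↦ congrArg l (mul_assoc b c d).symm
  smul_zero _ := rfl
  smul_add _ _ _ := rfl
  add_smul c d l := LinearMap.ext fun b ↦ (congrArg l (mul_add b c d)).trans (map_add l _ _)
  zero_smul l := LinearMap.ext fun b ↦ (congrArg l (mul_zero b)).trans (map_zero l)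

lemma exists_linearMap_apply_eq {φ' : B →ₛₗ[ρ] B'} (h : IsBaseChangeAlong φ')
    (hφ' : ∀ b, φ' b = φ b) {Q : Type} [AddCommGroup Q] [Module S Q] (f : J →ₛₗ[ρ] Q) :
    letI := moduleLinearMap (B' := B') (S := S) Q
    ∃ l : J →ₛₗ[φ] (B' →ₗ[S] Q), ∀ j b, l j (φ b) = f (b • j) := by
  choose l hl hl_unique using fun j : J ↦ h.existsUnique_lift (σ := RingHom.id S) (τ := ρ)
    (⟨⟨fun b ↦ f (b • j), fun b c ↦ by rw [add_smul, map_add]⟩,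
      fun r b ↦ by simp only [smul_assoc, map_smulₛₗ]⟩ : B →ₛₗ[ρ] Q)
  replace hl (j : J) (b : B) : l j (φ b) = f (b • j) := hφ' b ▸ hl j b
  let := moduleLinearMap (B' := B') (S := S) Q
  refine ⟨⟨⟨l, fun j j' ↦ ?_⟩, fun b j ↦ ?_⟩, hl⟩
  · refine (hl_unique (j + j') (l j + l j') fun b ↦ ?_).symm
    simp only [hφ', LinearMap.add_apply, hl, LinearMap.coe_mk, AddHom.coe_mk, smul_add, map_add]
  · refine (hl_unique (b • j) (l j ∘ₗ LinearMap.mulRight S (φ b)) fun c ↦ ?_).symm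
    simp only [hφ', LinearMap.comp_apply, LinearMap.mulRight_apply, ← map_mul, hl, LinearMap.coe_mk,
      AddHom.coe_mk, mul_smul]

variable [Module S (ExtendedScalars φ J)] [IsScalarTower S B' (ExtendedScalars φ J)]

lemma isBaseChangeAlong_of {φ' : B →ₛₗ[ρ] B'} (h : IsBaseChangeAlong φ') (hφ' : ∀ b, φ' b = φ b)
    {g : J →ₛₗ[ρ] ExtendedScalars φ J} (hg : ∀ j, g j = of φ J j) : IsBaseChangeAlong g := by
  refine IsBaseChangeAlong.of_existsUnique_lift fun Q _ _ f ↦ ?_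
  obtain ⟨l, hl⟩ := exists_linearMap_apply_eq h hφ' f
  let := moduleLinearMap (B' := B') (S := S) Q
  let L : ExtendedScalars φ J →ₗ[B'] (B' →ₗ[S] Q) := lift (RingHom.id B') l
  have L_smul_of (b : B') (j : J) : L (b • of φ J j) 1 = l j b := by
    rw [L.map_smul, show L (of φ J j) = l j from lift_of l j]
    exact congrArg (l j) (one_mul b)
  let f' : ExtendedScalars φ J →ₗ[S] Q :=
    { toFun x := L x 1
      map_add' x y := by rw [map_add, LinearMap.add_apply]
      map_smul' s x := by
        induction x using induction_on with
        | smul_of b j => rw [← smul_assoc, L_smul_of, L_smul_of, map_smul, RingHom.id_apply]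
        | add x y hx hy => rw [smul_add, map_add, LinearMap.add_apply, hx, hy, map_add,
            LinearMap.add_apply, smul_add] }
  have f'_of (j : J) : f' (of φ J j) = f j := by
    rw [← one_smul B' (of φ J j)]
    exact (L_smul_of 1 j).trans (by rw [← map_one φ, hl, one_smul])
  refine ⟨f', fun j ↦ (congrArg f' (hg j)).trans (f'_of j), fun f'' hf'' ↦
    LinearMap.ext fun x ↦ ?_⟩
  induction x using induction_on with
  | smul_of b j =>
    let smulOf : B' →ₗ[S] ExtendedScalars φ J :=
      (LinearMap.toSpanSingleton B' _ (of φ J j)).restrictScalars S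
    have key : f'' ∘ₗ smulOf = f' ∘ₗ smulOf := h.hom_ext fun b ↦ by
      change f'' (φ' b • of φ J j) = f' (φ' b • of φ J j)
      rw [hφ', ← map_smulₛₗ, f'_of, ← hg, hf'']
    exact congr($key b)
  | add x y hx hy => rw [map_add, map_add, hx, hy]

end BaseChange

end ExtendedScalars
end ExtensionOfScalars

section LocalCriterion

lemma isLocalizedModule_map_comp_self {S E N L : Type} [CommRing S] (p : Submonoid S)
    [AddCommGroup E] [Module S E] [AddCommGroup N] [Module S N] [AddCommGroup L] [Module S L]
    (φ : E →ₗ[S] N) (h : N →ₗ[S] L) [IsLocalizedModule p h] [IsLocalizedModule p (h ∘ₗ φ)] :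
    IsLocalizedModule.map p (h ∘ₗ φ) h φ = LinearMap.id :=
  IsLocalizedModule.linearMap_ext p (h ∘ₗ φ) (h ∘ₗ φ) <|
    LinearMap.ext fun x ↦ IsLocalizedModule.map_apply p (h ∘ₗ φ) h φ x

lemma IsBaseChangeAlong.of_span_eq_top {R S : Type} [CommRing R] [CommRing S] {ρ : R →+* S}
    {M N : Type} [AddCommGroup M] [AddCommGroup N] [Module R M] [Module S N] {g : M →ₛₗ[ρ] N}
    {s : Set S} (hs : Ideal.span s = ⊤) {T : s → Type} [∀ i, CommRing (T i)]
    {σ : ∀ i, S →+* T i} {τ : ∀ i, R →+* T i} [∀ i, RingHomCompTriple ρ (σ i) (τ i)]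
    (hT : ∀ i, letI := (σ i).toAlgebra; IsLocalization.Away (i : S) (T i))
    {L : s → Type} [∀ i, AddCommGroup (L i)] [∀ i, Module (T i) (L i)]
    {h : ∀ i, N →ₛₗ[σ i] L i} (hh : ∀ i, IsBaseChangeAlong (h i))
    (hgh : ∀ i, IsBaseChangeAlong ((h i).comp g : M →ₛₗ[τ i] L i)) : IsBaseChangeAlong g := by
  let E := ExtendedScalars ρ M
  have isBaseChange_of : IsBaseChangeAlong (ExtendedScalars.of ρ M) :=
    ExtendedScalars.isBaseChangeAlong_of (φ' := (⟨⟨ρ, map_add ρ⟩, map_mul ρ⟩ : R →ₛₗ[ρ] S))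
      (let := ρ.toAlgebra; IsBaseChange.linearMap R S)
      (fun _ ↦ rfl) fun _ ↦ rfl
  let φ : E →ₗ[S] N := ExtendedScalars.lift (RingHom.id S) g
  have φ_of (x : M) : φ (ExtendedScalars.of ρ M x) = g x := ExtendedScalars.lift_of g x
  have hφ (i : s) : IsBaseChangeAlong ((h i).comp φ : E →ₛₗ[σ i] L i) :=
    (isBaseChange_of.comp_iff (τ := τ i)).1 <| by
      convert! hgh i using 1
      exact LinearMap.ext fun x ↦ congrArg (h i) (φ_of x)
  have : Function.Bijective φ := by
    let := fun i ↦ (σ i).toAlgebra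
    let := fun i ↦ Module.compHom (L i) (σ i)
    have (i : s) := isScalarTower_compHom (σ i) (L i)
    let hS (i : s) : N →ₗ[S] L i := ⟨⟨h i, map_add _⟩, (h i).map_smulₛₗ⟩
    have (i : s) := (isLocalizedModule_iff_isBaseChange (.powers (i : S)) (T i) (hS i)).2 (hh i)
    have (i : s) :=
      (isLocalizedModule_iff_isBaseChange (.powers (i : S)) (T i) (hS i ∘ₗ φ)).2 (hφ i)
    exact bijective_of_isLocalized_span s hs L (fun i ↦ hS i ∘ₗ φ) L hS φ fun i ↦
      isLocalizedModule_map_comp_self (.powers (i : S)) φ (hS i) ▸ Function.bijective_id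
  rw [← show (φ.comp (ExtendedScalars.of ρ M) : M →ₛₗ[ρ] N) = g from LinearMap.ext φ_of]
  exact isBaseChange_of.comp_iff.2 (id_iff_bijective.2 this)

end LocalCriterion

section Category

open Limits Opposite

variable {X : Scheme.{0}} {G : Set X.Opens} {A : AlgData k X G}

namespace LModData

instance moduleSec (M : LModData k X G A) (U : G) : Module (A.sec U) (M.sec U) where
  smul := M.lsmul U
  one_smul := M.lsmul_one U
  mul_smul a b m := (M.lsmul_mul U a b m).symm
  smul_zero a := (AddMonoidHom.mk' (M.lsmul U a) (M.lsmul_add U a)).map_zero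
  smul_add := M.lsmul_add U
  add_smul := M.add_lsmul U
  zero_smul m := (AddMonoidHom.mk' (M.lsmul U · m) (M.add_lsmul U · · m)).map_zero

instance isScalarTower (M : LModData k X G A) (U : G) :
    IsScalarTower k (A.sec U) (M.sec U) where
  smul_assoc := M.lsmul_k U

/-- The restriction maps of `M`, as maps semilinear over the restriction maps of `A`. -/
def resₛₗ (M : LModData k X G A) {U V : G} (h : (V : X.Opens) ≤ U) :
    M.sec U →ₛₗ[(A.res h : A.sec U →+* A.sec V)] M.sec V where
  toFun := M.res h
  map_add' := map_add _
  map_smul' := M.lsmul_res h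

/-- A presheaf of `A`-modules given by modules over the algebras `A.sec U` and semilinear
restriction maps; the `k`-module structures are induced by those of the algebras. -/
def ofSemilinear (sec : G → Type) [∀ U, AddCommGroup (sec U)] [∀ U, Module (A.sec U) (sec U)]
    (res : ∀ {U V : G} (h : (V : X.Opens) ≤ U),
      sec U →ₛₗ[(A.res h : A.sec U →+* A.sec V)] sec V)
    (res_id : ∀ (U : G) (x : sec U), res (le_refl (U : X.Opens)) x = x)
    (res_comp : ∀ {U V W : G} (h1 : (W : X.Opens) ≤ V) (h2 : (V : X.Opens) ≤ U) (x : sec U),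
      res h1 (res h2 x) = res (h1.trans h2) x) : LModData k X G A where
  sec := sec
  modSec U := Module.compHom (sec U) (algebraMap k (A.sec U))
  res h :=
    letI := fun U ↦ Module.compHom (sec U) (algebraMap k (A.sec U))
    { toFun := res h
      map_add' := map_add _
      map_smul' c x := ((res h).map_smulₛₗ _ x).trans
        (congrArg (· • res h x) ((A.res h).commutes c)) }
  res_id := res_id
  res_comp := res_comp
  lsmul _ a m := a • m
  lsmul_one _ := one_smul _
  lsmul_mul _ a b m := (mul_smul a b m).symm
  lsmul_add _ := smul_add
  add_lsmul _ := add_smul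
  lsmul_k _ c a m := (congrArg (· • m) (Algebra.smul_def c a)).trans (mul_smul _ a m)
  lsmul_res h := (res h).map_smulₛₗ

end LModData

namespace LModHom

variable {M N P : LModData k X G A}

@[ext]
lemma ext {f g : LModHom M N} (h : ∀ U x, f.app U x = g.app U x) : f = g := by
  obtain ⟨f, _, _⟩ := f
  obtain ⟨g, _, _⟩ := g
  obtain rfl : f = g := funext fun U ↦ LinearMap.ext (h U)
  rfl

/-- The component of a morphism at `U`, as an `A.sec U`-linear map. -/
def appₗ (f : LModHom M N) (U : G) : M.sec U →ₗ[A.sec U] N.sec U where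
  toFun := f.app U
  map_add' := map_add _
  map_smul' := f.comm_lsmul U

/-- A morphism given by linear maps over the algebras `A.sec U`. -/
def ofLinear (app : ∀ U, M.sec U →ₗ[A.sec U] N.sec U)
    (comm : ∀ {U V : G} (h : (V : X.Opens) ≤ U) (x : M.sec U),
      app V (M.res h x) = N.res h (app U x)) : LModHom M N where
  app U := (app U).restrictScalars k
  comm_res := comm
  comm_lsmul U := (app U).map_smul

end LModHom

namespace LModData

instance : Category (LModData k X G A) where
  Hom := LModHom
  id M := .ofLinear (fun _ ↦ LinearMap.id) fun _ _ ↦ rfl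
  comp f g := .ofLinear (fun U ↦ (LModHom.appₗ g U).comp (LModHom.appₗ f U)) fun h x ↦
    (congrArg _ (LModHom.comm_res f h x)).trans (LModHom.comm_res g h _)

end LModData

/-- The presheaf of rings on the poset `G` underlying `A`. -/
abbrev AlgData.toPresheaf (A : AlgData k X G) : Gᵒᵖ ⥤ RingCat.{0} where
  obj U := .of (A.sec U.unop)
  map f := RingCat.ofHom (A.res (leOfHom f.unop))
  map_id U := RingCat.hom_ext (RingHom.ext (A.res_id U.unop))
  map_comp f g := RingCat.hom_ext (RingHom.ext fun x ↦
    (A.res_comp (leOfHom g.unop) (leOfHom f.unop) x).symm)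

namespace LModData

variable (A) in
/-- A presheaf of modules in the concrete sense is the same as a `PresheafOfModules`. -/
def toPresheafOfModules : LModData k X G A ⥤ PresheafOfModules.{0} A.toPresheaf where
  obj M :=
    { obj U := .of (A.sec U.unop) (M.sec U.unop)
      map {U V} f := ModuleCat.ofHom
        (Y := (ModuleCat.restrictScalars (A.toPresheaf.map f).hom).obj
          (.of (A.sec V.unop) (M.sec V.unop)))
        { toFun := M.res (leOfHom f.unop)
          map_add' := map_add _
          map_smul' := M.lsmul_res _ }
      map_id U := ModuleCat.hom_ext (LinearMap.ext (M.res_id U.unop))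
      map_comp f g := ModuleCat.hom_ext (LinearMap.ext fun x ↦
        (M.res_comp (leOfHom g.unop) (leOfHom f.unop) x).symm) }
  map f :=
    { app U := ModuleCat.ofHom (LModHom.appₗ f U.unop)
      naturality _ := ModuleCat.hom_ext (LinearMap.ext fun x ↦ LModHom.comm_res f _ x) }

/-- A morphism of associated `PresheafOfModules` is a morphism of `LModData`. -/
def fullyFaithfulToPresheafOfModules : (toPresheafOfModules A).FullyFaithful where
  preimage {M N} f := LModHom.ofLinear (M := M) (N := N) (fun U ↦ (f.app (op U)).hom)
    fun {U V} h x ↦ PresheafOfModules.naturality_apply f (X := op U) (Y := op V) (homOfLE h).op x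

instance : (toPresheafOfModules A).IsEquivalence where
  faithful := fullyFaithfulToPresheafOfModules.faithful
  full := fullyFaithfulToPresheafOfModules.full
  essSurj :=
    { mem_essImage P := by
        let M : LModData k X G A := .ofSemilinear (fun U ↦ P.obj (op U))
          (fun {U V} h ↦ P.restrictₛₗ (X := op U) (Y := op V) (homOfLE h).op)
          (fun U x ↦ CategoryTheory.congr_fun (P.map_id (op U)) x)
          (fun h₁ h₂ x ↦ (P.map_comp_apply (homOfLE h₂).op (homOfLE h₁).op x).symm)
        refine ⟨M, ⟨PresheafOfModules.isoMk (fun U ↦ Iso.refl _) ?_⟩⟩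
        intros
        rfl }

instance : Preadditive (LModData k X G A) := .ofFullyFaithful fullyFaithfulToPresheafOfModules

instance : (toPresheafOfModules A).Additive :=
  fullyFaithfulToPresheafOfModules.additive_ofFullyFaithful

instance : HasFiniteProducts (LModData k X G A) :=
  ⟨fun _ ↦ Adjunction.hasLimitsOfShape_of_equivalence (toPresheafOfModules A)⟩

instance : Abelian (LModData k X G A) := abelianOfEquivalence (toPresheafOfModules A)

end LModData
end Category

section Exactness

open Limits Opposite

variable {X : Scheme.{0}} {G : Set X.Opens} {A : AlgData k X G}

namespace LModData

variable {M N : LModData k X G A}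

variable (A) in
/-- Sections over `U`, as a functor. -/
def evaluation (U : G) : LModData k X G A ⥤ ModuleCat (A.sec U) :=
  toPresheafOfModules A ⋙ PresheafOfModules.evaluation A.toPresheaf (op U)

instance (U : G) : (evaluation A U).Additive where

instance (U : G) : PreservesFiniteLimits (evaluation A U) :=
  have := PresheafOfModules.evaluation_preservesFiniteLimits (R := A.toPresheaf) (op U)
  comp_preservesFiniteLimits (toPresheafOfModules A) _

instance (U : G) : PreservesFiniteColimits (evaluation A U) :=
  have := PresheafOfModules.Finite.evaluation_preservesFiniteColimits (R := A.toPresheaf) (op U)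
  comp_preservesFiniteColimits (toPresheafOfModules A) _

lemma zero_app (U : G) (x : M.sec U) : LModHom.app (0 : M ⟶ N) U x = 0 :=
  congr($((evaluation A U).map_zero M N) x)

lemma comp_app {P : LModData k X G A} (f : M ⟶ N) (g : N ⟶ P) (U : G) (x : M.sec U) :
    LModHom.app (f ≫ g) U x = LModHom.app g U (LModHom.app f U x) :=
  rfl

lemma isZero_of_subsingleton [∀ U, Subsingleton (M.sec U)] : IsZero M :=
  (IsZero.iff_id_eq_zero M).2 (LModHom.ext fun _ _ ↦ Subsingleton.elim _ _)

lemma exact_iff_map_evaluation (S : ShortComplex (LModData k X G A)) :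
    S.Exact ↔ ∀ U, (S.map (evaluation A U)).Exact := by
  refine ⟨fun h U ↦ h.map _, fun h ↦ ?_⟩
  rw [S.exact_iff_isZero_homology]
  have subsingleton_homology (U : G) : Subsingleton (S.homology.sec U) :=
    ModuleCat.subsingleton_of_isZero
      (((S.map (evaluation A U)).exact_iff_isZero_homology.1 (h U)).of_iso
        (S.mapHomologyIso (evaluation A U)).symm)
  exact isZero_of_subsingleton

lemma exact_iff (S : ShortComplex (LModData k X G A)) :
    S.Exact ↔ ∀ U, Function.Exact (LModHom.app S.f U) (LModHom.app S.g U) :=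
  (exact_iff_map_evaluation S).trans (forall_congr' fun U ↦
    ShortComplex.ShortExact.moduleCat_exact_iff_function_exact (S.map (evaluation A U)))

lemma mono_iff (f : M ⟶ N) : Mono f ↔ ∀ U, Function.Injective (LModHom.app f U) := by
  rw [← (toPresheafOfModules A).mono_map_iff_mono, PresheafOfModules.mono_iff_surjective]
  exact ⟨fun h U ↦ h (X := op U), fun h _ ↦ h _⟩

lemma epi_iff (f : M ⟶ N) : Epi f ↔ ∀ U, Function.Surjective (LModHom.app f U) := by
  rw [← (toPresheafOfModules A).epi_map_iff_epi, PresheafOfModules.epi_iff_surjective]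
  exact ⟨fun h U ↦ h (X := op U), fun h _ ↦ h _⟩

lemma isIso_iff (f : M ⟶ N) : IsIso f ↔ ∀ U, Function.Bijective (LModHom.app f U) := by
  rw [isIso_iff_mono_and_epi, mono_iff, epi_iff]
  exact forall_and.symm

lemma shortExact_iff (S : ShortComplex (LModData k X G A)) :
    S.ShortExact ↔ ∀ U, Function.Injective (LModHom.app S.f U) ∧
      Function.Exact (LModHom.app S.f U) (LModHom.app S.g U) ∧
      Function.Surjective (LModHom.app S.g U) := by
  rw [forall_and, forall_and, ← mono_iff, ← exact_iff, ← epi_iff]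
  exact ⟨fun h ↦ ⟨h.mono_f, h.exact, h.epi_g⟩, fun ⟨_, h, _⟩ ↦ .mk' h ‹_› ‹_›⟩

end LModData
end Exactness

section EnoughInjectives

open Limits Opposite

variable {X : Scheme.{0}} {G : Set X.Opens} {A : AlgData k X G}

namespace LModData

/-- The presheaf of modules `V ↦ ∏ U ≤ V, J U` cofreely generated by modules `J U` over the
algebras `A.sec U`; its restriction maps are projections. -/
def cofree (J : ∀ U, ModuleCat.{0} (A.sec U)) : LModData k X G A :=
  letI (V : G) (U : {U : G // (U : X.Opens) ≤ V}) : Module (A.sec V) (J U) :=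
    Module.compHom (J U) (A.res U.2 : A.sec V →+* A.sec U)
  .ofSemilinear (fun V ↦ ∀ U : {U : G // (U : X.Opens) ≤ V}, J U)
    (fun h ↦
      { toFun s U := s ⟨U, U.2.trans h⟩
        map_add' _ _ := rfl
        map_smul' a s := funext fun U ↦
          congrArg (· • s ⟨U, U.2.trans h⟩) (A.res_comp U.2 h a).symm })
    (fun _ _ ↦ rfl) (fun _ _ _ ↦ rfl)

variable {J : ∀ U, ModuleCat.{0} (A.sec U)} {M N : LModData k X G A}

/-- The morphism into `cofree J` with given components. -/
def toCofree (φ : ∀ U, M.sec U →ₗ[A.sec U] J U) : M ⟶ cofree J :=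
  LModHom.ofLinear (N := cofree J)
    (fun _ ↦
      { toFun x U := φ U (M.res U.2 x)
        map_add' x y := funext fun U ↦
          (congrArg (φ U) (map_add (M.res U.2) x y)).trans (map_add _ _ _)
        map_smul' a x := funext fun U ↦
          (congrArg (φ U) (M.lsmul_res U.2 a x)).trans ((φ U).map_smul _ _) })
    fun h x ↦ funext fun U ↦ congrArg (φ U) (M.res_comp U.2 h x)

/-- The component at `U` of a morphism into `cofree J`. -/
def ofCofree (g : M ⟶ cofree J) (U : G) : M.sec U →ₗ[A.sec U] J U where
  toFun x := LModHom.app g U x ⟨U, le_rfl⟩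
  map_add' x y := congrFun (map_add (LModHom.app g U) x y) _
  map_smul' a x := (congrFun (LModHom.comm_lsmul g U a x) _).trans
    (congrArg (· • LModHom.app g U x ⟨U, le_rfl⟩) (A.res_id U a))

instance (J : ∀ U, ModuleCat.{0} (A.sec U)) [∀ U, Injective (J U)] : Injective (cofree J) where
  factors {M N} g f _ := by
    have (U : G) : Mono (ModuleCat.ofHom (LModHom.appₗ f U)) :=
      inferInstanceAs (Mono ((evaluation A U).map f))
    let ψ (U : G) : N.sec U →ₗ[A.sec U] J U := (Injective.factorThru
      (ModuleCat.ofHom (ofCofree g U)) (ModuleCat.ofHom (LModHom.appₗ f U))).hom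
    have hψ (U : G) (x : M.sec U) : ψ U (LModHom.app f U x) = ofCofree g U x :=
      congr($(Injective.comp_factorThru (ModuleCat.ofHom (ofCofree g U))
        (ModuleCat.ofHom (LModHom.appₗ f U))) x)
    refine ⟨toCofree ψ, LModHom.ext fun V x ↦ funext fun U ↦ ?_⟩
    calc ψ U (N.res U.2 (LModHom.app f V x)) = ψ U (LModHom.app f U (M.res U.2 x)) := by
          rw [LModHom.comm_res]
      _ = ofCofree g U (M.res U.2 x) := hψ U _
      _ = LModHom.app g V x U := congrFun (LModHom.comm_res g U.2 x) _

instance : EnoughInjectives (LModData k X G A) where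
  presentation M := by
    let J (U : G) : ModuleCat (A.sec U) := Injective.under (ModuleCat.of _ (M.sec U))
    let ι (U : G) : M.sec U →ₗ[A.sec U] J U := (Injective.ι (ModuleCat.of _ (M.sec U))).hom
    have hι (U : G) : Function.Injective (ι U) := (ModuleCat.mono_iff_injective _).1 inferInstance
    exact ⟨{ J := cofree J, f := toCofree ι
             mono := (mono_iff _).2 fun U x y h ↦ hι U <|
               (congrArg (ι U) (M.res_id U x)).symm.trans
                 ((congrFun h ⟨U, le_rfl⟩).trans (congrArg (ι U) (M.res_id U y))) }⟩

instance : HasExt.{0} (LModData k X G A) := hasExt_of_enoughInjectives _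

end LModData
end EnoughInjectives

section RestrictionToOpen

open Limits

variable {X : Scheme.{0}} {G : Set X.Opens} {A : AlgData k X G}

namespace LModData

variable (A) in
/-- Restriction of presheaves of modules to a smaller family of open subsets. -/
def restriction {G' : Set X.Opens} (h : G' ⊆ G) :
    LModData k X G A ⥤ LModData k X G' (A.reindex h) where
  obj M := M.reindex h
  map f := LModHom.reindex f h

variable {G' : Set X.Opens} (h : G' ⊆ G)

instance : (restriction A h).PreservesMonomorphisms where
  preserves f hf := (mono_iff _).2 fun U ↦ (mono_iff f).1 hf ⟨U, h U.2⟩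

variable {U : X.Opens} (hU : ∀ V ∈ G, V ⊓ U ∈ G)

/-- The intersection of a member of `G` with `U`, as a member of `G` contained in `U`. -/
def infOpen (V : G) : (G ∩ Set.Iic U : Set _) := ⟨V ⊓ U, hU V V.2, Set.mem_Iic.2 inf_le_right⟩

variable (A) in
/-- The direct image, to the family `G`, of presheaves of modules on the members of `G`
contained in `U`. -/
def directImage : LModData k X (G ∩ Set.Iic U) (A.reindex Set.inter_subset_left) ⥤
    LModData k X G A where
  obj P :=
    { sec V := P.sec (infOpen hU V)
      res {V V'} h := P.res (U := infOpen hU V) (V := infOpen hU V') (inf_le_inf_right U h)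
      res_id _ := P.res_id _
      res_comp _ _ := P.res_comp _ _
      lsmul V a := P.lsmul _ (A.res (V := ⟨_, hU V V.2⟩) inf_le_left a)
      lsmul_one V m := (congrArg (P.lsmul _ · m) (map_one _)).trans (P.lsmul_one _ m)
      lsmul_mul V a b m := (P.lsmul_mul _ _ _ m).trans
        (congrArg (P.lsmul _ · m) (map_mul _ a b).symm)
      lsmul_add V a := P.lsmul_add _ _
      add_lsmul V a b m := (congrArg (P.lsmul _ · m) (map_add _ a b)).trans (P.add_lsmul _ _ _ m)
      lsmul_k V c a m := (congrArg (P.lsmul _ · m) (map_smul _ c a)).trans (P.lsmul_k _ c _ m)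
      lsmul_res {V V'} h a m := (P.lsmul_res _ _ m).trans <| congrArg (P.lsmul _ · _)
        ((A.res_comp (U := V) (V := ⟨_, hU V V.2⟩) (W := ⟨_, hU V' V'.2⟩)
          (inf_le_inf_right U h) inf_le_left a).trans
            (A.res_comp (U := V) (V := V') (W := ⟨_, hU V' V'.2⟩) inf_le_left h a).symm) }
  map f :=
    { app V := LModHom.app f (infOpen hU V)
      comm_res _ := LModHom.comm_res f _
      comm_lsmul _ _ := LModHom.comm_lsmul f _ _ }

variable (A) in
/-- Restriction to the opens contained in `U` is left adjoint to the direct image. -/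
def restrictionAdjunction :
    restriction A (Set.inter_subset_left (t := Set.Iic U)) ⊣ directImage A hU where
  unit :=
    { app M :=
        { app V := M.res (V := ⟨_, hU V V.2⟩) inf_le_left
          comm_res {V V'} h x := (M.res_comp (U := V) (V := V') (W := ⟨_, hU V' V'.2⟩) _ h x).trans
            (M.res_comp (U := V) (V := ⟨_, hU V V.2⟩) (W := ⟨_, hU V' V'.2⟩)
              (inf_le_inf_right U h) inf_le_left x).symm
          comm_lsmul _ := M.lsmul_res _ }
      naturality _ _ f := LModHom.ext fun V x ↦
        (LModHom.comm_res f (V := ⟨_, hU V V.2⟩) _ x).symm }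
  counit :=
    { app P :=
        { app V := P.res (U := infOpen hU ⟨V, V.2.1⟩) (V := V) (le_inf le_rfl V.2.2)
          comm_res _ _ := (P.res_comp _ _ _).trans (P.res_comp _ _ _).symm
          comm_lsmul V a _ := (P.lsmul_res _ _ _).trans (congrArg (P.lsmul V · _)
            ((A.res_comp (U := ⟨V, V.2.1⟩) (V := ⟨_, hU V V.2.1⟩) (W := ⟨V, V.2.1⟩)
              (le_inf le_rfl V.2.2) inf_le_left a).trans (A.res_id _ a))) }
      naturality _ _ f := LModHom.ext fun V x ↦
        (LModHom.comm_res f (U := infOpen hU ⟨V, V.2.1⟩) _ x).symm }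
  left_triangle_components M := LModHom.ext fun V x ↦
    (M.res_comp (U := ⟨V, V.2.1⟩) (V := ⟨_, hU V V.2.1⟩) (W := ⟨V, V.2.1⟩)
      (le_inf le_rfl V.2.2) inf_le_left x).trans (M.res_id _ x)
  right_triangle_components P := LModHom.ext fun V x ↦
    (P.res_comp (U := infOpen hU V) _ _ x).trans (P.res_id _ x)

instance : (directImage A hU).PreservesZeroMorphisms where
  map_zero _ _ := LModHom.ext fun _ _ ↦ (zero_app _ _).trans (zero_app _ _).symm

lemma directImage_shortExact
    {S : ShortComplex (LModData k X (G ∩ Set.Iic U) (A.reindex Set.inter_subset_left))}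
    (hS : S.ShortExact) : (S.map (directImage A hU)).ShortExact :=
  (shortExact_iff _).2 fun V ↦ (shortExact_iff S).1 hS (infOpen hU V)

lemma forall_ext_restriction_eq_zero_iff (M : LModData k X G A)
    (P : LModData k X (G ∩ Set.Iic U) (A.reindex Set.inter_subset_left)) (n : ℕ) :
    (∀ e : Abelian.Ext.{0} ((restriction A Set.inter_subset_left).obj M) P (n + 1), e = 0) ↔
      ∀ e : Abelian.Ext.{0} M ((directImage A hU).obj P) (n + 1), e = 0 :=
  forall_ext_eq_zero_iff_of_adjunction (restrictionAdjunction A hU)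
    (fun _ ↦ directImage_shortExact hU) M P n

end LModData
end RestrictionToOpen

section Coextension

variable {X : Scheme.{0}} {G G' : Set X.Opens} {A : AlgData k X G}
  (h : G' ⊆ G)

namespace LModData

/-- The sections over an open `U` of the right Kan extension of `P`: families of sections of `P`,
compatible with restriction, over the members of `G'` contained in `U`. -/
def compatibleFamilies {B : AlgData k X G'} (P : LModData k X G' B) (U : X.Opens) :
    Submodule k (∀ V : {V : G' // (V : X.Opens) ≤ U}, P.sec V) where
  carrier := {s | ∀ (V V' : {V : G' // (V : X.Opens) ≤ U}) (h : (V' : X.Opens) ≤ V),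
    P.res h (s V) = s V'}
  add_mem' hs ht V V' h := (map_add _ _ _).trans (congrArg₂ (· + ·) (hs V V' h) (ht V V' h))
  zero_mem' _ _ _ := map_zero _
  smul_mem' c _ hs V V' h := (map_smul _ _ _).trans (congrArg (c • ·) (hs V V' h))

variable (A) in
/-- The right Kan extension of presheaves of modules to a larger family of open subsets. -/
def coextension : LModData k X G' (A.reindex h) ⥤ LModData k X G A where
  obj P :=
    { sec U := P.compatibleFamilies U
      res hle :=
        { toFun s := ⟨fun V ↦ s.1 ⟨V, V.2.trans hle⟩,
            fun V V' ↦ s.2 ⟨V, V.2.trans hle⟩ ⟨V', V'.2.trans hle⟩⟩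
          map_add' _ _ := rfl
          map_smul' _ _ := rfl }
      res_id _ _ := rfl
      res_comp _ _ _ := rfl
      lsmul _ a s := ⟨fun V ↦ P.lsmul V (A.res (V := ⟨V, h V.1.2⟩) V.2 a) (s.1 V),
        fun V V' hle ↦ (P.lsmul_res hle _ _).trans (congrArg₂ (P.lsmul V')
          (A.res_comp (V := ⟨V, h V.1.2⟩) (W := ⟨V', h V'.1.2⟩) hle V.2 a) (s.2 V V' hle))⟩
      lsmul_one U s := Subtype.ext <| funext fun V ↦
        (congrArg (P.lsmul V · _) (map_one _)).trans (P.lsmul_one V _)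
      lsmul_mul U a b s := Subtype.ext <| funext fun V ↦
        (P.lsmul_mul V _ _ _).trans (congrArg (P.lsmul V · _) (map_mul _ a b).symm)
      lsmul_add U a s t := Subtype.ext <| funext fun V ↦ P.lsmul_add V _ _ _
      add_lsmul U a b s := Subtype.ext <| funext fun V ↦
        (congrArg (P.lsmul V · _) (map_add _ a b)).trans (P.add_lsmul V _ _ _)
      lsmul_k U c a s := Subtype.ext <| funext fun V ↦
        (congrArg (P.lsmul V · _) (map_smul _ c a)).trans (P.lsmul_k V c _ _)
      lsmul_res {U U'} hle a s := Subtype.ext <| funext fun V ↦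
        congrArg (P.lsmul V · _) (A.res_comp (V := U') (W := ⟨V, h V.1.2⟩) V.2 hle a).symm }
  map f :=
    { app U :=
        { toFun s := ⟨fun V ↦ LModHom.app f V (s.1 V), fun V V' hle ↦
            (LModHom.comm_res f hle _).symm.trans (congrArg _ (s.2 V V' hle))⟩
          map_add' _ _ := Subtype.ext <| funext fun _ ↦ map_add _ _ _
          map_smul' _ _ := Subtype.ext <| funext fun _ ↦ map_smul _ _ _ }
      comm_res _ _ := rfl
      comm_lsmul _ _ _ := Subtype.ext <| funext fun V ↦ LModHom.comm_lsmul f V _ _ }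

variable (A) in
/-- Restriction is left adjoint to the right Kan extension. -/
def coextensionAdjunction : restriction A h ⊣ coextension A h where
  unit :=
    { app M :=
        { app U :=
            { toFun x := show (M.reindex h).compatibleFamilies U from
                ⟨fun V ↦ M.res (V := ⟨V, h V.1.2⟩) V.2 x, fun V V' hle ↦
                  M.res_comp (V := ⟨V, h V.1.2⟩) (W := ⟨V', h V'.1.2⟩) hle V.2 x⟩
              map_add' _ _ := Subtype.ext <| funext fun _ ↦ map_add _ _ _
              map_smul' _ _ := Subtype.ext <| funext fun _ ↦ map_smul _ _ _ }
          comm_res {_ U'} hle x := Subtype.ext <| funext fun (V : {V : G' // (V : X.Opens) ≤ U'}) ↦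
            M.res_comp (V := U') (W := ⟨V, h V.1.2⟩) V.2 hle x
          comm_lsmul U a x := Subtype.ext <| funext fun (V : {V : G' // (V : X.Opens) ≤ U}) ↦
            M.lsmul_res (V := ⟨V, h V.1.2⟩) V.2 a x }
      naturality _ _ f := LModHom.ext fun U x ↦ Subtype.ext <|
        funext fun (V : {V : G' // (V : X.Opens) ≤ U}) ↦
        (LModHom.comm_res f (V := ⟨V, h V.1.2⟩) V.2 x).symm }
  counit :=
    { app P :=
        { app V :=
            { toFun (s : P.compatibleFamilies V) := s.1 ⟨V, le_rfl⟩
              map_add' _ _ := rfl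
              map_smul' _ _ := rfl }
          comm_res {V V'} hle (s : P.compatibleFamilies V) := (s.2 ⟨V, le_rfl⟩ ⟨V', hle⟩ hle).symm
          comm_lsmul V a _ := congrArg (P.lsmul V · _) (A.res_id _ a) }
      naturality _ _ _ := rfl }
  left_triangle_components M := LModHom.ext fun _ x ↦ M.res_id _ x
  right_triangle_components _ := LModHom.ext fun _ _ ↦ Subtype.ext <| funext fun _ ↦ rfl

instance (P : LModData k X G' (A.reindex h)) :
    IsIso ((coextensionAdjunction A h).counit.app P) :=
  (isIso_iff _).2 fun V ↦ ⟨fun (s t : P.compatibleFamilies V) hst ↦ Subtype.ext <| funext fun V' ↦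
      (s.2 ⟨V, le_rfl⟩ V' V'.2).symm.trans ((congrArg (P.res V'.2) hst).trans
        (t.2 ⟨V, le_rfl⟩ V' V'.2)),
    fun x ↦ ⟨show P.compatibleFamilies V from
      ⟨fun V' ↦ P.res V'.2 x, fun V' _ hle ↦ P.res_comp hle V'.2 x⟩, P.res_id V x⟩⟩

end LModData
end Coextension

section SheavesOnBases

variable {X : Scheme.{0}} {G G' : Set X.Opens} {A : AlgData k X G}
  (h : G' ⊆ G)

lemma iSup_basis_le (hG' : Opens.IsBasis G') (U : X.Opens) :
    ⨆ V : {V : G' // (V : X.Opens) ≤ U}, (V : X.Opens) = U := by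
  refine le_antisymm (iSup_le fun V ↦ V.2) fun x hx ↦ ?_
  obtain ⟨V, hV, hxV, hVU⟩ := Opens.isBasis_iff_nbhd.1 hG' hx
  exact Opens.mem_iSup.2 ⟨⟨⟨V, hV⟩, hVU⟩, hxV⟩

lemma iSup_le_inf_eq (hG' : Opens.IsBasis G') {ι : Type} {V : ι → G} {U : X.Opens}
    (hU : U ≤ ⨆ i, (V i : X.Opens)) :
    ⨆ p : {p : ι × G' // (p.2 : X.Opens) ≤ U ∧ (p.2 : X.Opens) ≤ V p.1}, (p.1.2 : X.Opens) = U := by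
  refine le_antisymm (iSup_le fun p ↦ p.2.1) fun x hx ↦ ?_
  obtain ⟨i, hi⟩ := Opens.mem_iSup.1 (hU hx)
  obtain ⟨V', hV', hxV', hle⟩ := Opens.isBasis_iff_nbhd.1 hG' (Opens.mem_inf.2 ⟨hx, hi⟩)
  exact Opens.mem_iSup.2 ⟨⟨(i, ⟨V', hV'⟩), le_inf_iff.1 hle⟩, hxV'⟩

namespace LModData

lemma IsSheafCond.eq_of_res_eq {M : LModData k X G A} (hM : M.IsSheafCond) {U : G} {ι : Type}
    {V : ι → G} (hle : ∀ i, (V i : X.Opens) ≤ U) (hcover : ⨆ i, (V i : X.Opens) = U)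
    {x y : M.sec U} (hxy : ∀ i, M.res (hle i) x = M.res (hle i) y) : x = y :=
  (hM U ι V hle hcover (fun i ↦ M.res (hle i) y) fun i j _ h₁ h₂ ↦
    (M.res_comp h₁ (hle i) y).trans (M.res_comp h₂ (hle j) y).symm).unique hxy fun _ ↦ rfl

lemma IsSheafCond.eq_of_basis {M : LModData k X G A} (hM : M.IsSheafCond)
    (hG' : Opens.IsBasis G') {U : G} {x y : M.sec U}
    (hxy : ∀ (V : G') (hV : (V : X.Opens) ≤ U),
      M.res (V := ⟨V, h V.2⟩) hV x = M.res (V := ⟨V, h V.2⟩) hV y) : x = y :=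
  hM.eq_of_res_eq (V := fun V : {V : G' // (V : X.Opens) ≤ U} ↦ ⟨V, h V.1.2⟩) (fun V ↦ V.2)
    (iSup_basis_le hG' U) fun V ↦ hxy V V.2

lemma IsSheafCond.isIso_unit {M : LModData k X G A} (hM : M.IsSheafCond)
    (hG' : Opens.IsBasis G') : IsIso ((coextensionAdjunction A h).unit.app M) := by
  refine (isIso_iff _).2 fun U ↦ ⟨fun x y hxy ↦ hM.eq_of_basis h hG' fun V hV ↦
    congrFun (congrArg Subtype.val hxy) ⟨V, hV⟩,
    fun (s : (M.reindex h).compatibleFamilies U) ↦ ?_⟩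
  let V (V : {V : G' // (V : X.Opens) ≤ U}) : G := ⟨V, h V.1.2⟩
  have compat (V₁ V₂) (W : G) (h₁ : (W : X.Opens) ≤ V V₁) (h₂ : (W : X.Opens) ≤ V V₂) :
      M.res h₁ (s.1 V₁) = M.res h₂ (s.1 V₂) := hM.eq_of_basis h hG' fun V' hV' ↦
    ((M.res_comp _ _ _).trans <| s.2 V₁ ⟨V', hV'.trans (h₁.trans V₁.2)⟩ (hV'.trans h₁)).trans
      ((M.res_comp _ _ _).trans <|
        s.2 V₂ ⟨V', hV'.trans (h₂.trans V₂.2)⟩ (hV'.trans h₂)).symm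
  obtain ⟨t, ht, -⟩ := hM U _ V (fun V ↦ V.2) (iSup_basis_le hG' U) s.1 compat
  exact ⟨t, Subtype.ext (funext ht)⟩

lemma IsSheafCond.bijective_restriction_map {N : LModData k X G A} (hN : N.IsSheafCond)
    (hG' : Opens.IsBasis G') (M : LModData k X G A) :
    Function.Bijective ((restriction A h).map : (M ⟶ N) → _) := by
  have := hN.isIso_unit h hG'
  have homEquiv_map (f : M ⟶ N) : (coextensionAdjunction A h).homEquiv M _
      ((restriction A h).map f) = f ≫ (coextensionAdjunction A h).unit.app N :=
    (Adjunction.homEquiv_unit ..).trans ((coextensionAdjunction A h).unit.naturality f).symm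
  refine (((coextensionAdjunction A h).homEquiv M _).comp_bijective _).1 ?_
  rw [show _ ∘ _ = (· ≫ (coextensionAdjunction A h).unit.app N) from funext homEquiv_map]
  exact (Iso.homToEquiv (Z := M) (asIso ((coextensionAdjunction A h).unit.app N))).bijective

lemma IsSheafCond.coextension (hG' : Opens.IsBasis G') {P : LModData k X G' (A.reindex h)}
    (hP : P.IsSheafCond) : ((coextension A h).obj P).IsSheafCond := by
  intro U ι V hle hcover (s : ∀ i, P.compatibleFamilies (V i)) hs
  have s_eq {i j : ι} (V' : G') (hi : (V' : X.Opens) ≤ V i) (hj : (V' : X.Opens) ≤ V j) :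
      (s i).1 ⟨V', hi⟩ = (s j).1 ⟨V', hj⟩ :=
    congrFun (congrArg Subtype.val (hs i j ⟨V', h V'.2⟩ hi hj)) ⟨V', le_rfl⟩
  have glue (V' : {V' : G' // (V' : X.Opens) ≤ U}) := hP V'
    {p : ι × G' // (p.2 : X.Opens) ≤ V' ∧ (p.2 : X.Opens) ≤ V p.1} (fun p ↦ p.1.2) (fun p ↦ p.2.1)
    (iSup_le_inf_eq hG' (V'.2.trans hcover.ge)) (fun p ↦ (s p.1.1).1 ⟨p.1.2, p.2.2⟩)
    fun p q V'' hp hq ↦ ((s _).2 ⟨p.1.2, p.2.2⟩ ⟨V'', hp.trans p.2.2⟩ hp).trans <|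
      (s_eq V'' (hp.trans p.2.2) (hq.trans q.2.2)).trans
        ((s _).2 ⟨q.1.2, q.2.2⟩ ⟨V'', hq.trans q.2.2⟩ hq).symm
  choose t ht t_unique using glue
  have t_mem : t ∈ P.compatibleFamilies U := fun V' V'' hV ↦ t_unique V'' _ fun p ↦
    (P.res_comp p.2.1 hV _).trans (ht V' ⟨p.1, p.2.1.trans hV, p.2.2⟩)
  refine ⟨(⟨t, t_mem⟩ : P.compatibleFamilies U), fun i ↦ Subtype.ext <| funext fun V' ↦
    (P.res_id _ _).symm.trans (ht ⟨V', V'.2.trans (hle i)⟩ ⟨(i, V'), le_rfl, V'.2⟩),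
    fun (t' : P.compatibleFamilies U) ht' ↦ Subtype.ext <| funext fun V' ↦
      t_unique V' _ fun p ↦ ?_⟩
  exact (t'.2 V' ⟨p.1.2, p.2.1.trans V'.2⟩ p.2.1).trans
    (congrFun (congrArg Subtype.val (ht' p.1.1)) ⟨p.1.2, p.2.2⟩)

end LModData
end SheavesOnBases

section Quasicoherence

variable {X : Scheme.{0}}

/-- The restriction of sections of the structure sheaf, as a homomorphism of rings. -/
def sectionsMap {U V : X.Opens} (h : V ≤ U) : Γ(X, U) →+* Γ(X, V) :=
  (X.presheaf.map (homOfLE h).op).hom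

lemma sectionsMap_comp {U V W : X.Opens} (h : V ≤ U) (h' : W ≤ V) :
    (sectionsMap h').comp (sectionsMap h) = sectionsMap (h'.trans h) :=
  congrArg CommRingCat.Hom.hom (X.presheaf.map_comp (homOfLE h).op (homOfLE h').op).symm

instance {U V W : X.Opens} (h : V ≤ U) (h' : W ≤ V) :
    RingHomCompTriple (sectionsMap h) (sectionsMap h') (sectionsMap (h'.trans h)) :=
  ⟨sectionsMap_comp h h'⟩

lemma flat_sectionsMap {U V : X.Opens} (h : V ≤ U) (hU : IsAffineOpen U) (hV : IsAffineOpen V) :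
    (sectionsMap h).Flat := by
  have := Scheme.Hom.flat_appLE (𝟙 X) hU hV h
  rwa [show (𝟙 X : X ⟶ X).appLE U V h = X.presheaf.map (homOfLE h).op from Category.id_comp _]
    at this

lemma isLocalizationAway_sectionsMap {U V : X.Opens} (h : V ≤ U) (hU : IsAffineOpen U)
    {f : Γ(X, U)} (hV : V = X.basicOpen f) :
    letI := (sectionsMap h).toAlgebra
    IsLocalization.Away f Γ(X, V) :=
  hU.isLocalization_of_eq_basicOpen f (homOfLE h) hV

variable {G : Set X.Opens}

/-- A homomorphism from the structure sheaf of `X` to a presheaf of algebras. Its values are not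
assumed to be central. -/
class AlgData.StructureMap (A : AlgData k X G) where
  str : ∀ U : G, Γ(X, U) →+* A.sec U
  str_res : ∀ {U V : G} (h : (V : X.Opens) ≤ U) (c : Γ(X, U)),
    A.res h (str U c) = str V (sectionsMap h c)

variable {A : AlgData k X G}

/-- A presheaf of algebras as a presheaf of left modules over itself. -/
def LModData.regular (A : AlgData k X G) : LModData k X G A where
  sec := A.sec
  res h := (A.res h).toLinearMap
  res_id := A.res_id
  res_comp := A.res_comp
  lsmul _ a m := a * m
  lsmul_one _ := one_mul
  lsmul_mul _ a b m := (mul_assoc a b m).symm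
  lsmul_add _ := mul_add
  add_lsmul _ := add_mul
  lsmul_k _ := smul_mul_assoc
  lsmul_res h := map_mul (A.res h)

variable [A.StructureMap]

instance {G' : Set X.Opens} (h : G' ⊆ G) : (A.reindex h).StructureMap where
  str U := AlgData.StructureMap.str (A := A) ⟨U, h U.2⟩
  str_res {U V} := AlgData.StructureMap.str_res (A := A) (U := ⟨U, h U.2⟩) (V := ⟨V, h V.2⟩)

namespace LModData

instance moduleSections (M : LModData k X G A) (U : G) : Module Γ(X, U) (M.sec U) :=
  Module.compHom (M.sec U) (AlgData.StructureMap.str (A := A) U)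

/-- The restriction maps of `M`, as maps semilinear over those of the structure sheaf. -/
def resΓ (M : LModData k X G A) {U V : G} (h : (V : X.Opens) ≤ U) :
    M.sec U →ₛₗ[sectionsMap h] M.sec V where
  toFun := M.res h
  map_add' := map_add _
  map_smul' c m := (M.lsmul_res h _ m).trans
    (congrArg (M.lsmul V · (M.res h m)) (AlgData.StructureMap.str_res (A := A) h c))

lemma resΓ_comp (M : LModData k X G A) {U V V' : G} (h : (V : X.Opens) ≤ U)
    (h' : (V' : X.Opens) ≤ V) : (M.resΓ h').comp (M.resΓ h) = M.resΓ (h'.trans h) :=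
  LinearMap.ext fun x ↦ M.res_comp _ _ x

/-- A presheaf of modules on a family of affine opens is quasicoherent if all its restriction maps
are base changes of modules over the structure sheaf. -/
def IsQuasicoherent (M : LModData k X G A) : Prop :=
  ∀ ⦃U V : G⦄ (h : (V : X.Opens) ≤ U), IsBaseChangeAlong (M.resΓ h)

lemma span_basicOpen_le_eq_top {U V : X.Opens} (h : V ≤ U) (hU : IsAffineOpen U)
    (hV : IsAffineOpen V) :
    Ideal.span (sectionsMap h '' {f | X.basicOpen f ≤ V}) = ⊤ := by
  refine hV.iSup_basicOpen_eq_self_iff.1 (le_antisymm ?_ fun x hx ↦ ?_)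
  · exact iSup_le fun f ↦ X.basicOpen_le _
  obtain ⟨f, hfV, hxf⟩ := hU.exists_basicOpen_le ⟨x, hx⟩ (h hx)
  refine Opens.mem_iSup.2 ⟨⟨sectionsMap h f, f, hfV, rfl⟩, ?_⟩
  rw [sectionsMap, Scheme.basicOpen_res]
  exact ⟨hx, hxf⟩

lemma basicOpen_sectionsMap {U V : X.Opens} (h : V ≤ U) {f : Γ(X, U)} (hf : X.basicOpen f ≤ V) :
    X.basicOpen (sectionsMap h f) = X.basicOpen f :=
  (X.basicOpen_res f (homOfLE h).op).trans (inf_eq_right.2 hf)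

lemma isQuasicoherent_of_basicOpen {M : LModData k X G A} (hG : ∀ U ∈ G, IsAffineOpen U)
    (hM : ∀ (U V : G) (h : (V : X.Opens) ≤ U) (f : Γ(X, U)), (V : X.Opens) = X.basicOpen f →
      IsBaseChangeAlong (M.resΓ h))
    (hbasic : ∀ U ∈ G, ∀ f : Γ(X, U), X.basicOpen f ∈ G) :
    M.IsQuasicoherent := by
  intro U V h
  let s := sectionsMap h '' {f | X.basicOpen f ≤ V}
  let D (i : s) : G := ⟨X.basicOpen (i : Γ(X, V)), hbasic V V.2 _⟩
  have D_le (i : s) : (D i : X.Opens) ≤ V := X.basicOpen_le _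
  let moduleD (i : s) : Module Γ(X, D i) (M.sec (D i)) := M.moduleSections (D i)
  refine IsBaseChangeAlong.of_span_eq_top (span_basicOpen_le_eq_top h (hG U U.2) (hG V V.2))
    (T := fun i ↦ Γ(X, D i)) (L := fun i ↦ M.sec (D i)) (σ := fun i ↦ sectionsMap (D_le i))
    (τ := fun i ↦ sectionsMap ((D_le i).trans h)) (h := fun i ↦ M.resΓ (D_le i))
    (fun i ↦ isLocalizationAway_sectionsMap (D_le i) (hG V V.2) rfl)
    (fun i ↦ hM V (D i) (D_le i) i rfl) ?_
  rintro ⟨_, f, hf, rfl⟩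
  rw [resΓ_comp]
  exact hM U _ _ f (basicOpen_sectionsMap h hf)

end LModData
end Quasicoherence

section UniversalProperty

variable {X : Scheme.{0}} {G : Set X.Opens} {A : AlgData k X G}

instance {U V V' : G} (h : (V : X.Opens) ≤ U) (h' : (V' : X.Opens) ≤ V) :
    RingHomCompTriple (A.res h : A.sec U →+* A.sec V) (A.res h' : A.sec V →+* A.sec V')
      (A.res (h'.trans h) : A.sec U →+* A.sec V') :=
  ⟨RingHom.ext (A.res_comp h' h)⟩

namespace LModData

/-- The `A.sec V`-linear map from the extension of scalars of `P.sec U` to `P.sec V` induced by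
restriction. -/
def extendedScalarsTo (P : LModData k X G A) {U V : G} (h : (V : X.Opens) ≤ U) :
    ExtendedScalars (A.res h : A.sec U →+* A.sec V) (P.sec U) →ₗ[A.sec V] P.sec V :=
  ExtendedScalars.lift (RingHom.id (A.sec V)) (P.resₛₗ h)

lemma extendedScalarsTo_of (P : LModData k X G A) {U V : G} (h : (V : X.Opens) ≤ U)
    (x : P.sec U) : P.extendedScalarsTo h (.of _ _ x) = P.res h x :=
  ExtendedScalars.lift_of (P.resₛₗ h) x

variable [A.StructureMap]

/-- The module structure over the sections of `X` on an `A.sec U`-module. -/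
abbrev moduleOfStr (U : G) (J : Type) [AddCommGroup J] [Module (A.sec U) J] : Module Γ(X, U) J :=
  Module.compHom J (AlgData.StructureMap.str (A := A) U)

/-- The canonical map from a module to its extension of scalars along a restriction map of `A`, as
a map semilinear over the restriction map of the structure sheaf. -/
def ofΓ {U V : G} (h : (V : X.Opens) ≤ U) (J : Type) [AddCommGroup J] [Module (A.sec U) J] :
    letI := moduleOfStr (A := A) U J
    letI := moduleOfStr (A := A) V (ExtendedScalars (A.res h : A.sec U →+* A.sec V) J)
    J →ₛₗ[sectionsMap h] ExtendedScalars (A.res h : A.sec U →+* A.sec V) J :=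
  letI := moduleOfStr (A := A) U J
  letI := moduleOfStr (A := A) V (ExtendedScalars (A.res h : A.sec U →+* A.sec V) J)
  { ExtendedScalars.of (A.res h : A.sec U →+* A.sec V) J with
    map_smul' c x := ((ExtendedScalars.of _ _).map_smulₛₗ _ x).trans
      (congrArg (· • _) (AlgData.StructureMap.str_res h c)) }

lemma isBaseChangeAlong_ofΓ (hA : (regular A).IsQuasicoherent) {U V : G}
    (h : (V : X.Opens) ≤ U) (J : Type) [AddCommGroup J] [Module (A.sec U) J] :
    letI := moduleOfStr (A := A) U J
    letI := moduleOfStr (A := A) V (ExtendedScalars (A.res h : A.sec U →+* A.sec V) J)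
    IsBaseChangeAlong (ofΓ h J) := by
  let := moduleOfStr (A := A) U J
  let := moduleOfStr (A := A) V (ExtendedScalars (A.res h : A.sec U →+* A.sec V) J)
  let := moduleOfStr (A := A) U (A.sec U)
  let := moduleOfStr (A := A) V (A.sec V)
  have : IsScalarTower Γ(X, V) (A.sec V) (A.sec V) := ⟨fun _ _ _ ↦ mul_assoc _ _ _⟩
  have : IsScalarTower Γ(X, V) (A.sec V)
    (ExtendedScalars (A.res h : A.sec U →+* A.sec V) J) := ⟨fun _ _ _ ↦ mul_smul _ _ _⟩
  have : IsScalarTower Γ(X, U) (A.sec U) J := ⟨fun _ _ _ ↦ mul_smul _ _ _⟩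
  let resA : A.sec U →ₛₗ[sectionsMap h] A.sec V := (regular A).resΓ h
  exact ExtendedScalars.isBaseChangeAlong_of (φ := (A.res h : A.sec U →+* A.sec V))
    (φ' := resA) (hA h) (fun _ ↦ rfl) (g := ofΓ h J) fun _ ↦ rfl

variable {P : LModData k X G A}

lemma IsQuasicoherent.bijective_extendedScalarsTo (hP : P.IsQuasicoherent)
    (hA : (regular A).IsQuasicoherent) {U V : G} (h : (V : X.Opens) ≤ U) :
    Function.Bijective (P.extendedScalarsTo h) := by
  let := moduleOfStr (A := A) V (ExtendedScalars (A.res h : A.sec U →+* A.sec V) (P.sec U))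
  let e : ExtendedScalars (A.res h : A.sec U →+* A.sec V) (P.sec U) →ₗ[Γ(X, V)] P.sec V :=
    { P.extendedScalarsTo h with map_smul' _ := (P.extendedScalarsTo h).map_smul _ }
  exact (isBaseChangeAlong_ofΓ hA h (P.sec U)).bijective_of_comp_eq (hP h) e
    (P.extendedScalarsTo_of h)

variable {N : Type} [AddCommGroup N]

lemma IsQuasicoherent.hom_ext (hP : P.IsQuasicoherent) (hA : (regular A).IsQuasicoherent)
    {U V : G} (h : (V : X.Opens) ≤ U) {B : Type} [Ring B] [Module B N] {ψ : A.sec V →+* B}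
    {f g : P.sec V →ₛₗ[ψ] N} (hfg : ∀ x, f (P.res h x) = g (P.res h x)) : f = g := by
  have comp_eq : (f.comp (P.extendedScalarsTo h) : _ →ₛₗ[ψ] N) = g.comp (P.extendedScalarsTo h) :=
    ExtendedScalars.hom_ext fun x ↦
      (congrArg f (P.extendedScalarsTo_of h x)).trans
        ((hfg x).trans (congrArg g (P.extendedScalarsTo_of h x).symm))
  refine LinearMap.ext fun y ↦ ?_
  obtain ⟨x, rfl⟩ := (hP.bijective_extendedScalarsTo hA h).2 y
  exact LinearMap.congr_fun comp_eq x

lemma IsQuasicoherent.exists_linearMap (hP : P.IsQuasicoherent)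
    (hA : (regular A).IsQuasicoherent) {U V : G} (h : (V : X.Opens) ≤ U) [Module (A.sec V) N]
    (f : P.sec U →ₛₗ[(A.res h : A.sec U →+* A.sec V)] N) :
    ∃ f' : P.sec V →ₗ[A.sec V] N, ∀ x, f' (P.res h x) = f x := by
  let e := LinearEquiv.ofBijective (P.extendedScalarsTo h) (hP.bijective_extendedScalarsTo hA h)
  let f' : ExtendedScalars (A.res h : A.sec U →+* A.sec V) (P.sec U) →ₗ[A.sec V] N :=
    ExtendedScalars.lift (RingHom.id (A.sec V)) f
  refine ⟨f' ∘ₗ e.symm, fun x ↦ ?_⟩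
  change f' (e.symm (P.res h x)) = f x
  rw [← P.extendedScalarsTo_of h x]
  exact (congrArg f' (e.symm_apply_apply _)).trans (ExtendedScalars.lift_of f x)

end LModData
end UniversalProperty

section FullyFaithfulness

variable {X : Scheme.{0}} {G G' : Set X.Opens} {A : AlgData k X G}
  [A.StructureMap]

namespace LModData

variable {P N : LModData k X G A} (h : G' ⊆ G)

lemma IsQuasicoherent.exists_extend_hom (hP : P.IsQuasicoherent) (hA : (regular A).IsQuasicoherent)
    (hinf : ∀ U ∈ G', ∀ V ∈ G', U ⊓ V ∈ G')
    (f : (restriction A h).obj P ⟶ (restriction A h).obj N) {V : G} {U : X.Opens} (hU : U ∈ G')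
    (hVU : V ≤ U) :
    ∃ φ : P.sec V →ₗ[A.sec V] N.sec V, ∀ (U' : G') (hV : (V : X.Opens) ≤ U')
      (x : P.sec ⟨U', h U'.2⟩), φ (P.res hV x) = N.res hV (LModHom.app f U' x) := by
  let f' (U : G') : P.sec ⟨U, h U.2⟩ →ₗ[A.sec ⟨U, h U.2⟩] N.sec ⟨U, h U.2⟩ := LModHom.appₗ f U
  obtain ⟨φ, hφ⟩ := hP.exists_linearMap hA (U := ⟨U, h hU⟩) hVU
    ((N.resₛₗ (U := ⟨U, h hU⟩) hVU).comp (f' ⟨U, hU⟩))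
  refine ⟨φ, fun U' hV x ↦ ?_⟩
  let U₁ : G' := ⟨U' ⊓ U, hinf _ U'.2 _ hU⟩
  let UG : G := ⟨U, h hU⟩
  let UG' : G := ⟨U', h U'.2⟩
  let UG₁ : G := ⟨U₁, h U₁.2⟩
  have hV₁ : (V : X.Opens) ≤ UG₁ := le_inf hV hVU
  have le_left : (UG₁ : X.Opens) ≤ UG' := inf_le_left
  have le_right : (UG₁ : X.Opens) ≤ UG := inf_le_right
  have eq_on_inf : φ.comp (P.resₛₗ hV₁) = (N.resₛₗ hV₁).comp (f' U₁) := by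
    refine hP.hom_ext hA le_right fun z ↦ ?_
    calc
      φ (P.res hV₁ (P.res le_right z)) = φ (P.res (U := UG) hVU z) :=
        congrArg φ (P.res_comp (U := UG) (V := UG₁) hV₁ le_right z)
      _ = N.res (U := UG) hVU (f' ⟨U, hU⟩ z) := hφ z
      _ = N.res hV₁ (N.res le_right (f' ⟨U, hU⟩ z)) :=
        (N.res_comp (U := UG) (V := UG₁) hV₁ le_right _).symm
      _ = N.res hV₁ (f' U₁ (P.res le_right z)) := congrArg (N.res hV₁)
        (LModHom.comm_res f (U := ⟨U, hU⟩) (V := U₁) inf_le_right z).symm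
  calc
    φ (P.res hV x) = φ (P.res hV₁ (P.res le_left x)) :=
      congrArg φ (P.res_comp (U := UG') (V := UG₁) hV₁ le_left x).symm
    _ = N.res hV₁ (f' U₁ (P.res le_left x)) := LinearMap.congr_fun eq_on_inf _
    _ = N.res hV₁ (N.res le_left (f' U' x)) := congrArg (N.res hV₁)
      (LModHom.comm_res f (U := U') (V := U₁) inf_le_left x)
    _ = N.res hV (f' U' x) := N.res_comp (U := UG') (V := UG₁) hV₁ le_left _

lemma IsQuasicoherent.bijective_restriction_map (hP : P.IsQuasicoherent)
    (hA : (regular A).IsQuasicoherent) (hinf : ∀ U ∈ G', ∀ V ∈ G', U ⊓ V ∈ G')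
    (hle : ∀ V ∈ G, ∃ U ∈ G', V ≤ U) :
    Function.Bijective ((restriction A h).map : (P ⟶ N) → _) := by
  choose U hU hVU using fun V : G ↦ hle V V.2
  refine ⟨fun f g hfg ↦ LModHom.ext fun V ↦ LinearMap.congr_fun (f := LModHom.appₗ f V)
    (g := LModHom.appₗ g V) (hP.hom_ext hA (U := ⟨U V, h (hU V)⟩) (hVU V) fun x ↦ ?_), fun f ↦ ?_⟩
  · have := congr(LModHom.app $hfg ⟨U V, hU V⟩ x)
    exact (LModHom.comm_res f _ x).trans ((congrArg _ this).trans (LModHom.comm_res g _ x).symm)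
  choose φ hφ using fun V : G ↦ hP.exists_extend_hom h hA hinf f (hU V) (hVU V)
  refine ⟨LModHom.ofLinear φ fun {V V'} hV' ↦ ?_, LModHom.ext fun V x ↦ ?_⟩
  · refine LinearMap.congr_fun (f := (φ V').comp (P.resₛₗ hV')) (g := (N.resₛₗ hV').comp (φ V))
      (hP.hom_ext hA (U := ⟨U V, h (hU V)⟩) (hVU V) fun x ↦ ?_)
    calc
      φ V' (P.res hV' (P.res _ x)) = φ V' (P.res (U := ⟨U V, h (hU V)⟩) (hV'.trans (hVU V)) x) :=
        congrArg _ (P.res_comp hV' _ x)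
      _ = N.res _ (LModHom.app f ⟨U V, hU V⟩ x) := hφ V' ⟨U V, hU V⟩ _ x
      _ = N.res hV' (N.res (U := ⟨U V, h (hU V)⟩) _ (LModHom.app f ⟨U V, hU V⟩ x)) :=
        (N.res_comp hV' _ _).symm
      _ = N.res hV' (φ V (P.res _ x)) := congrArg _ (hφ V ⟨U V, hU V⟩ _ x).symm
  · have := hφ ⟨V, h V.2⟩ V le_rfl x
    exact (congrArg _ (P.res_id _ x).symm).trans (this.trans (N.res_id _ _))

end LModData
end FullyFaithfulness

section AssociatedPresheaf

namespace ExtendedScalars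

variable {B B' : Type} [Ring B] [Ring B'] (φ : B →+* B') {J J' : Type} [AddCommGroup J]
  [Module B J] [AddCommGroup J'] [Module B J'] (f : J →ₗ[B] J')

/-- The map induced on extensions of scalars by a linear map. -/
def map : ExtendedScalars φ J →ₗ[B'] ExtendedScalars φ J' :=
  lift (RingHom.id B') ((of φ J').comp f)

lemma map_of (j : J) : map φ f (of φ J j) = of φ J' (f j) :=
  lift_of _ j

end ExtendedScalars

variable {X : Scheme.{0}} {G : Set X.Opens} {A : AlgData k X G}

namespace LModData

variable {U : G} (hU : ∀ V : G, (V : X.Opens) ≤ U)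

section Res

variable (J : Type) [AddCommGroup J] [Module (A.sec U) J]

/-- The canonical map between the extensions of scalars of a module along `A.sec U → A.sec V` and
along `A.sec U → A.sec V'`, for `V' ≤ V ≤ U`. -/
def extendedScalarsRes {V V' : G} (h : (V' : X.Opens) ≤ V) :
    ExtendedScalars (A.res (hU V) : A.sec U →+* A.sec V) J →ₛₗ[(A.res h : A.sec V →+* A.sec V')]
      ExtendedScalars (A.res (hU V') : A.sec U →+* A.sec V') J :=
  ExtendedScalars.lift _ (ExtendedScalars.of (A.res (hU V') : A.sec U →+* A.sec V') J)

lemma extendedScalarsRes_of {V V' : G} (h : (V' : X.Opens) ≤ V) (j : J) :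
    extendedScalarsRes (A := A) hU J h (.of _ J j) = .of _ J j :=
  ExtendedScalars.lift_of _ j

lemma extendedScalarsRes_id (V : G)
    (x : ExtendedScalars (A.res (hU V) : A.sec U →+* A.sec V) J) :
    extendedScalarsRes hU J le_rfl x = x := by
  induction x using ExtendedScalars.induction_on with
  | smul_of a j => rw [map_smulₛₗ, extendedScalarsRes_of, RingHom.coe_coe, A.res_id]
  | add x y hx hy => rw [map_add, hx, hy]

lemma extendedScalarsRes_comp {V V' V'' : G} (h' : (V'' : X.Opens) ≤ V')
    (h : (V' : X.Opens) ≤ V) (x : ExtendedScalars (A.res (hU V) : A.sec U →+* A.sec V) J) :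
    extendedScalarsRes hU J h' (extendedScalarsRes hU J h x) =
      extendedScalarsRes hU J (h'.trans h) x :=
  LinearMap.congr_fun (f := ((extendedScalarsRes hU J h').comp (extendedScalarsRes hU J h)))
    (ExtendedScalars.hom_ext fun j ↦ (congrArg _ (extendedScalarsRes_of hU J h j)).trans
      ((extendedScalarsRes_of hU J h' j).trans (extendedScalarsRes_of hU J _ j).symm)) x

end Res

variable (A) in
/-- If the family `G` has a largest member `U`, an `A.sec U`-module `J` has an associated presheaf
`V ↦ A.sec V ⊗ J`. -/
def associated : ModuleCat.{0} (A.sec U) ⥤ LModData k X G A where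
  obj J := ofSemilinear (fun V ↦ ExtendedScalars (A.res (hU V) : A.sec U →+* A.sec V) J)
    (extendedScalarsRes hU J) (extendedScalarsRes_id hU J) (extendedScalarsRes_comp hU J)
  map {J J'} f := LModHom.ofLinear (fun V ↦ ExtendedScalars.map _ f.hom) fun {V V'} h ↦
    LinearMap.congr_fun (f := (ExtendedScalars.map _ f.hom).comp (extendedScalarsRes hU J h))
      (g := (extendedScalarsRes hU J' h).comp (ExtendedScalars.map _ f.hom))
      (ExtendedScalars.hom_ext fun j ↦ by simp [extendedScalarsRes_of, ExtendedScalars.map_of])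
  map_id J := LModHom.ext fun V ↦ LinearMap.congr_fun (f := ExtendedScalars.map _ LinearMap.id)
    (g := LinearMap.id) (ExtendedScalars.hom_ext (ExtendedScalars.map_of _ _))
  map_comp {J J' J''} f g := LModHom.ext fun V ↦
    LinearMap.congr_fun (f := ExtendedScalars.map _ (g.hom.comp f.hom))
      (g := (ExtendedScalars.map _ g.hom).comp (ExtendedScalars.map _ f.hom))
      (ExtendedScalars.hom_ext fun j ↦ by simp [ExtendedScalars.map_of])

/-- The canonical map from a module to the sections of its associated presheaf over the largest
open. -/
def toAssociated (J : ModuleCat.{0} (A.sec U)) :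
    J →ₗ[A.sec U] ((associated A hU).obj J).sec U where
  __ := ExtendedScalars.of (A.res (hU U) : A.sec U →+* A.sec U) J
  map_smul' a j := ((ExtendedScalars.of _ J).map_smulₛₗ a j).trans
    (congrArg (· • ExtendedScalars.of _ J j) (A.res_id U a))

lemma bijective_toAssociated (J : ModuleCat.{0} (A.sec U)) :
    Function.Bijective (toAssociated hU J) := by
  let idJ : J →ₛₗ[(A.res (hU U) : A.sec U →+* A.sec U)] J :=
    { AddMonoidHom.id J with map_smul' a j := congrArg (· • j) (A.res_id U a).symm }
  refine ⟨Function.LeftInverse.injective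
    (g := ExtendedScalars.lift (RingHom.id (A.sec U)) idJ) (ExtendedScalars.lift_of idJ),
    fun x ↦ ?_⟩
  induction x using ExtendedScalars.induction_on with
  | smul_of a j => exact ⟨a • j, (toAssociated hU J).map_smul a j⟩
  | add x y hx hy =>
    obtain ⟨⟨x, rfl⟩, ⟨y, rfl⟩⟩ := And.intro hx hy
    exact ⟨x + y, map_add (toAssociated hU J) x y⟩

/-- The canonical morphism to `M` from the presheaf associated with its module of sections over the
largest open. -/
def fromAssociated (M : LModData k X G A) :
    (associated A hU).obj ((evaluation A U).obj M) ⟶ M :=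
  LModHom.ofLinear (M := (associated A hU).obj ((evaluation A U).obj M))
    (fun V ↦ M.extendedScalarsTo (hU V)) fun {V V'} h ↦ LinearMap.congr_fun
      (f := (M.extendedScalarsTo (hU V')).comp (extendedScalarsRes hU (M.sec U) h))
      (g := (M.resₛₗ h).comp (M.extendedScalarsTo (hU V)))
      (ExtendedScalars.hom_ext fun j ↦ (congrArg _ (extendedScalarsRes_of hU _ h j)).trans
        ((M.extendedScalarsTo_of (hU V') j).trans ((M.res_comp h (hU V) j).symm.trans
          (congrArg (M.res h) (M.extendedScalarsTo_of (hU V) j).symm))))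

variable (A) in
/-- The associated presheaf functor is left adjoint to taking sections over the largest open. -/
def associatedAdjunction : associated A hU ⊣ evaluation A U where
  unit :=
    { app J := ModuleCat.ofHom (toAssociated hU J)
      naturality _ _ f := ModuleCat.hom_ext <| LinearMap.ext fun j ↦
        (ExtendedScalars.map_of (A.res (hU U) : A.sec U →+* A.sec U) f.hom j).symm }
  counit :=
    { app M := fromAssociated hU M
      naturality M M' f := LModHom.ext fun V ↦ LinearMap.congr_fun
        (f := (M'.extendedScalarsTo (hU V)).comp (ExtendedScalars.map _ (LModHom.appₗ f U)))
        (g := (LModHom.appₗ f V).comp (M.extendedScalarsTo (hU V)))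
        (ExtendedScalars.hom_ext fun j ↦ (congrArg _ (ExtendedScalars.map_of _ _ j)).trans
          ((M'.extendedScalarsTo_of (hU V) _).trans ((LModHom.comm_res f (hU V) j).symm.trans
            (congrArg (LModHom.app f V) (M.extendedScalarsTo_of (hU V) j).symm)))) }
  left_triangle_components J := LModHom.ext fun V ↦ LinearMap.congr_fun
    (f := (((associated A hU).obj J).extendedScalarsTo (hU V)).comp
      (ExtendedScalars.map (A.res (hU V) : A.sec U →+* A.sec V) (toAssociated hU J)))
    (g := LinearMap.id (M := ExtendedScalars (A.res (hU V) : A.sec U →+* A.sec V) J))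
    (ExtendedScalars.hom_ext fun j ↦ (congrArg _ (ExtendedScalars.map_of _ _ j)).trans
      ((extendedScalarsTo_of _ (hU V) _).trans (extendedScalarsRes_of hU J (hU V) j)))
  right_triangle_components M := ModuleCat.hom_ext <| LinearMap.ext fun x ↦
    (M.extendedScalarsTo_of (hU U) x).trans (M.res_id U x)

end LModData
end AssociatedPresheaf

section Acyclicity

open Abelian

variable {X : Scheme.{0}} {G : Set X.Opens} {A : AlgData k X G}
  [A.StructureMap]

namespace LModData

section Associated

variable {U : G} (hU : ∀ V : G, (V : X.Opens) ≤ U)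

lemma isIso_fromAssociated {P : LModData k X G A} (hP : P.IsQuasicoherent)
    (hA : (regular A).IsQuasicoherent) : IsIso (fromAssociated hU P) :=
  (isIso_iff _).2 fun V ↦ hP.bijective_extendedScalarsTo hA (hU V)

lemma injective_extendedScalarsMap (hG : ∀ V ∈ G, IsAffineOpen V)
    (hA : (regular A).IsQuasicoherent) {U V : G} (h : (V : X.Opens) ≤ U) {J J' : Type}
    [AddCommGroup J] [AddCommGroup J'] [Module (A.sec U) J] [Module (A.sec U) J']
    {f : J →ₗ[A.sec U] J'} (hf : Function.Injective f) :
    Function.Injective (ExtendedScalars.map (A.res h : A.sec U →+* A.sec V) f) := by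
  let (J : Type) [AddCommGroup J] [Module (A.sec U) J] := moduleOfStr (A := A) U J
  let (J : Type) [AddCommGroup J] [Module (A.sec U) J] :=
    moduleOfStr (A := A) V (ExtendedScalars (A.res h : A.sec U →+* A.sec V) J)
  let fΓ : J →ₗ[Γ(X, U)] J' := { f with map_smul' _ := f.map_smul _ }
  let fΓ' : ExtendedScalars (A.res h : A.sec U →+* A.sec V) J →ₗ[Γ(X, V)]
      ExtendedScalars (A.res h : A.sec U →+* A.sec V) J' :=
    { ExtendedScalars.map _ f with map_smul' _ := (ExtendedScalars.map _ f).map_smul _ }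
  exact (isBaseChangeAlong_ofΓ hA h J).injective_of_flat (a := fΓ) (a' := fΓ')
    (flat_sectionsMap h (hG U U.2) (hG V V.2)) (isBaseChangeAlong_ofΓ hA h J')
    (fun j ↦ (ExtendedScalars.map_of _ f j).symm) hf

lemma preservesMonomorphisms_associated (hG : ∀ V ∈ G, IsAffineOpen V)
    (hA : (regular A).IsQuasicoherent) : (associated A hU).PreservesMonomorphisms where
  preserves f _ := (mono_iff _).2 fun V ↦ injective_extendedScalarsMap hG hA (hU V)
    ((ModuleCat.mono_iff_injective f).1 inferInstance)

lemma ext_associated_eq_zero (hG : ∀ V ∈ G, IsAffineOpen V) (hA : (regular A).IsQuasicoherent)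
    {P : LModData k X G A} (hP : P.IsQuasicoherent) (J : ModuleCat.{0} (A.sec U))
    (hJ : Injective J) {n : ℕ} (e : Ext.{0} P ((associated A hU).obj J) (n + 1)) : e = 0 := by
  have := preservesMonomorphisms_associated hU hG hA
  have := isIso_fromAssociated hU hP hA
  have : Injective ((evaluation A U).obj ((associated A hU).obj J)) :=
    Injective.of_iso (LinearEquiv.ofBijective _ (bijective_toAssociated hU J)).toModuleIso hJ
  have ext_associated : (Ext.mk₀ (fromAssociated hU P)).comp e (zero_add _) = 0 :=
    (forall_ext_eq_zero_iff_of_adjunction (associatedAdjunction A hU)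
      (fun S hS ↦ hS.map_of_exact (evaluation A U)) _ _ n).2 (fun e ↦ e.eq_zero_of_injective) _
  rw [← Ext.mk₀_id_comp e, ← IsIso.inv_hom_id (fromAssociated hU P), ← Ext.mk₀_comp_mk₀_assoc,
    ext_associated, Ext.comp_zero]

end Associated
end LModData
end Acyclicity

section Coinduced

open Abelian

variable {X : Scheme.{0}} {G : Set X.Opens} {A : AlgData k X G}
  [A.StructureMap]

namespace LModData

lemma IsQuasicoherent.restriction {P : LModData k X G A} (hP : P.IsQuasicoherent)
    {G' : Set X.Opens} (h : G' ⊆ G) : ((restriction A h).obj P).IsQuasicoherent :=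
  fun _ _ h ↦ hP h

lemma IsQuasicoherent.regular_reindex (hA : (regular A).IsQuasicoherent) {G' : Set X.Opens}
    (h : G' ⊆ G) : (regular (A.reindex h)).IsQuasicoherent :=
  fun _ _ h ↦ hA h

lemma isQuasicoherent_associated {U : G} (hU : ∀ V : G, (V : X.Opens) ≤ U)
    (hA : (regular A).IsQuasicoherent) (J : ModuleCat.{0} (A.sec U)) :
    ((associated A hU).obj J).IsQuasicoherent := by
  intro V V' h
  let := moduleOfStr (A := A) U J
  let (V : G) := moduleOfStr (A := A) V (ExtendedScalars (A.res (hU V) : A.sec U →+* A.sec V) J)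
  let res : ExtendedScalars (A.res (hU V) : A.sec U →+* A.sec V) J →ₛₗ[sectionsMap h]
      ExtendedScalars (A.res (hU V') : A.sec U →+* A.sec V') J :=
    ((associated A hU).obj J).resΓ h
  have res_comp_ofΓ : res.comp (ofΓ (hU V) J) = ofΓ (hU V') J :=
    LinearMap.ext fun j ↦ extendedScalarsRes_of hU J h j
  exact (isBaseChangeAlong_ofΓ hA (hU V) J).comp_iff.1
    (res_comp_ofΓ ▸ isBaseChangeAlong_ofΓ hA (hU V') J)

section DirectImage

variable {U : X.Opens} (hU : ∀ V ∈ G, V ⊓ U ∈ G)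

lemma directImage_smul {P : LModData k X (G ∩ Set.Iic U) (A.reindex Set.inter_subset_left)}
    {V : G} (c : Γ(X, V)) (x : ((directImage A hU).obj P).sec V) :
    c • x = (sectionsMap (V := (infOpen hU V : X.Opens)) inf_le_left c •
      (show P.sec (infOpen hU V) from x) : P.sec (infOpen hU V)) :=
  congrArg (P.lsmul (infOpen hU V) · x)
    (AlgData.StructureMap.str_res (A := A) (U := V) (V := ⟨_, hU V V.2⟩) inf_le_left c)

lemma IsQuasicoherent.directImage (hG : ∀ V ∈ G, IsAffineOpen V)
    (hbasic : ∀ V ∈ G, ∀ f : Γ(X, V), X.basicOpen f ∈ G)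
    {P : LModData k X (G ∩ Set.Iic U) (A.reindex Set.inter_subset_left)} (hP : P.IsQuasicoherent) :
    ((directImage A hU).obj P).IsQuasicoherent := by
  refine isQuasicoherent_of_basicOpen hG (fun V V' h f hV' ↦ ?_) hbasic
  let V₁ := infOpen hU V
  let V₁' := infOpen hU V'
  have hV₁ : (V₁ : X.Opens) ≤ V := inf_le_left
  have hV₁' : (V₁' : X.Opens) ≤ V' := inf_le_left
  have h₁ : (V₁' : X.Opens) ≤ V₁ := inf_le_inf_right U h
  have V₁'_eq : (V₁' : X.Opens) = X.basicOpen (sectionsMap hV₁ f) := by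
    change (V' : X.Opens) ⊓ U = _
    rw [hV', sectionsMap, Scheme.basicOpen_res]
    exact le_antisymm (le_inf (inf_le_inf_right U (X.basicOpen_le f)) inf_le_left)
      (le_inf inf_le_right (inf_le_left.trans inf_le_right))
  have res_f : sectionsMap hV₁' (sectionsMap h f) = sectionsMap h₁ (sectionsMap hV₁ f) :=
    RingHom.congr_fun ((sectionsMap_comp h hV₁').trans (sectionsMap_comp hV₁ h₁).symm) f
  have isLocalization_sec := (IsBaseChangeAlong.iff_of_isLocalizationAway (sectionsMap hV₁ f)
    (isLocalizationAway_sectionsMap h₁ (hG _ (hU V V.2)) V₁'_eq)).1 (hP h₁)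
  refine (IsBaseChangeAlong.iff_of_isLocalizationAway f
    (isLocalizationAway_sectionsMap h (hG V V.2) hV')).2 ⟨fun y ↦ ?_, fun x hx ↦ ?_⟩
  · obtain ⟨n, x, hx⟩ := isLocalization_sec.1 y
    refine ⟨n, x, (directImage_smul hU _ y).trans (Eq.trans (congrArg (· • _) ?_) hx)⟩
    exact (map_pow (sectionsMap hV₁') _ n).trans (congrArg (· ^ n) res_f)
  · obtain ⟨n, hn⟩ := isLocalization_sec.2 x hx
    exact ⟨n, (directImage_smul hU _ x).trans ((congrArg (· • _) (map_pow _ _ _)).trans hn)⟩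

/-- The largest member of the family of members of `G` contained in `U`. -/
def topOpen (hUG : U ∈ G) : (G ∩ Set.Iic U : Set _) := ⟨U, hUG, Set.mem_Iic.2 le_rfl⟩

lemma le_topOpen (hUG : U ∈ G) (V : (G ∩ Set.Iic U : Set _)) : (V : X.Opens) ≤ topOpen hUG :=
  V.2.2

variable (A) in
/-- The direct image, to the family `G`, of the presheaf associated with a module `J` over
`A.sec U`. -/
def coinduced (hUG : U ∈ G) (J : ModuleCat.{0} (A.sec ⟨U, hUG⟩)) : LModData k X G A :=
  (directImage A hU).obj
    ((associated (A.reindex Set.inter_subset_left) (U := topOpen hUG) (le_topOpen hUG)).obj J)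

variable (hUG : U ∈ G) (J : ModuleCat.{0} (A.sec ⟨U, hUG⟩))

lemma isQuasicoherent_coinduced (hG : ∀ V ∈ G, IsAffineOpen V)
    (hbasic : ∀ V ∈ G, ∀ f : Γ(X, V), X.basicOpen f ∈ G) (hA : (regular A).IsQuasicoherent) :
    (coinduced A hU hUG J).IsQuasicoherent :=
  IsQuasicoherent.directImage hU hG hbasic (isQuasicoherent_associated
    (A := A.reindex Set.inter_subset_left) (U := topOpen hUG) (le_topOpen hUG)
      (hA.regular_reindex _) J)

lemma ext_coinduced_eq_zero (hG : ∀ V ∈ G, IsAffineOpen V) (hA : (regular A).IsQuasicoherent)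
    {P : LModData k X G A} (hP : P.IsQuasicoherent) (hJ : Injective J) {n : ℕ}
    (e : Ext.{0} P (coinduced A hU hUG J) (n + 1)) : e = 0 :=
  (forall_ext_restriction_eq_zero_iff hU P _ n).1 (fun e ↦ ext_associated_eq_zero
    (A := A.reindex Set.inter_subset_left) (U := topOpen hUG) (le_topOpen hUG)
      (fun V hV ↦ hG V hV.1) (hA.regular_reindex _) (hP.restriction _) J hJ e) e

end DirectImage
end LModData
end Coinduced

section QuasicoherentClosure

open Limits

attribute [local instance] Abelian.hasFiniteBiproducts

variable {X : Scheme.{0}} {G : Set X.Opens} {A : AlgData k X G}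

namespace LModData

lemma add_app {M N : LModData k X G A} (f g : M ⟶ N) (U : G) (x : M.sec U) :
    LModHom.app (f + g) U x = LModHom.app f U x + LModHom.app g U x :=
  congr($((evaluation A U).map_add (f := f) (g := g)) x)

lemma sum_app {M N : LModData k X G A} {ι : Type} [Fintype ι] (f : ι → (M ⟶ N)) (U : G)
    (x : M.sec U) : LModHom.app (∑ i, f i : M ⟶ N) U x = ∑ i, LModHom.app (f i) U x := by
  induction (Finset.univ : Finset ι) using Finset.cons_induction with
  | empty => exact zero_app U x
  | cons i s hi ih => rw [Finset.sum_cons, Finset.sum_cons, add_app, ih]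

lemma bijective_pi_biproduct_π {J : Type} [Finite J] (N : J → LModData k X G A) (U : G) :
    Function.Bijective fun x j ↦ LModHom.app (biproduct.π N j) U x := by
  classical
  have := Fintype.ofFinite J
  have total (x : (⨁ N).sec U) :
      ∑ j, LModHom.app (biproduct.ι N j) U (LModHom.app (biproduct.π N j) U x) = x :=
    (sum_app (fun j ↦ biproduct.π N j ≫ biproduct.ι N j) U x).symm.trans
      (congrArg (fun f : (⨁ N) ⟶ ⨁ N ↦ LModHom.app f U x) biproduct.total)
  refine ⟨fun x y h ↦ ?_, fun y ↦ ⟨∑ j, LModHom.app (biproduct.ι N j) U (y j), funext fun j ↦ ?_⟩⟩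
  · rw [← total x, ← total y]
    exact Finset.sum_congr rfl fun j _ ↦ congrArg (LModHom.app (biproduct.ι N j) U) (congr_fun h j)
  · refine (map_sum _ _ _).trans ((Finset.sum_eq_single j (fun i _ hij ↦ ?_) (by simp)).trans ?_)
    · exact (congrArg (fun f : N i ⟶ N j ↦ LModHom.app f U (y i)) (biproduct.ι_π_ne N hij)).trans
        (zero_app U _)
    · exact congrArg (fun f : N j ⟶ N j ↦ LModHom.app f U (y j)) (biproduct.ι_π_self N j)

section Restriction

variable {G' : Set X.Opens} (h : G' ⊆ G)

instance : (restriction A h).Additive where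
  map_add := LModHom.ext fun _ _ ↦ (add_app _ _ _ _).trans (add_app _ _ _ _).symm

lemma restriction_shortExact (S : ShortComplex (LModData k X G A)) (hS : S.ShortExact) :
    (S.map (restriction A h)).ShortExact :=
  (shortExact_iff _).2 fun U ↦ (shortExact_iff S).1 hS ⟨U, h U.2⟩

instance : PreservesFiniteLimits (restriction A h) :=
  have preservesLimits_and_colimits :
      PreservesFiniteLimits (restriction A h) ∧ PreservesFiniteColimits (restriction A h) :=
    ((restriction A h).exact_tfae.out 0 3).1 (restriction_shortExact h)
  preservesLimits_and_colimits.1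

end Restriction

variable [A.StructureMap]

/-- The restriction of a morphism to the sections over `U`, as a map linear over the functions. -/
def appΓ {M N : LModData k X G A} (f : M ⟶ N) (U : G) : M.sec U →ₗ[Γ(X, U)] N.sec U :=
  { LModHom.appₗ f U with map_smul' _ := (LModHom.appₗ f U).map_smul _ }

variable (A) in
/-- The property of being quasicoherent. -/
abbrev quasicoherent : ObjectProperty (LModData k X G A) := IsQuasicoherent

lemma IsQuasicoherent.of_left_exact (hG : ∀ U ∈ G, IsAffineOpen U)
    {S : ShortComplex (LModData k X G A)} (hS : S.Exact) [Mono S.f] (h₂ : S.X₂.IsQuasicoherent)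
    (h₃ : S.X₃.IsQuasicoherent) : S.X₁.IsQuasicoherent := fun U V h ↦
  IsBaseChangeAlong.of_left_exact (a := appΓ S.f U) (b := appΓ S.g U) (a' := appΓ S.f V)
    (b' := appΓ S.g V) (flat_sectionsMap h (hG U U.2) (hG V V.2)) (h₂ h) (h₃ h)
    (fun x ↦ (LModHom.comm_res S.f h x).symm) (fun x ↦ (LModHom.comm_res S.g h x).symm)
    ((exact_iff S).1 hS U) ((mono_iff S.f).1 inferInstance U)
    ((exact_iff S).1 hS V) ((mono_iff S.f).1 inferInstance V)

lemma IsQuasicoherent.of_right_exact {S : ShortComplex (LModData k X G A)} (hS : S.Exact)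
    [Epi S.g] (h₁ : S.X₁.IsQuasicoherent) (h₂ : S.X₂.IsQuasicoherent) :
    S.X₃.IsQuasicoherent := fun U V h ↦
  IsBaseChangeAlong.of_right_exact (a := appΓ S.f U) (b := appΓ S.g U) (a' := appΓ S.f V)
    (b' := appΓ S.g V) (h₁ h) (h₂ h)
    (fun x ↦ (LModHom.comm_res S.f h x).symm) (fun x ↦ (LModHom.comm_res S.g h x).symm)
    ((exact_iff S).1 hS U) ((epi_iff S.g).1 inferInstance U)
    ((exact_iff S).1 hS V) ((epi_iff S.g).1 inferInstance V)

lemma isClosedUnderKernels_quasicoherent (hG : ∀ U ∈ G, IsAffineOpen U) :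
    (quasicoherent A).IsClosedUnderKernels where
  kernels_le := by
    rintro _ ⟨f, c, hc, hX, hY⟩
    let S : ShortComplex (LModData k X G A) := .mk c.ι f c.condition
    have : Mono S.f := Fork.IsLimit.mono hc
    exact IsQuasicoherent.of_left_exact hG (S := S) (S.exact_of_f_is_kernel
      (hc.ofIsoLimit (Fork.ext (Iso.refl _) (Category.id_comp _).symm))) hX hY

lemma IsQuasicoherent.of_bijective_pi {J : Type} [Finite J] {M : LModData k X G A}
    {N : J → LModData k X G A} (hN : ∀ j, (N j).IsQuasicoherent) (π : ∀ j, M ⟶ N j)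
    (hπ : ∀ U, Function.Bijective fun x j ↦ LModHom.app (π j) U x) : M.IsQuasicoherent :=
  fun U V h ↦ (IsBaseChangeAlong.pi (fun j ↦ hN j h)
    (h := { toFun x j := (N j).res h (x j)
            map_add' _ _ := funext fun _ ↦ map_add _ _ _
            map_smul' _ _ := funext fun j ↦ ((N j).resΓ h).map_smulₛₗ _ _ })
    fun _ _ ↦ rfl).of_bijective (e := .pi fun j ↦ appΓ (π j) U) (e' := .pi fun j ↦ appΓ (π j) V)
      (fun x ↦ funext fun j ↦ (LModHom.comm_res (π j) h x).symm) (hπ U) (hπ V)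

instance : (quasicoherent A).IsClosedUnderIsomorphisms where
  of_iso e hX := .of_bijective_pi (J := Unit) (fun _ ↦ hX) (fun _ ↦ e.inv) fun U ↦
    (Equiv.funUnique Unit _).symm.bijective.comp ((isIso_iff e.inv).1 inferInstance U)

instance : (quasicoherent A).IsClosedUnderFiniteProducts :=
  isClosedUnderFiniteProducts_of_biproduct fun _ _ N hN ↦
    .of_bijective_pi hN (biproduct.π N) (bijective_pi_biproduct_π N)

end LModData
end QuasicoherentClosure

section Embedding

open Limits Abelian

attribute [local instance] Abelian.hasFiniteBiproducts

variable {X : Scheme.{0}} {G : Set X.Opens} {A : AlgData k X G}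
  [A.StructureMap]

universe v u w

lemma ext_obj_biproduct_eq_zero {𝓐 : Type u} [Category.{v} 𝓐] [Abelian 𝓐] {𝓑 : Type u}
    [Category.{v} 𝓑] [Abelian 𝓑] [HasExt.{w} 𝓑] (F : 𝓐 ⥤ 𝓑) [F.Additive] {J : Type} [Finite J]
    (Y : J → 𝓐) {P : 𝓑} {n : ℕ} (h : ∀ j (e : Ext.{w} P (F.obj (Y j)) n), e = 0)
    (e : Ext.{w} P (F.obj (⨁ Y)) n) : e = 0 := by
  have := Fintype.ofFinite J
  exact (Ext.addEquivBiproduct P (isBilimitOfPreserves F (biproduct.isBilimit Y)) n).injective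
    (funext fun j ↦ (h j _).trans (h j _).symm)

lemma span_basicOpen_le_of_cover {U : X.Opens} (hU : IsAffineOpen U) {ι : Type*} (V : ι → X.Opens)
    (hV : U ≤ ⨆ i, V i) : Ideal.span {f : Γ(X, U) | ∃ i, X.basicOpen f ≤ V i} = ⊤ := by
  refine hU.iSup_basicOpen_eq_self_iff.1
    (le_antisymm (iSup_le fun _ ↦ X.basicOpen_le _) fun x hx ↦ ?_)
  obtain ⟨i, hxi⟩ := Opens.mem_iSup.1 (hV hx)
  obtain ⟨f, hf, hxf⟩ := hU.exists_basicOpen_le ⟨x, hxi⟩ hx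
  exact Opens.mem_iSup.2 ⟨⟨f, i, hf⟩, hxf⟩

namespace LModData

/-- The basic open defined by a function on `V`, as a member of the family `G`. -/
def basicOpenMem (hbasic : ∀ V ∈ G, ∀ f : Γ(X, V), X.basicOpen f ∈ G) (V : G) (f : Γ(X, V)) : G :=
  ⟨X.basicOpen f, hbasic V V.2 f⟩

lemma IsQuasicoherent.isLocalization (hG : ∀ V ∈ G, IsAffineOpen V)
    {P : LModData k X G A} (hP : P.IsQuasicoherent) {U V : G}
    (h : (V : X.Opens) ≤ U) (f : Γ(X, U)) (hV : (V : X.Opens) = X.basicOpen f) :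
    (∀ y : P.sec V, ∃ (n : ℕ) (m : P.sec U), sectionsMap h f ^ n • y = P.res h m) ∧
      ∀ m : P.sec U, P.res h m = 0 → ∃ n : ℕ, f ^ n • m = 0 :=
  (IsBaseChangeAlong.iff_of_isLocalizationAway f
    (isLocalizationAway_sectionsMap h (hG U U.2) hV)).1 (hP h)

lemma IsQuasicoherent.eq_zero_of_cover (hG : ∀ V ∈ G, IsAffineOpen V)
    (hbasic : ∀ V ∈ G, ∀ f : Γ(X, V), X.basicOpen f ∈ G)
    {P : LModData k X G A} (hP : P.IsQuasicoherent) {V : G} {ι : Type*} (D : ι → G)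
    (hD : ∀ i, (D i : X.Opens) ≤ V) (hcover : (V : X.Opens) ≤ ⨆ i, (D i : X.Opens))
    {x : P.sec V} (hx : ∀ i, P.res (hD i) x = 0) : x = 0 := by
  refine Submodule.mem_of_span_eq_top_of_smul_pow_mem (⊥ : Submodule Γ(X, V) (P.sec V)) _
    (span_basicOpen_le_of_cover (hG V V.2) _ hcover) x fun ⟨f, i, hf⟩ ↦ ?_
  refine (hP.isLocalization hG (V := basicOpenMem hbasic V f) (X.basicOpen_le f) f rfl).2 x ?_
  rw [← P.res_comp (V := D i) hf (hD i), hx, map_zero]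

lemma exists_hom_coinduced (hG : ∀ V ∈ G, IsAffineOpen V) {U : X.Opens}
    (hU : ∀ V ∈ G, V ⊓ U ∈ G) (hUG : U ∈ G) {P : LModData k X G A} (hP : P.IsQuasicoherent)
    (hA : (regular A).IsQuasicoherent) :
    ∃ J : ModuleCat.{0} (A.sec ⟨U, hUG⟩), Injective J ∧ ∃ f : P ⟶ coinduced A hU hUG J,
      ∀ (V : G) (x : P.sec V), LModHom.app f V x = 0 →
        P.res (V := ⟨_, hU V V.2⟩) inf_le_left x = 0 := by
  let P' := (restriction A (Set.inter_subset_left (t := Set.Iic U))).obj P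
  let φ := fromAssociated (A := A.reindex Set.inter_subset_left) (U := topOpen hUG)
    (le_topOpen hUG) P'
  have : IsIso φ := isIso_fromAssociated _ (hP.restriction _) (hA.regular_reindex _)
  let J := (evaluation (A.reindex (Set.inter_subset_left (t := Set.Iic U))) (topOpen hUG)).obj P'
  let ι := (associated (A.reindex (Set.inter_subset_left (t := Set.Iic U))) (U := topOpen hUG)
    (le_topOpen hUG)).map (Injective.ι J)
  have := preservesMonomorphisms_associated
    (A := A.reindex (Set.inter_subset_left (t := Set.Iic U))) (U := topOpen hUG)
    (le_topOpen hUG) (fun V hV ↦ hG V hV.1) (hA.regular_reindex _)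
  have : Mono ι := inferInstance
  have : Mono (inv φ ≫ ι) := inferInstance
  refine ⟨Injective.under J, inferInstanceAs (Injective (Injective.under J)),
    (restrictionAdjunction A hU).homEquiv P _ (inv φ ≫ ι), fun V x hx ↦ ?_⟩
  exact (injective_iff_map_eq_zero _).1 ((mono_iff (inv φ ≫ ι)).1 inferInstance (infOpen hU V)) _ hx

lemma exists_mono_biproduct_coinduced (hG : ∀ V ∈ G, IsAffineOpen V)
    (hbasic : ∀ V ∈ G, ∀ f : Γ(X, V), X.basicOpen f ∈ G) {ι : Type} [Finite ι] {U : ι → X.Opens}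
    (hU : ∀ i, ∀ V ∈ G, V ⊓ U i ∈ G) (hUG : ∀ i, U i ∈ G) (hcover : ⨆ i, U i = ⊤)
    (hA : (regular A).IsQuasicoherent) {P : LModData k X G A} (hP : P.IsQuasicoherent) :
    ∃ J : ∀ i, ModuleCat.{0} (A.sec ⟨U i, hUG i⟩), (∀ i, Injective (J i)) ∧
      ∃ f : P ⟶ ⨁ fun i ↦ coinduced A (hU i) (hUG i) (J i), Mono f := by
  choose J hJ f hf using fun i ↦ exists_hom_coinduced hG (hU i) (hUG i) hP hA
  refine ⟨J, hJ, biproduct.lift f, (mono_iff _).2 fun V ↦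
    (injective_iff_map_eq_zero (LModHom.app (biproduct.lift f) V)).2 fun x hx ↦ ?_⟩
  refine hP.eq_zero_of_cover hG hbasic (D := fun i ↦ ⟨_, hU i V V.2⟩) (fun i ↦ inf_le_left)
    (by rw [← inf_iSup_eq, hcover, inf_top_eq]) fun i ↦ hf i V x ?_
  rw [← biproduct.lift_π f i, comp_app, hx, map_zero]

lemma hasAcyclicEmbeddings_map_restriction {G' : Set X.Opens} (h : G' ⊆ G)
    (hG : ∀ V ∈ G, IsAffineOpen V) (hbasic : ∀ V ∈ G, ∀ f : Γ(X, V), X.basicOpen f ∈ G)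
    (hinf : ∀ U ∈ G', ∀ V ∈ G', U ⊓ V ∈ G') {ι : Type} [Finite ι] {U : ι → X.Opens}
    (hUG' : ∀ i, U i ∈ G') (hU : ∀ i, ∀ V ∈ G, V ⊓ U i ∈ G) (hcover : ⨆ i, U i = ⊤)
    (hA : (regular A).IsQuasicoherent) :
    HasAcyclicEmbeddings.{0} ((quasicoherent A).map (restriction A h)) := by
  rintro X' ⟨P, hP, ⟨e⟩⟩
  obtain ⟨J, hJ, f, hf⟩ := exists_mono_biproduct_coinduced hG hbasic hU (fun i ↦ h (hUG' i))
    hcover hA hP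
  have shortExact : (ShortComplex.mk f (cokernel.π f) (cokernel.condition f)).ShortExact :=
    .mk' (ShortComplex.exact_cokernel f) hf inferInstance
  have quasicoherent_biproduct :
      quasicoherent A (⨁ fun i ↦ coinduced A (hU i) (h (hUG' i)) (J i)) :=
    prop_biproduct fun i ↦
      isQuasicoherent_coinduced (hU i) (h (hUG' i)) (J i) hG hbasic hA
  refine ⟨_, shortExact_inv_comp (restriction_shortExact h _ shortExact) e, rfl, ?_, ?_, ?_⟩
  · exact ObjectProperty.prop_map_obj _ _ quasicoherent_biproduct
  · exact ObjectProperty.prop_map_obj _ _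
      (IsQuasicoherent.of_right_exact shortExact.exact hP quasicoherent_biproduct)
  rintro Y ⟨Q, hQ, ⟨e'⟩⟩ n
  refine ext_obj_biproduct_eq_zero (restriction A h) _ fun i ↦ ?_
  exact ext_coinduced_eq_zero (A := A.reindex h) (fun V hV ↦ hinf V hV _ (hUG' i)) (hUG' i) (J i)
    (fun V hV ↦ hG V (h hV)) (hA.regular_reindex h)
    ((quasicoherent _).prop_of_iso e' (hQ.restriction h)) (hJ i)

end LModData
end Embedding

section AffineRefinements

open Limits Abelian

attribute [local instance] Abelian.hasFiniteBiproducts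

universe v u w

/-- The affine opens contained in a member of `W`. -/
def affineRefinements {X : Scheme.{u}} (W : Set X.Opens) : Set X.Opens :=
  {V | IsAffineOpen V ∧ ∃ U ∈ W, V ≤ U}

variable {X : Scheme.{u}} {W : Set X.Opens}

lemma subset_affineRefinements (hW : W ⊆ X.affineOpens) : W ⊆ affineRefinements W :=
  fun U hU ↦ ⟨hW hU, U, hU, le_rfl⟩

lemma basicOpen_mem_affineRefinements :
    ∀ V ∈ affineRefinements W, ∀ f : Γ(X, V), X.basicOpen f ∈ affineRefinements W :=
  fun _ ⟨hV, U, hU, hVU⟩ f ↦ ⟨hV.basicOpen f, U, hU, (X.basicOpen_le f).trans hVU⟩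

lemma inf_mem_affineRefinements (hW : W ⊆ X.affineOpens)
    (hinf : ∀ U ∈ W, ∀ V ∈ W, U ⊓ V ∈ W) :
    ∀ V ∈ affineRefinements W, ∀ V' ∈ affineRefinements W, V ⊓ V' ∈ affineRefinements W := by
  have isAffineOpen_inf {V V' U : X.Opens} (hV : IsAffineOpen V) (hV' : IsAffineOpen V')
      (hU : U ∈ W) (hVU : V ≤ U) (hVU' : V' ≤ U) : IsAffineOpen (V ⊓ V') :=
    have : IsAffine V := hV
    have : IsAffine V' := hV'
    have : IsAffine U := hW hU
    IsAffine.of_isPullback (isPullback_opens_inf_le hVU hVU')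
  rintro V ⟨hV, U, hU, hVU⟩ V' ⟨hV', U', hU', hVU'⟩
  refine ⟨?_, U, hU, inf_le_left.trans hVU⟩
  have hVUU' : V ⊓ (U ⊓ U') = V ⊓ U' := by rw [← inf_assoc, inf_of_le_left hVU]
  have hVU'V' : V ⊓ U' ⊓ V' = V ⊓ V' := by rw [inf_assoc, inf_of_le_right hVU']
  have hVU'_affine : IsAffineOpen (V ⊓ U') :=
    hVUU' ▸ isAffineOpen_inf hV (hW (hinf U hU U' hU')) hU hVU inf_le_left
  exact hVU'V' ▸ isAffineOpen_inf hVU'_affine hV' hU' inf_le_right hVU'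

lemma exists_le_of_mem_affineRefinements : ∀ V ∈ affineRefinements W, ∃ U ∈ W, V ≤ U :=
  fun _ h ↦ h.2

lemma exists_finite_subcover {U : X.Opens} (hU : IsCompact (U : Set X)) {ι : Type*}
    {V : ι → X.Opens} (h : U ≤ ⨆ i, V i) : ∃ t : Finset ι, U ≤ ⨆ i : t, V i := by
  obtain ⟨t, ht⟩ := hU.elim_finite_subcover (fun i ↦ (V i : Set X)) (fun i ↦ (V i).2)
    (by rw [← Opens.coe_iSup]; exact h)
  refine ⟨t, fun x hx ↦ ?_⟩
  obtain ⟨i, hi, hxi⟩ := Set.mem_iUnion₂.1 (ht hx)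
  exact Opens.mem_iSup.2 ⟨⟨i, hi⟩, hxi⟩

namespace LModData

variable {X : Scheme.{0}} {W : Set X.Opens}
  {A : AlgData k X (affineRefinements W)} [A.StructureMap]

lemma hasAcyclicEmbeddings_quasicoherent_map [CompactSpace X] (hW : W ⊆ X.affineOpens)
    (hinf : ∀ U ∈ W, ∀ V ∈ W, U ⊓ V ∈ W) (hcover : ⨆ U : W, (U : X.Opens) = ⊤)
    (hA : (regular A).IsQuasicoherent) :
    HasAcyclicEmbeddings.{0}
      ((quasicoherent A).map (restriction A (subset_affineRefinements hW))) := by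
  obtain ⟨t, ht⟩ := exists_finite_subcover isCompact_univ (U := ⊤) hcover.ge
  exact hasAcyclicEmbeddings_map_restriction (subset_affineRefinements hW) (fun V hV ↦ hV.1)
    basicOpen_mem_affineRefinements hinf (fun U : t ↦ U.1.2)
    (fun U V hV ↦ inf_mem_affineRefinements hW hinf V hV U (subset_affineRefinements hW U.1.2))
    (top_le_iff.1 ht) hA

lemma hasAcyclicEmbeddings_top {G : Set X.Opens} {A : AlgData k X G} :
    HasAcyclicEmbeddings.{0} (⊤ : ObjectProperty (LModData k X G A)) := fun M _ ↦
  ⟨_, .mk' (ShortComplex.exact_cokernel (Injective.ι M)) inferInstance inferInstance, rfl,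
    trivial, trivial, fun _ _ _ e ↦ e.eq_zero_of_injective⟩

end LModData
end AffineRefinements

section QuasicoherentSheaves

variable {X : Scheme.{0}} {G : Set X.Opens} {A : AlgData k X G}
  [A.StructureMap]

namespace LModData

lemma res_smul (M : LModData k X G A) {U V : G} (h : (V : X.Opens) ≤ U) (c : Γ(X, U))
    (x : M.sec U) : M.res h (c • x) = sectionsMap h c • M.res h x :=
  (M.resΓ h).map_smulₛₗ c x

lemma basicOpen_sectionsMap_le {U V : X.Opens} (h : V ≤ U) (f : Γ(X, U)) :
    X.basicOpen (sectionsMap h f) ≤ X.basicOpen f := by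
  rw [sectionsMap, Scheme.basicOpen_res]
  exact inf_le_right

namespace IsQuasicoherent

variable {P Q : LModData k X G A}

lemma mem_range_of_cover (hP : P.IsQuasicoherent) (hQ : Q.IsQuasicoherent)
    (hG : ∀ V ∈ G, IsAffineOpen V) (hbasic : ∀ V ∈ G, ∀ f : Γ(X, V), X.basicOpen f ∈ G)
    (φ : P ⟶ Q) {U : G} {ι : Type*} {V : ι → G} (hle : ∀ i, (V i : X.Opens) ≤ U)
    (hcover : (U : X.Opens) ≤ ⨆ i, (V i : X.Opens)) {x : Q.sec U}
    (hx : ∀ i, Q.res (hle i) x ∈ Set.range (LModHom.app φ (V i))) :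
    x ∈ Set.range (LModHom.app φ U) := by
  refine Submodule.mem_of_span_eq_top_of_smul_pow_mem (LinearMap.range (appΓ φ U)) _
    (span_basicOpen_le_of_cover (hG U U.2) _ hcover) x fun ⟨f, i, hf⟩ ↦ ?_
  let D := basicOpenMem hbasic U f
  have hD : (D : X.Opens) ≤ U := X.basicOpen_le f
  have hDV : (D : X.Opens) ≤ V i := hf
  obtain ⟨y, hy⟩ := hx i
  obtain ⟨n, z, hz⟩ := (hP.isLocalization hG hD f rfl).1 (P.res hDV y)
  have res_eq : Q.res hD (f ^ n • x - appΓ φ U z) = 0 := by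
    refine (map_sub _ _ _).trans (sub_eq_zero.2 ?_)
    calc Q.res hD (f ^ n • x) = sectionsMap hD f ^ n • Q.res hDV (Q.res (hle i) x) := by
          rw [res_smul, map_pow, Q.res_comp]
      _ = appΓ φ D (sectionsMap hD f ^ n • P.res hDV y) := by
          rw [map_smul, ← hy]; exact congrArg _ (LModHom.comm_res φ hDV y).symm
      _ = Q.res hD (appΓ φ U z) := by rw [hz]; exact LModHom.comm_res φ hD z
  obtain ⟨q, hq⟩ := (hQ.isLocalization hG hD f rfl).2 _ res_eq
  rw [smul_sub, sub_eq_zero, ← mul_smul, ← pow_add] at hq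
  exact ⟨q + n, f ^ q • z, (map_smul _ _ _).trans hq.symm⟩

lemma exists_pow_smul_glue (hP : P.IsQuasicoherent) (hG : ∀ V ∈ G, IsAffineOpen V)
    (hbasic : ∀ V ∈ G, ∀ f : Γ(X, V), X.basicOpen f ∈ G) {U : G} {ι : Type*} [Finite ι]
    {V : ι → G} (hle : ∀ i, (V i : X.Opens) ≤ U) {s : ∀ i, P.sec (V i)}
    (hs : ∀ (i j : ι) (V' : G) (h₁ : (V' : X.Opens) ≤ V i) (h₂ : (V' : X.Opens) ≤ V j),
      P.res h₁ (s i) = P.res h₂ (s j)) {f : Γ(X, U)} {i₀ : ι} (hf : X.basicOpen f ≤ V i₀) :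
    ∃ (n : ℕ) (t : P.sec U), ∀ i, P.res (hle i) t = sectionsMap (hle i) f ^ n • s i := by
  let D := basicOpenMem hbasic U f
  have hD : (D : X.Opens) ≤ U := X.basicOpen_le f
  have hDV : (D : X.Opens) ≤ V i₀ := hf
  obtain ⟨n, t, ht⟩ := (hP.isLocalization hG hD f rfl).1 (P.res hDV (s i₀))
  have killed (i : ι) : ∃ q, sectionsMap (hle i) f ^ q •
      (P.res (hle i) t - sectionsMap (hle i) f ^ n • s i) = 0 := by
    let D' := basicOpenMem hbasic (V i) (sectionsMap (hle i) f)
    have hD' : (D' : X.Opens) ≤ V i := X.basicOpen_le _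
    have hDD' : (D' : X.Opens) ≤ D := basicOpen_sectionsMap_le (hle i) f
    refine (hP.isLocalization hG hD' _ rfl).2 _ ((map_sub _ _ _).trans (sub_eq_zero.2 ?_))
    calc P.res hD' (P.res (hle i) t) = P.res hDD' (P.res hD t) := by simp only [P.res_comp]
      _ = sectionsMap (hD'.trans (hle i)) f ^ n • P.res (hDD'.trans hDV) (s i₀) := by
        rw [← ht, res_smul, P.res_comp, ← map_pow, ← map_pow, ← sectionsMap_comp hD hDD']
        rfl
      _ = P.res hD' (sectionsMap (hle i) f ^ n • s i) := by
        rw [res_smul, hs i₀ i D' _ hD', ← map_pow, ← map_pow, ← sectionsMap_comp (hle i) hD']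
        rfl
  choose q hq using killed
  obtain ⟨N, hN⟩ := Finite.exists_le q
  refine ⟨N + n, f ^ N • t, fun i ↦ ?_⟩
  rw [res_smul, map_pow, pow_add, mul_smul, ← sub_eq_zero, ← smul_sub,
    ← Nat.sub_add_cancel (hN i), pow_add, mul_smul, hq, smul_zero]

lemma exists_glue_of_finite (hP : P.IsQuasicoherent) (hG : ∀ V ∈ G, IsAffineOpen V)
    (hbasic : ∀ V ∈ G, ∀ f : Γ(X, V), X.basicOpen f ∈ G) {U : G} {ι : Type*} [Finite ι]
    {V : ι → G} (hle : ∀ i, (V i : X.Opens) ≤ U) (hcover : (U : X.Opens) ≤ ⨆ i, (V i : X.Opens))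
    {s : ∀ i, P.sec (V i)}
    (hs : ∀ (i j : ι) (V' : G) (h₁ : (V' : X.Opens) ≤ V i) (h₂ : (V' : X.Opens) ≤ V j),
      P.res h₁ (s i) = P.res h₂ (s j)) : ∃ t : P.sec U, ∀ i, P.res (hle i) t = s i := by
  let I : Ideal Γ(X, U) :=
    { carrier := {r | ∃ t : P.sec U, ∀ i, P.res (hle i) t = sectionsMap (hle i) r • s i}
      add_mem' := by
        rintro a b ⟨t, ht⟩ ⟨t', ht'⟩
        exact ⟨t + t', fun i ↦ by rw [map_add, ht, ht', map_add, add_smul]⟩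
      zero_mem' := ⟨0, fun i ↦ by rw [map_zero, map_zero, zero_smul]⟩
      smul_mem' := by
        rintro c a ⟨t, ht⟩
        exact ⟨c • t, fun i ↦ by rw [res_smul, ht, ← mul_smul, ← map_mul, smul_eq_mul]⟩ }
  have one_mem : (1 : Γ(X, U)) ∈ I := by
    refine Submodule.mem_of_span_eq_top_of_smul_pow_mem I _
      (span_basicOpen_le_of_cover (hG U U.2) _ hcover) 1 fun ⟨f, i, hf⟩ ↦ ?_
    obtain ⟨n, t, ht⟩ := hP.exists_pow_smul_glue hG hbasic hle hs hf
    exact ⟨n, t, fun j ↦ by rw [ht, smul_eq_mul, mul_one, map_pow]⟩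
  obtain ⟨t, ht⟩ := one_mem
  exact ⟨t, fun i ↦ (ht i).trans (by rw [map_one, one_smul])⟩

lemma isSheafCond (hP : P.IsQuasicoherent) (hG : ∀ V ∈ G, IsAffineOpen V)
    (hbasic : ∀ V ∈ G, ∀ f : Γ(X, V), X.basicOpen f ∈ G)
    (hinf : ∀ V ∈ G, ∀ V' ∈ G, V ⊓ V' ∈ G) : P.IsSheafCond := by
  intro U ι V hle hcover s hs
  have eq_of_cover {U : G} {ι : Type} (V : ι → G) (hle : ∀ i, (V i : X.Opens) ≤ U)
      (hcover : (U : X.Opens) ≤ ⨆ i, (V i : X.Opens)) {x y : P.sec U}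
      (hxy : ∀ i, P.res (hle i) x = P.res (hle i) y) : x = y :=
    sub_eq_zero.1 (hP.eq_zero_of_cover hG hbasic V hle hcover fun i ↦
      (map_sub _ _ _).trans (sub_eq_zero.2 (hxy i)))
  obtain ⟨ι', hι'⟩ := exists_finite_subcover (hG U U.2).isCompact hcover.ge
  obtain ⟨t, ht⟩ := hP.exists_glue_of_finite hG hbasic (fun i : ι' ↦ hle i) hι'
    fun i j ↦ hs i j
  refine ⟨t, fun j ↦ ?_, fun t' ht' ↦ eq_of_cover (fun i : ι' ↦ V i) (fun i ↦ hle i) hι'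
    fun i ↦ (ht' i).trans (ht i).symm⟩
  refine eq_of_cover (fun i : ι' ↦ ⟨V j ⊓ V i, hinf _ (V j).2 _ (V i).2⟩) (fun i ↦ inf_le_left)
    ?_ fun i ↦ ?_
  · rw [← inf_iSup_eq]
    exact le_inf le_rfl ((hle j).trans hι')
  · exact (P.res_comp _ _ _).trans <| (P.res_comp inf_le_right (hle i) t).symm.trans <|
      (congrArg _ (ht i)).trans (hs i j _ inf_le_right inf_le_left)

end IsQuasicoherent
end LModData
end QuasicoherentSheaves

section AffineBases

/-- A basis of the topology consisting of affine opens and stable under intersections and under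
passing to basic opens. -/
structure IsAffineBasis {X : Scheme.{0}} (B : Set X.Opens) : Prop where
  isBasis : Opens.IsBasis B
  isAffineOpen : ∀ U ∈ B, IsAffineOpen U
  basicOpen_mem : ∀ U ∈ B, ∀ f : Γ(X, U), X.basicOpen f ∈ B
  inf_mem : ∀ U ∈ B, ∀ V ∈ B, U ⊓ V ∈ B

lemma inf_basicOpen {X : Scheme.{0}} {U V : X.Opens} (h : V ≤ U) (f : Γ(X, U)) :
    V ⊓ X.basicOpen f = X.basicOpen (sectionsMap h f) :=
  (X.basicOpen_res f (homOfLE h).op).symm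

lemma IsAffineBasis.inf_basicOpen_mem {X : Scheme.{0}} {B : Set X.Opens} (hB : IsAffineBasis B)
    {U V : X.Opens} (hV : V ∈ B) (h : V ≤ U) (f : Γ(X, U)) : V ⊓ X.basicOpen f ∈ B :=
  inf_basicOpen h f ▸ hB.basicOpen_mem V hV _

lemma isAffineBasis_affineRefinements {X : Scheme.{0}} {W : Set X.Opens} (hW : W ⊆ X.affineOpens)
    (hinf : ∀ U ∈ W, ∀ V ∈ W, U ⊓ V ∈ W) (hcover : ⨆ U : W, (U : X.Opens) = ⊤) :
    IsAffineBasis (affineRefinements W) where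
  isBasis := Opens.isBasis_iff_nbhd.2 fun {U x} hx ↦ by
    obtain ⟨V, hxV⟩ := Opens.mem_iSup.1 (hcover.ge (Opens.mem_top x))
    obtain ⟨f, hf, hxf⟩ := (hW V.2).exists_basicOpen_le ⟨x, hx⟩ hxV
    exact ⟨_, basicOpen_mem_affineRefinements V (subset_affineRefinements hW V.2) f, hxf, hf⟩
  isAffineOpen _ hU := hU.1
  basicOpen_mem := basicOpen_mem_affineRefinements
  inf_mem := inf_mem_affineRefinements hW hinf

variable {X : Scheme.{0}} {G B : Set X.Opens} {A : AlgData k X G}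
  [A.StructureMap]

lemma exists_finite_basis_cover (hB : Opens.IsBasis B) (hBG : B ⊆ G) {U : X.Opens}
    (hU : IsCompact (U : Set X)) : ∃ (ι : Type) (_ : Finite ι) (V : ι → G),
      (∀ i, (V i : X.Opens) ∈ B) ∧ (∀ i, (V i : X.Opens) ≤ U) ∧ U ≤ ⨆ i, (V i : X.Opens) := by
  obtain ⟨t, ht⟩ := exists_finite_subcover hU (iSup_basis_le hB U).ge
  exact ⟨t, inferInstance, fun i ↦ ⟨_, hBG i.1.1.2⟩, fun i ↦ i.1.1.2, fun i ↦ i.1.2, ht⟩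

namespace LModData

lemma sectionsMap_sectionsMap {U V V' : X.Opens} (h : V ≤ U) (h' : V' ≤ V) (c : Γ(X, U)) :
    sectionsMap h' (sectionsMap h c) = sectionsMap (h'.trans h) c :=
  RingHom.congr_fun (sectionsMap_comp h h') c

variable {M : LModData k X G A} {hBG : B ⊆ G}

lemma IsQuasicoherent.isLocalization_of_reindex (hM : (M.reindex hBG).IsQuasicoherent)
    (hB : ∀ V ∈ B, IsAffineOpen V) {U V : G} (hU : (U : X.Opens) ∈ B) (hV : (V : X.Opens) ∈ B)
    (h : (V : X.Opens) ≤ U) (f : Γ(X, U)) (hVf : (V : X.Opens) = X.basicOpen f) :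
    (∀ y : M.sec V, ∃ (n : ℕ) (m : M.sec U), sectionsMap h f ^ n • y = M.res h m) ∧
      ∀ m : M.sec U, M.res h m = 0 → ∃ n : ℕ, f ^ n • m = 0 :=
  hM.isLocalization hB (U := ⟨U, hU⟩) (V := ⟨V, hV⟩) h f hVf

lemma exists_pow_smul_eq_zero_of_mem_basis (hM : (M.reindex hBG).IsQuasicoherent)
    (hB : IsAffineBasis B) {U D V : G} {f : Γ(X, U)} (hD : (D : X.Opens) = X.basicOpen f)
    (hV : (V : X.Opens) ∈ B) (hVU : (V : X.Opens) ≤ U) {m : M.sec V}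
    (hm : ∀ (V' : G) (h : (V' : X.Opens) ≤ V), (V' : X.Opens) ≤ D → M.res h m = 0) :
    ∃ n : ℕ, sectionsMap hVU f ^ n • m = 0 := by
  let D' := X.basicOpen (sectionsMap hVU f)
  have hD' : D' ∈ B := hB.basicOpen_mem V hV (sectionsMap hVU f)
  exact (hM.isLocalization_of_reindex hB.isAffineOpen (V := ⟨D', hBG hD'⟩) hV hD'
    (X.basicOpen_le _) _ rfl).2 m (hm _ _ ((basicOpen_sectionsMap_le hVU f).trans hD.ge))

lemma IsSheafCond.exists_pow_smul_eq_zero (hM : M.IsSheafCond)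
    (hMq : (M.reindex hBG).IsQuasicoherent) (hB : IsAffineBasis B) {U D : G}
    (hU : IsCompact (U.1 : Set X)) {f : Γ(X, U)} (hD : (D : X.Opens) = X.basicOpen f)
    (hDU : (D : X.Opens) ≤ U) {m : M.sec U} (hm : M.res hDU m = 0) : ∃ n : ℕ, f ^ n • m = 0 := by
  obtain ⟨ι, _, V, hV, hle, hcover⟩ := exists_finite_basis_cover hB.isBasis hBG hU
  have killed (i : ι) : ∃ n, sectionsMap (hle i) f ^ n • M.res (hle i) m = 0 :=
    exists_pow_smul_eq_zero_of_mem_basis hMq hB hD (hV i) (hle i) fun V' h hV' ↦ by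
      rw [M.res_comp, ← M.res_comp hV' hDU, hm, map_zero]
  choose n hn using killed
  obtain ⟨N, hN⟩ := Finite.exists_le n
  refine ⟨N, hM.eq_of_res_eq hle (le_antisymm (iSup_le hle) hcover) fun i ↦ ?_⟩
  rw [res_smul, map_pow, ← Nat.sub_add_cancel (hN i), pow_add, mul_smul, hn, smul_zero, map_zero]

lemma exists_pow_smul_eq_res_of_finite (hMq : (M.reindex hBG).IsQuasicoherent)
    (hB : IsAffineBasis B) {U D : G} {f : Γ(X, U)} (hD : (D : X.Opens) = X.basicOpen f)
    (hDU : (D : X.Opens) ≤ U) {ι : Type} [Finite ι] {V : ι → G} (hV : ∀ i, (V i : X.Opens) ∈ B)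
    (hle : ∀ i, (V i : X.Opens) ≤ U) (y : M.sec D) :
    ∃ (N : ℕ) (m : ∀ i, M.sec (V i)), ∀ (i : ι) (V' : G) (h : (V' : X.Opens) ≤ V i)
      (hV' : (V' : X.Opens) ≤ D),
        M.res h (m i) = sectionsMap (hV'.trans hDU) f ^ N • M.res hV' y := by
  obtain ⟨D', hD'⟩ : ∃ D' : ι → G, ∀ i, (D' i : X.Opens) = ↑(V i) ⊓ ↑D :=
    ⟨fun i ↦ ⟨_, hBG (hD ▸ hB.inf_basicOpen_mem (hV i) (hle i) f)⟩, fun _ ↦ rfl⟩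
  have hD'V (i : ι) : (D' i : X.Opens) ≤ V i := (hD' i).trans_le inf_le_left
  have hD'D (i : ι) : (D' i : X.Opens) ≤ D := (hD' i).trans_le inf_le_right
  have hD'f (i : ι) : (D' i : X.Opens) = X.basicOpen (sectionsMap (hle i) f) :=
    (hD' i).trans (hD ▸ inf_basicOpen (hle i) f)
  have extend (i : ι) : ∃ (n : ℕ) (m : M.sec (V i)),
      sectionsMap (hD'V i) (sectionsMap (hle i) f) ^ n • M.res (hD'D i) y = M.res (hD'V i) m :=
    (hMq.isLocalization_of_reindex hB.isAffineOpen (hV i)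
      (hD'f i ▸ hB.basicOpen_mem _ (hV i) _) (hD'V i) _ (hD'f i)).1 _
  choose n m hm using extend
  obtain ⟨N, hN⟩ := Finite.exists_le n
  refine ⟨N, fun i ↦ sectionsMap (hle i) f ^ (N - n i) • m i, fun i V' h hV' ↦ ?_⟩
  have hV'D' : (V' : X.Opens) ≤ D' i := (le_inf h hV').trans (hD' i).ge
  calc M.res h (sectionsMap (hle i) f ^ (N - n i) • m i)
      = sectionsMap (hV'.trans hDU) f ^ (N - n i) • M.res hV'D' (M.res (hD'V i) (m i)) := by
        rw [res_smul, map_pow, sectionsMap_sectionsMap, M.res_comp]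
    _ = sectionsMap (hV'.trans hDU) f ^ (N - n i) •
          sectionsMap (hV'.trans hDU) f ^ n i • M.res hV' y := by
        rw [← hm, res_smul, map_pow, sectionsMap_sectionsMap, sectionsMap_sectionsMap, M.res_comp]
    _ = sectionsMap (hV'.trans hDU) f ^ N • M.res hV' y := by
        rw [← mul_smul, ← pow_add, Nat.sub_add_cancel (hN i)]

lemma IsSheafCond.exists_pow_smul_glue (hM : M.IsSheafCond)
    (hMq : (M.reindex hBG).IsQuasicoherent) (hB : IsAffineBasis B) {U D : G} {f : Γ(X, U)}
    (hD : (D : X.Opens) = X.basicOpen f) {ι : Type} [Finite ι] {V : ι → G}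
    (hV : ∀ i, (V i : X.Opens) ∈ B) (hle : ∀ i, (V i : X.Opens) ≤ U)
    (hcover : ⨆ i, (V i : X.Opens) = U) {m : ∀ i, M.sec (V i)}
    (hm : ∀ (i j : ι) (V' : G) (hi : (V' : X.Opens) ≤ V i) (hj : (V' : X.Opens) ≤ V j),
      (V' : X.Opens) ≤ D → M.res hi (m i) = M.res hj (m j)) :
    ∃ (n : ℕ) (t : M.sec U), ∀ i, M.res (hle i) t = sectionsMap (hle i) f ^ n • m i := by
  have hV_inf (i j : ι) : (V i ⊓ V j : X.Opens) ∈ B := hB.inf_mem _ (hV i) _ (hV j)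
  obtain ⟨V₂, hV₂⟩ : ∃ V₂ : ι → ι → G, ∀ i j, (V₂ i j : X.Opens) = ↑(V i) ⊓ ↑(V j) :=
    ⟨fun i j ↦ ⟨_, hBG (hV_inf i j)⟩, fun _ _ ↦ rfl⟩
  have h₁ (i j : ι) : (V₂ i j : X.Opens) ≤ V i := (hV₂ i j).trans_le inf_le_left
  have h₂ (i j : ι) : (V₂ i j : X.Opens) ≤ V j := (hV₂ i j).trans_le inf_le_right
  have agree (p : ι × ι) : ∃ q, sectionsMap ((h₁ p.1 p.2).trans (hle p.1)) f ^ q •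
      (M.res (h₁ p.1 p.2) (m p.1) - M.res (h₂ p.1 p.2) (m p.2)) = 0 :=
    exists_pow_smul_eq_zero_of_mem_basis hMq hB hD (hV₂ _ _ ▸ hV_inf _ _) _ fun V' h hV' ↦ by
      rw [map_sub, M.res_comp, M.res_comp]
      exact sub_eq_zero.2 (hm _ _ V' _ _ hV')
  choose q hq using agree
  obtain ⟨n, hn⟩ := Finite.exists_le q
  have agree_pow (i j : ι) : M.res (h₁ i j) (sectionsMap (hle i) f ^ n • m i) =
      M.res (h₂ i j) (sectionsMap (hle j) f ^ n • m j) := by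
    rw [res_smul, res_smul, map_pow, map_pow, sectionsMap_sectionsMap, sectionsMap_sectionsMap,
      ← sub_eq_zero, ← smul_sub, ← Nat.sub_add_cancel (hn (i, j)), pow_add, mul_smul, hq (i, j),
      smul_zero]
  obtain ⟨t, ht, -⟩ := hM U ι V hle hcover (fun i ↦ sectionsMap (hle i) f ^ n • m i)
    fun i j V' h h' ↦ by
      rw [← M.res_comp ((le_inf h h').trans (hV₂ i j).ge) (h₁ i j), agree_pow, M.res_comp]
  exact ⟨n, t, ht⟩

lemma IsSheafCond.exists_pow_smul_eq_res (hM : M.IsSheafCond)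
    (hMq : (M.reindex hBG).IsQuasicoherent) (hB : IsAffineBasis B) {U D : G}
    (hU : IsCompact (U.1 : Set X)) {f : Γ(X, U)} (hD : (D : X.Opens) = X.basicOpen f)
    (hDU : (D : X.Opens) ≤ U) (y : M.sec D) :
    ∃ (n : ℕ) (m : M.sec U), sectionsMap hDU f ^ n • y = M.res hDU m := by
  obtain ⟨ι, _, V, hV, hle, hcover⟩ := exists_finite_basis_cover hB.isBasis hBG hU
  obtain ⟨N, m, hm⟩ := exists_pow_smul_eq_res_of_finite hMq hB hD hDU hV hle y
  obtain ⟨n, t, ht⟩ := hM.exists_pow_smul_glue hMq hB hD hV hle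
    (le_antisymm (iSup_le hle) hcover) fun i j V' hi hj hV' ↦
      (hm i V' hi hV').trans (hm j V' hj hV').symm
  obtain ⟨D', hD'⟩ : ∃ D' : ι → G, ∀ i, (D' i : X.Opens) = ↑(V i) ⊓ ↑D :=
    ⟨fun i ↦ ⟨_, hBG (hD ▸ hB.inf_basicOpen_mem (hV i) (hle i) f)⟩, fun _ ↦ rfl⟩
  have hD'V (i : ι) : (D' i : X.Opens) ≤ V i := (hD' i).trans_le inf_le_left
  have hD'D (i : ι) : (D' i : X.Opens) ≤ D := (hD' i).trans_le inf_le_right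
  have hcoverD : ⨆ i, (D' i : X.Opens) = D := by
    rw [iSup_congr hD', ← iSup_inf_eq, inf_eq_right]
    exact hDU.trans hcover
  refine ⟨n + N, t, hM.eq_of_res_eq hD'D hcoverD fun i ↦ ?_⟩
  rw [res_smul, map_pow, sectionsMap_sectionsMap, M.res_comp, ← M.res_comp (hD'V i) (hle i), ht,
    res_smul, map_pow, sectionsMap_sectionsMap, hm _ _ _ (hD'D i), ← mul_smul, ← pow_add]

end LModData
end AffineBases

section QuasicoherentSheaves

variable {A : AlgData k Z Set.univ} [A.StructureMap]
  {B : Set Z.Opens}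

/-- The structure maps of `A`, indexed by the opens of `Z`. -/
abbrev AlgData.strOpens (A : AlgData k Z Set.univ) [A.StructureMap] (U : Z.Opens) :
    Γ(Z, U) →+* A.sec ⟨U, trivial⟩ :=
  AlgData.StructureMap.str (A := A) ⟨U, trivial⟩

lemma isQCohMod_iff {M : LModData k Z Set.univ A} :
    IsQCohMod A.strOpens M ↔ ∀ (U D : (Set.univ : Set Z.Opens)) (_ : IsAffineOpen U.1)
      (f : Γ(Z, U)) (_ : (D : Z.Opens) = Z.basicOpen f) (h : (D : Z.Opens) ≤ U),
      (∀ y : M.sec D, ∃ (n : ℕ) (m : M.sec U), sectionsMap h f ^ n • y = M.res h m) ∧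
        ∀ m : M.sec U, M.res h m = 0 → ∃ n : ℕ, f ^ n • m = 0 := by
  have pow_smul {U : (Set.univ : Set Z.Opens)} (f : Γ(Z, U)) (n : ℕ) (m : M.sec U) :
      M.lsmul U (A.strOpens U f ^ n) m = f ^ n • m :=
    congrArg (M.lsmul U · m) (map_pow (A.strOpens U) f n).symm
  constructor
  · rintro hM U ⟨_, _⟩ hU f rfl h
    refine ⟨fun y ↦ ?_, fun m hm ↦ ?_⟩
    · obtain ⟨n, m, hn⟩ := (hM U hU f).1 y
      exact ⟨n, m, (pow_smul _ n y).symm.trans hn⟩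
    · obtain ⟨n, hn⟩ := (hM U hU f).2 m hm
      exact ⟨n, (pow_smul f n m).symm.trans hn⟩
  · intro hM U hU f
    obtain ⟨extend, kill⟩ := hM ⟨U, trivial⟩ ⟨_, trivial⟩ hU f rfl (Z.basicOpen_le f)
    refine ⟨fun y ↦ ?_, fun m hm ↦ ?_⟩
    · obtain ⟨n, m, hn⟩ := extend y
      exact ⟨n, m, (pow_smul _ n y).trans hn⟩
    · obtain ⟨n, hn⟩ := kill m hm
      exact ⟨n, (pow_smul f n m).trans hn⟩

namespace LModData

lemma isQuasicoherent_reindex_of_isQCohMod (hB : IsAffineBasis B) {M : LModData k Z Set.univ A}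
    (hM : IsQCohMod A.strOpens M) : (M.reindex (Set.subset_univ B)).IsQuasicoherent :=
  isQuasicoherent_of_basicOpen hB.isAffineOpen (fun U V h f hV ↦
    (IsBaseChangeAlong.iff_of_isLocalizationAway f (isLocalizationAway_sectionsMap h
      (hB.isAffineOpen U U.2) hV)).2
        (isQCohMod_iff.1 hM ⟨U, trivial⟩ ⟨V, trivial⟩ (hB.isAffineOpen U U.2) f hV h))
    hB.basicOpen_mem

lemma IsSheafCond.isQCohMod (hB : IsAffineBasis B) {M : LModData k Z Set.univ A}
    (hM : M.IsSheafCond) (hMq : (M.reindex (Set.subset_univ B)).IsQuasicoherent) :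
    IsQCohMod A.strOpens M :=
  isQCohMod_iff.2 fun _ _ hU _ hD h ↦ ⟨hM.exists_pow_smul_eq_res hMq hB hU.isCompact hD h,
    fun _ ↦ hM.exists_pow_smul_eq_zero hMq hB hU.isCompact hD h⟩

variable (A) in
/-- The category `μ(A)`, as a full subcategory: sheaves of left `A`-modules that are quasicoherent
over the structure sheaf. -/
def quasicoherentSheaf : ObjectProperty (LModData k Z Set.univ A) :=
  fun M ↦ M.IsSheafCond ∧ IsQCohMod A.strOpens M

lemma quasicoherentSheaf_iff (hB : IsAffineBasis B) (M : LModData k Z Set.univ A) :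
    quasicoherentSheaf A M ↔
      M.IsSheafCond ∧ quasicoherent (A.reindex (Set.subset_univ B)) (M.reindex _) :=
  and_congr_right fun hM ↦ ⟨isQuasicoherent_reindex_of_isQCohMod hB, hM.isQCohMod hB⟩

lemma map_restriction_quasicoherentSheaf (hB : IsAffineBasis B) :
    (quasicoherentSheaf A).map (restriction A (Set.subset_univ B)) =
      quasicoherent (A.reindex (Set.subset_univ B)) := by
  refine le_antisymm ?_ fun P hP ↦ ?_
  · rintro _ ⟨M, hM, ⟨e⟩⟩
    exact ObjectProperty.prop_of_iso _ e ((quasicoherentSheaf_iff hB M).1 hM).2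
  let e := asIso ((coextensionAdjunction A (Set.subset_univ B)).counit.app P)
  have isSheafCond : P.IsSheafCond :=
    hP.isSheafCond hB.isAffineOpen hB.basicOpen_mem hB.inf_mem
  exact ⟨_, (quasicoherentSheaf_iff hB _).2 ⟨isSheafCond.coextension _ hB.isBasis,
    ObjectProperty.prop_of_iso _ e.symm hP⟩, ⟨e⟩⟩

end LModData
end QuasicoherentSheaves

section ExactnessOfExtensions

namespace LModData

variable {A : AlgData k Z Set.univ} [A.StructureMap] {B : Set Z.Opens}

lemma mem_range_of_locally_mem_range (hB : IsAffineBasis B) {P Q : LModData k Z Set.univ A}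
    (hP : (P.reindex (Set.subset_univ B)).IsQuasicoherent)
    (hQ : (Q.reindex (Set.subset_univ B)).IsQuasicoherent) (φ : P ⟶ Q) (U : B)
    {x : Q.sec ⟨U, trivial⟩} (hx : ∀ p ∈ (U : Z.Opens), ∃ (V : (Set.univ : Set Z.Opens))
      (hV : (V : Z.Opens) ≤ U), p ∈ (V : Z.Opens) ∧
        Q.res (U := ⟨U, trivial⟩) hV x ∈ Set.range (LModHom.app φ V)) :
    x ∈ Set.range (LModHom.app φ ⟨U, trivial⟩) := by
  have shrink (p : (U : Z.Opens)) : ∃ (V : B) (hV : (V : Z.Opens) ≤ U), p.1 ∈ (V : Z.Opens) ∧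
      Q.res (U := ⟨U, trivial⟩) (V := ⟨V, trivial⟩) hV x ∈
        Set.range (LModHom.app φ ⟨V, trivial⟩) := by
    obtain ⟨V, hV, hpV, y, hy⟩ := hx p p.2
    obtain ⟨V', hV', hpV', hle⟩ := Opens.isBasis_iff_nbhd.1 hB.isBasis hpV
    have hle' : (⟨V', trivial⟩ : (Set.univ : Set Z.Opens)).1 ≤ V := hle
    exact ⟨⟨V', hV'⟩, hle.trans hV, hpV', P.res hle' y,
      (LModHom.comm_res φ hle' y).trans ((congrArg _ hy).trans (Q.res_comp hle' hV x))⟩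
  choose V hV hpV hmem using shrink
  exact hP.mem_range_of_cover hQ hB.isAffineOpen hB.basicOpen_mem
    ((restriction A (Set.subset_univ B)).map φ) (U := U) hV
    (fun p hp ↦ Opens.mem_iSup.2 ⟨⟨p, hp⟩, hpV ⟨p, hp⟩⟩) hmem

end LModData

namespace NExt

variable {n : ℕ}

section Sheaves

variable {A : AlgData k Z Set.univ} {B : Set Z.Opens}
  {M N : LModData k Z Set.univ A} {E : NExt n M N}

lemma LocallyExact.sectionwiseExact_reindex [A.StructureMap] (hE : E.LocallyExact)
    (hB : IsAffineBasis B)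
    (hq : ∀ i, ((E.obj i).reindex (Set.subset_univ B)).IsQuasicoherent) :
    (E.reindex (Set.subset_univ B)).SectionwiseExact := by
  obtain ⟨injective, complex, exact, surjective⟩ := hE
  refine ⟨fun U ↦ injective ⟨U, trivial⟩, fun j hj U x ↦ ⟨fun hx ↦ ?_, ?_⟩, fun U x ↦ ?_⟩
  · exact LModData.mem_range_of_locally_mem_range hB (hq (j + 2)) (hq (j + 1)) (E.d (j + 1)) U
      (exact j hj ⟨U, trivial⟩ x hx)
  · rintro ⟨y, rfl⟩
    exact complex j hj ⟨U, trivial⟩ y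
  · exact LModData.mem_range_of_locally_mem_range hB (hq 1) (hq 0) (E.d 0) U
      (surjective ⟨U, trivial⟩ x)

lemma locallyExact_of_sectionwiseExact_reindex (hB : Opens.IsBasis B)
    (hs : ∀ i, (E.obj i).IsSheafCond) (hE : (E.reindex (Set.subset_univ B)).SectionwiseExact) :
    E.LocallyExact := by
  obtain ⟨injective, exact, surjective⟩ := hE
  have exists_mem {U : (Set.univ : Set Z.Opens)} {p : Z} (hp : p ∈ (U : Z.Opens)) :
      ∃ (V : (Set.univ : Set Z.Opens)) (_ : (V : Z.Opens) ≤ U), p ∈ (V : Z.Opens) ∧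
        (V : Z.Opens) ∈ B := by
    obtain ⟨V, hV, hpV, hVU⟩ := Opens.isBasis_iff_nbhd.1 hB hp
    exact ⟨⟨V, trivial⟩, hVU, hpV, hV⟩
  refine ⟨fun U ↦ (injective_iff_map_eq_zero _).2 fun x hx ↦ ?_, fun j hj U y ↦ ?_,
    fun j hj U x hx p hp ↦ ?_, fun U x p hp ↦ ?_⟩
  · refine (hs (n + 1)).eq_of_basis (Set.subset_univ B) hB fun V hV ↦ injective V ?_
    exact ((E.d n).comm_res _ x).trans
      ((congrArg _ (hx.trans (map_zero _).symm)).trans ((E.d n).comm_res _ 0).symm)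
  · refine (hs j).eq_of_basis (Set.subset_univ B) hB fun V hV ↦ ?_
    rw [← (E.d j).comm_res, ← (E.d (j + 1)).comm_res, map_zero]
    exact (exact j hj V _).2 ⟨_, rfl⟩
  · obtain ⟨V, hV, hpV, hVB⟩ := exists_mem hp
    exact ⟨V, hV, hpV, (exact j hj ⟨V, hVB⟩ _).1
      (((E.d j).comm_res hV x).trans ((congrArg _ hx).trans (map_zero _)))⟩
  · obtain ⟨V, hV, hpV, hVB⟩ := exists_mem hp
    exact ⟨V, hV, hpV, surjective ⟨V, hVB⟩ _⟩

end Sheaves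

section AffineOpens

variable {X : Scheme.{0}} {G G' : Set X.Opens} {A : AlgData k X G}
  {P N : LModData k X G A} {E : NExt n P N}

lemma SectionwiseExact.reindex (hE : E.SectionwiseExact) (h : G' ⊆ G) :
    (E.reindex h).SectionwiseExact :=
  ⟨fun U ↦ hE.1 ⟨U, h U.2⟩, fun j hj U ↦ hE.2.1 j hj ⟨U, h U.2⟩, fun U ↦ hE.2.2 ⟨U, h U.2⟩⟩

lemma sectionwiseExact_of_reindex [A.StructureMap] (h : G' ⊆ G) (hG : ∀ V ∈ G, IsAffineOpen V)
    (hle : ∀ V ∈ G, ∃ U ∈ G', V ≤ U) (hq : ∀ i, (E.obj i).IsQuasicoherent)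
    (hE : (E.reindex h).SectionwiseExact) : E.SectionwiseExact := by
  have exists_le (V : G) : ∃ U : G, (U : X.Opens) ∈ G' ∧ (V : X.Opens) ≤ U :=
    let ⟨U, hU, hVU⟩ := hle V V.2
    ⟨⟨U, h hU⟩, hU, hVU⟩
  choose U hU hVU using exists_le
  have flat (V : G) : (sectionsMap (hVU V)).Flat := flat_sectionsMap _ (hG _ (U V).2) (hG V V.2)
  have comm (i : ℕ) (V : G) (x : (E.obj (i + 1)).sec (U V)) :=
    ((E.d i).comm_res (hVU V) x).symm
  let d (i : ℕ) (V : G) : (E.obj (i + 1)).sec V →ₗ[Γ(X, V)] (E.obj i).sec V :=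
    LModData.appΓ (E.d i) V
  refine ⟨fun V ↦ ?_, fun j hj V ↦ ?_, fun V ↦ ?_⟩
  · exact IsBaseChangeAlong.injective_of_flat (a := d n (U V)) (a' := d n V) (flat V)
      (hq (n + 1) (hVU V)) (hq n (hVU V)) (comm n V) (hE.1 ⟨U V, hU V⟩)
  · exact IsBaseChangeAlong.exact_of_flat (a := d (j + 1) (U V)) (a' := d (j + 1) V)
      (b := d j (U V)) (b' := d j V) (flat V) (hq (j + 2) (hVU V)) (hq (j + 1) (hVU V))
      (hq j (hVU V)) (comm (j + 1) V) (comm j V) (hE.2.1 j hj ⟨U V, hU V⟩)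
  · exact IsBaseChangeAlong.surjective_of_surjective (a := d 0 (U V)) (a' := d 0 V)
      (hq 1 (hVU V)) (hq 0 (hVU V)) (comm 0 V) (hE.2.2 ⟨U V, hU V⟩)

end AffineOpens

lemma locallyExact_iff {Z : Scheme.{0}} {A : AlgData k Z Set.univ} [A.StructureMap]
    {W B : Set Z.Opens} (hB : IsAffineBasis B) (hWB : W ⊆ B) (hle : ∀ V ∈ B, ∃ U ∈ W, V ≤ U)
    {M N : LModData k Z Set.univ A} {E : NExt n M N}
    (hE : ∀ i, LModData.quasicoherentSheaf A (E.obj i)) :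
    E.LocallyExact ↔ (E.reindex (Set.subset_univ W)).SectionwiseExact := by
  have quasicoherent (i : ℕ) := LModData.isQuasicoherent_reindex_of_isQCohMod hB (hE i).2
  constructor
  · intro h
    exact (h.sectionwiseExact_reindex hB quasicoherent).reindex hWB
  · intro h
    exact locallyExact_of_sectionwiseExact_reindex hB.isBasis (fun i ↦ (hE i).1)
      (sectionwiseExact_of_reindex hWB hB.isAffineOpen hle quasicoherent h)

end NExt
end ExactnessOfExtensions

section RestrictionOfQuasicoherentSheaves

lemma objectProperty_map_map {C D E : Type*} [Category* C] [Category* D] [Category* E]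
    (P : ObjectProperty C) (F : C ⥤ D) (G : D ⥤ E) : (P.map F).map G = P.map (F ⋙ G) := by
  ext Y
  constructor
  · rintro ⟨_, ⟨X, hX, ⟨e⟩⟩, ⟨e'⟩⟩
    exact ⟨X, hX, ⟨G.mapIso e ≪≫ e'⟩⟩
  · rintro ⟨X, hX, e⟩
    exact ⟨F.obj X, P.prop_map_obj F hX, e⟩

variable {A : AlgData k Z Set.univ} [A.StructureMap]
  {W B : Set Z.Opens}

namespace LModData

lemma map_restriction_quasicoherentSheaf_of_subset (hB : IsAffineBasis B) (hWB : W ⊆ B) :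
    (quasicoherentSheaf A).map (restriction A (Set.subset_univ W)) =
      (quasicoherent (A.reindex (Set.subset_univ B))).map
        (restriction (A.reindex (Set.subset_univ B)) hWB) := by
  rw [← map_restriction_quasicoherentSheaf hB]
  exact (objectProperty_map_map (quasicoherentSheaf A) (restriction A (Set.subset_univ B))
    (restriction (A.reindex (Set.subset_univ B)) hWB)).symm

lemma regular_isQuasicoherent (hB : IsAffineBasis B)
    (hA : IsQCohMod A.strOpens (regular A)) :
    (regular (A.reindex (Set.subset_univ B))).IsQuasicoherent :=
  have hA' := isQuasicoherent_reindex_of_isQCohMod hB hA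
  fun _ _ h ↦ hA' h

lemma bijective_restriction_map_of_quasicoherentSheaf (hB : IsAffineBasis B) (hWB : W ⊆ B)
    (hinf : ∀ U ∈ W, ∀ V ∈ W, U ⊓ V ∈ W) (hle : ∀ V ∈ B, ∃ U ∈ W, V ≤ U)
    (hA : IsQCohMod A.strOpens (regular A)) {M N : LModData k Z Set.univ A}
    (hM : quasicoherentSheaf A M) (hN : quasicoherentSheaf A N) :
    Function.Bijective ((restriction A (Set.subset_univ W)).map : (M ⟶ N) → _) :=
  ((isQuasicoherent_reindex_of_isQCohMod hB hM.2).bijective_restriction_map hWB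
    (regular_isQuasicoherent hB hA) hinf hle).comp
    (hN.1.bijective_restriction_map (Set.subset_univ B) hB.isBasis M)

lemma isClosedUnderKernels_map_quasicoherentSheaf (hB : IsAffineBasis B) (hWB : W ⊆ B)
    (hinf : ∀ U ∈ W, ∀ V ∈ W, U ⊓ V ∈ W) (hle : ∀ V ∈ B, ∃ U ∈ W, V ≤ U)
    (hA : IsQCohMod A.strOpens (regular A)) :
    ((quasicoherentSheaf A).map (restriction A (Set.subset_univ W))).IsClosedUnderKernels := by
  have := isClosedUnderKernels_quasicoherent (A := A.reindex (Set.subset_univ B)) hB.isAffineOpen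
  rw [map_restriction_quasicoherentSheaf_of_subset hB hWB]
  exact isClosedUnderKernels_map _ (restriction (A.reindex (Set.subset_univ B)) hWB)
    fun P Q hP _ ↦ (IsQuasicoherent.bijective_restriction_map hWB hP
      (regular_isQuasicoherent hB hA) hinf hle).2

lemma isClosedUnderFiniteProducts_map_quasicoherentSheaf (hB : IsAffineBasis B) (hWB : W ⊆ B) :
    ((quasicoherentSheaf A).map
      (restriction A (Set.subset_univ W))).IsClosedUnderFiniteProducts := by
  rw [map_restriction_quasicoherentSheaf_of_subset hB hWB]
  exact inferInstanceAs ((quasicoherent (A.reindex (Set.subset_univ B))).map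
    (restriction (A.reindex (Set.subset_univ B)) hWB)).IsClosedUnderFiniteProducts

lemma hasAcyclicEmbeddings_map_quasicoherentSheaf [CompactSpace Z] (hW : W ⊆ Z.affineOpens)
    (hinf : ∀ U ∈ W, ∀ V ∈ W, U ⊓ V ∈ W) (hcover : ⨆ U : W, (U : Z.Opens) = ⊤)
    (hA : IsQCohMod A.strOpens (regular A)) :
    HasAcyclicEmbeddings.{0}
      ((quasicoherentSheaf A).map (restriction A (Set.subset_univ W))) := by
  have hB := isAffineBasis_affineRefinements hW hinf hcover
  rw [map_restriction_quasicoherentSheaf_of_subset hB (subset_affineRefinements hW)]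
  exact hasAcyclicEmbeddings_quasicoherent_map hW hinf hcover (regular_isQuasicoherent hB hA)

end LModData
end RestrictionOfQuasicoherentSheaves

section YonedaExtOfFullyFaithful

open Limits Abelian

lemma exists_iso_map_hom_eq {C D : Type*} [Category* C] [Category* D] {F : C ⥤ D}
    {P : ObjectProperty C}
    (hF : ∀ ⦃X Y : C⦄, P X → P Y → Function.Bijective (F.map : (X ⟶ Y) → _)) {X Y : C}
    (hX : P X) (hY : P Y) (e : F.obj X ≅ F.obj Y) : ∃ e' : X ≅ Y, F.map e'.hom = e.hom := by
  obtain ⟨f, hf⟩ := (hF hX hY).2 e.hom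
  obtain ⟨g, hg⟩ := (hF hY hX).2 e.inv
  exact ⟨⟨f, g, (hF hX hX).1 (by rw [F.map_comp, hf, hg, e.hom_inv_id, F.map_id]),
    (hF hY hY).1 (by rw [F.map_comp, hf, hg, e.inv_hom_id, F.map_id])⟩, hf⟩

variable {X : Scheme.{0}} {G : Set X.Opens} {A : AlgData k X G}
  {n : ℕ} {M N : LModData k X G A}
  {𝓑 : Type 1} [Category.{0} 𝓑] [Abelian 𝓑]
  {μ : ObjectProperty (LModData k X G A)} {F : LModData k X G A ⥤ 𝓑}

lemma LModData.exists_exact_iff {M₁ M₂ M₃ : LModData k X G A} {f : M₁ ⟶ M₂} {g : M₂ ⟶ M₃} :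
    (∃ w : f ≫ g = 0, (ShortComplex.mk f g w).Exact) ↔
      ∀ U, Function.Exact (LModHom.app f U) (LModHom.app g U) := by
  refine ⟨fun ⟨_, h⟩ ↦ (exact_iff _).1 h, fun h ↦ ⟨?_, (exact_iff _).2 h⟩⟩
  exact LModHom.ext fun U x ↦ ((h U).apply_apply_eq_zero x).trans (zero_app U x).symm

lemma LModData.comp_eq_iff {M₁ M₂ M₃ : LModData k X G A} {f : M₁ ⟶ M₂} {g : M₂ ⟶ M₃}
    {h : M₁ ⟶ M₃} :
    f ≫ g = h ↔ ∀ U x, LModHom.app g U (LModHom.app f U x) = LModHom.app h U x :=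
  LModHom.ext_iff

namespace NExt

/-- The sequence `0 ⟶ F N ⟶ F (obj n) ⟶ ⋯ ⟶ F (obj 1) ⟶ F M ⟶ 0` obtained by applying `F` to
`E` is exact. -/
def ExactUnder (F : LModData k X G A ⥤ 𝓑) (E : NExt n M N) : Prop :=
  Mono (F.map (E.d n)) ∧
  (∀ j < n, ∃ w : F.map (E.d (j + 1)) ≫ F.map (E.d j) = 0, (ShortComplex.mk _ _ w).Exact) ∧
  Epi (F.map (E.d 0))

/-- The Yoneda extension obtained by applying `F` to `E`. -/
def map (E : NExt n M N) (hE : E.ExactUnder F) : YonedaExtension n (F.obj M) (F.obj N) where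
  obj i := F.obj (E.obj i)
  d i := F.map (E.d i)
  isoP := F.mapIso (@asIso _ _ _ _ E.isoP ((LModData.isIso_iff _).2 E.isoP_bij))
  isoN := F.mapIso (@asIso _ _ _ _ E.isoN ((LModData.isIso_iff _).2 E.isoN_bij))
  mono_d := hE.1
  epi_d := hE.2.2
  d_comp_d j hj := (hE.2.1 j hj).1
  exact j hj := (hE.2.1 j hj).2

lemma sectionwiseExact_iff_exactUnder_id {E : NExt n M N} :
    E.SectionwiseExact ↔ E.ExactUnder (𝟭 _) :=
  and_congr (LModData.mono_iff _).symm (and_congr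
    (forall₂_congr fun _ _ ↦ LModData.exists_exact_iff.symm) (LModData.epi_iff _).symm)

lemma sectionwiseExact_reindex_iff {E : NExt n M N} {G' : Set X.Opens} (h : G' ⊆ G) :
    (E.reindex h).SectionwiseExact ↔ E.ExactUnder (LModData.restriction A h) :=
  sectionwiseExact_iff_exactUnder_id

lemma morRel_iff {E E' : NExt n M N} :
    MorRel E E' ↔ ∃ f : ∀ i, E.obj i ⟶ E'.obj i, (∀ i, E.d i ≫ f i = f (i + 1) ≫ E'.d i) ∧
      f 0 ≫ E'.isoP = E.isoP ∧ E.isoN ≫ f (n + 1) = E'.isoN :=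
  exists_congr fun f ↦ and_congr
    (forall_congr' fun i ↦ (LModData.comp_eq_iff (h := f (i + 1) ≫ E'.d i)).symm)
    (and_congr LModData.comp_eq_iff.symm LModData.comp_eq_iff.symm)

lemma MorRel.cls_map_eq [HasExt.{0} 𝓑] {E E' : NExt n M N} (h : MorRel E E')
    (hE : E.ExactUnder F) (hE' : E'.ExactUnder F) :
    (E.map hE).cls.{0} = (E'.map hE').cls.{0} := by
  obtain ⟨f, hd, hP, hN⟩ := morRel_iff.1 h
  refine YonedaExtension.Hom.cls_eq
    { app i := F.map (f i), comm i _ := ?_, comm_isoP := ?_, comm_isoN := ?_ }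
  · exact (F.map_comp _ _).symm.trans ((congrArg _ (hd i).symm).trans (F.map_comp _ _))
  · exact (F.map_comp _ _).symm.trans ((congrArg _ hP).trans (Category.comp_id _).symm)
  · exact (F.map_comp _ _).symm.trans (congrArg _ hN)

/-- The extension with the same objects as `E` in which the maps that carry no information are
replaced by zero. -/
def truncate (E : NExt n M N) : NExt n M N where
  __ := E
  d i := if i ≤ n then E.d i else (0 : E.obj (i + 1) ⟶ E.obj i)

lemma truncate_d (E : NExt n M N) {i : ℕ} (hi : i ≤ n) : E.truncate.d i = E.d i :=
  if_pos hi

lemma ExactUnder.truncate {E : NExt n M N} (hE : E.ExactUnder F) : E.truncate.ExactUnder F := by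
  refine ⟨?_, fun j hj ↦ ?_, ?_⟩
  · rw [E.truncate_d le_rfl]
    exact hE.1
  · rw [E.truncate_d hj, E.truncate_d hj.le]
    exact hE.2.1 j hj
  · rw [E.truncate_d n.zero_le]
    exact hE.2.2

lemma morRel_truncate {E E' : NExt n M N} (f : ∀ i, E.obj i ⟶ E'.obj i)
    (hd : ∀ i ≤ n, E.d i ≫ f i = f (i + 1) ≫ E'.d i)
    (hP : f 0 ≫ E'.isoP = E.isoP) (hN : E.isoN ≫ f (n + 1) = E'.isoN) :
    MorRel E.truncate E' := by
  let d (i : ℕ) : E.obj (i + 1) ⟶ E.obj i := if i ≤ n then E.d i else 0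
  let g (i : ℕ) : E.obj i ⟶ E'.obj i := if i ≤ n + 1 then f i else 0
  have hd' (i : ℕ) : d i ≫ g i = g (i + 1) ≫ E'.d i := by
    by_cases hi : i ≤ n
    · simpa only [d, g, if_pos hi, if_pos (Nat.le_succ_of_le hi), if_pos (Nat.succ_le_succ hi)]
        using hd i hi
    · simp only [d, g, if_neg hi, if_neg (mt Nat.le_of_succ_le_succ hi), zero_comp]
  refine morRel_iff.2 ⟨g, hd', ?_, ?_⟩
  · exact (congrArg (· ≫ _) (if_pos (n + 1).zero_le)).trans hP
  · exact (congrArg (_ ≫ ·) (if_pos le_rfl)).trans hN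

lemma quot_mk_eq_of_hom {Cond : NExt n M N → Prop}
    (hcond : ∀ E, Cond E ↔ (∀ i, μ (E.obj i)) ∧ E.ExactUnder F)
    (hF : ∀ ⦃X Y⦄, μ X → μ Y → Function.Bijective (F.map : (X ⟶ Y) → _)) (hM : μ M) (hN : μ N)
    {E E' : {E : NExt n M N // Cond E}}
    (φ : YonedaExtension.Hom (𝟙 _) (E.1.map ((hcond _).1 E.2).2)
      (E'.1.map ((hcond _).1 E'.2).2)) :
    (Quot.mk _ E : YExt n M N Cond) = Quot.mk _ E' := by
  have hE := (hcond _).1 E.2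
  have hE' := (hcond _).1 E'.2
  choose f hf using fun i ↦ (hF (hE.1 i) (hE'.1 i)).2 (φ.app i)
  have hd (i : ℕ) (hi : i ≤ n) : E.1.d i ≫ f i = f (i + 1) ≫ E'.1.d i := by
    refine (hF (hE.1 (i + 1)) (hE'.1 i)).1 ?_
    rw [F.map_comp, F.map_comp, hf, hf]
    exact (φ.comm i hi).symm
  have hP : f 0 ≫ E'.1.isoP = E.1.isoP := by
    refine (hF (hE.1 0) hM).1 ?_
    rw [F.map_comp, hf]
    exact φ.comm_isoP.trans (Category.comp_id _)
  have hN : E.1.isoN ≫ f (n + 1) = E'.1.isoN := by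
    refine (hF hN (hE'.1 (n + 1))).1 ?_
    rw [F.map_comp, hf]
    exact φ.comm_isoN
  let T : {E : NExt n M N // Cond E} := ⟨E.1.truncate, (hcond _).2 ⟨hE.1, hE.2.truncate⟩⟩
  have toE : (Quot.mk _ T : YExt n M N Cond) = Quot.mk _ E :=
    Quot.sound (morRel_truncate (fun i ↦ 𝟙 _)
      (fun i _ ↦ (Category.comp_id _).trans (Category.id_comp (X := E.1.obj (i + 1)) _).symm)
      (Category.id_comp _) (Category.comp_id _))
  have toE' : (Quot.mk _ T : YExt n M N Cond) = Quot.mk _ E' :=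
    Quot.sound (morRel_truncate f hd hP hN)
  exact toE.symm.trans toE'

lemma exists_hom_map (hF : ∀ ⦃X Y⦄, μ X → μ Y → Function.Bijective (F.map : (X ⟶ Y) → _))
    (hM : μ M) (hN : μ N) (V : YonedaExtension n (F.obj M) (F.obj N))
    (hV : ∀ i, μ.map F (V.obj i)) :
    ∃ (E : NExt n M N) (hE : E.ExactUnder F), (∀ i, μ (E.obj i)) ∧
      Nonempty (YonedaExtension.Hom (𝟙 _) V (E.map hE)) := by
  choose Y hY e using hV
  replace e (i : ℕ) : F.obj (Y i) ≅ V.obj i := (e i).some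
  choose d hd using fun i ↦
    (hF (hY (i + 1)) (hY i)).2 ((e (i + 1)).hom ≫ V.d i ≫ (e i).inv)
  obtain ⟨p, hp⟩ := exists_iso_map_hom_eq hF (hY 0) hM (e 0 ≪≫ V.isoP)
  obtain ⟨q, hq⟩ := exists_iso_map_hom_eq hF hN (hY (n + 1)) (V.isoN ≪≫ (e (n + 1)).symm)
  have hw (j : ℕ) (hj : j < n) : F.map (d (j + 1)) ≫ F.map (d j) = 0 := by
    simp [hd, reassoc_of% V.d_comp_d j hj]
  refine ⟨{ obj := Y, d := d, isoP := p.hom, isoN := q.hom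
            isoP_bij := (LModData.isIso_iff _).1 inferInstance
            isoN_bij := (LModData.isIso_iff _).1 inferInstance },
    ⟨?_, fun j hj ↦ ⟨hw j hj, ?_⟩, ?_⟩, hY,
    ⟨{ app i := (e i).inv, comm i _ := ?_, comm_isoP := ?_, comm_isoN := ?_ }⟩⟩
  · rw [hd]
    infer_instance
  · exact (ShortComplex.exact_iff_of_iso
      (ShortComplex.isoMk (S₁ := .mk _ _ (hw j hj)) (S₂ := .mk _ _ (V.d_comp_d j hj))
        (e (j + 2)) (e (j + 1)) (e j) (by simp [hd]) (by simp [hd]))).2 (V.exact j hj)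
  · rw [hd]
    infer_instance
  · simp [NExt.map, hd]
  · simp [NExt.map, hp]
  · simp [NExt.map, hq]

end NExt

variable [HasExt.{0} 𝓑]

/-- The map to Ext sending the class of `E` to the class of the Yoneda extension `F E`. -/
def YExt.toExt {Cond : NExt n M N → Prop} (hcond : ∀ E, Cond E → E.ExactUnder F) :
    YExt n M N Cond → Ext.{0} (F.obj M) (F.obj N) n :=
  Quot.lift (fun E ↦ (E.1.map (hcond E.1 E.2)).cls) fun E E' h ↦
    h.cls_map_eq (hcond E.1 E.2) (hcond E'.1 E'.2)

lemma YExt.toExt_bijective {C : ObjectProperty 𝓑} [C.IsClosedUnderKernels]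
    [C.IsClosedUnderFiniteProducts] (hacyclic : HasAcyclicEmbeddings.{0} C) (hC : μ.map F = C)
    (hF : ∀ ⦃X Y⦄, μ X → μ Y → Function.Bijective (F.map : (X ⟶ Y) → _))
    (hM : μ M) (hN : μ N) {Cond : NExt (n + 1) M N → Prop}
    (hcond : ∀ E, Cond E ↔ (∀ i, μ (E.obj i)) ∧ E.ExactUnder F) :
    Function.Bijective (YExt.toExt fun E hE ↦ ((hcond E).1 hE).2) := by
  subst hC
  have hM' := μ.prop_map_obj F hM
  have hN' := μ.prop_map_obj F hN
  refine ⟨?_, fun x ↦ ?_⟩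
  · rintro ⟨E⟩ ⟨E'⟩ heq
    have hE := (hcond _).1 E.2
    have hE' := (hcond _).1 E'.2
    obtain ⟨V, hV, ⟨φ⟩, ⟨φ'⟩⟩ := YonedaExtension.exists_hom_of_cls_eq hacyclic hM' hN'
      (fun i ↦ μ.prop_map_obj F (hE.1 i)) (fun i ↦ μ.prop_map_obj F (hE'.1 i)) heq
    obtain ⟨E'', hE'', hμ, ⟨ψ⟩⟩ := NExt.exists_hom_map hF hM hN V hV
    let L : {E // Cond E} := ⟨E'', (hcond _).2 ⟨hμ, hE''⟩⟩
    have toL := NExt.quot_mk_eq_of_hom hcond hF hM hN (E := E) (E' := L) (φ.comp ψ)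
    have toL' := NExt.quot_mk_eq_of_hom hcond hF hM hN (E := E') (E' := L) (φ'.comp ψ)
    exact toL.trans toL'.symm
  · obtain ⟨V, hV, rfl⟩ := YonedaExtension.exists_cls_eq hacyclic hM' hN' x
    obtain ⟨E, hE, hμ, ⟨ψ⟩⟩ := NExt.exists_hom_map hF hM hN V hV
    exact ⟨Quot.mk _ ⟨E, (hcond _).2 ⟨hμ, hE⟩⟩, ψ.cls_eq.symm⟩

end YonedaExtOfFullyFaithful

section RestrictionOnExt

open Abelian

namespace NExt

lemma cls_map_id_reindex {X : Scheme.{0}} {G G' : Set X.Opens} {A : AlgData k X G}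
    {n : ℕ} {M N : LModData k X G A} {E : NExt n M N} (h : G' ⊆ G)
    (hE : (E.reindex h).ExactUnder (𝟭 _)) (hE' : E.ExactUnder (LModData.restriction A h)) :
    ((E.reindex h).map hE).cls.{0} = (E.map hE').cls.{0} :=
  YonedaExtension.Hom.cls_eq
    { app _ := 𝟙 _
      comm _ _ := (Category.id_comp _).trans (Category.comp_id _).symm
      comm_isoP := (Category.id_comp _).trans (Category.comp_id _).symm
      comm_isoN := Category.comp_id _ }

end NExt

lemma map_id_top {C : Type*} [Category* C] :
    (⊤ : ObjectProperty C).map (𝟭 C) = ⊤ :=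
  top_le_iff.1 fun X _ ↦ ObjectProperty.prop_map_obj _ (𝟭 C) (X := X) trivial

lemma YExt.toExt_id_bijective {X : Scheme.{0}} {G : Set X.Opens} {A : AlgData k X G} {n : ℕ}
    {M N : LModData k X G A} :
    Function.Bijective (YExt.toExt (n := n + 1) (M := M) (N := N) (F := 𝟭 _)
      fun _ ↦ NExt.sectionwiseExact_iff_exactUnder_id.1) := by
  have : (⊤ : ObjectProperty (LModData k X G A)).IsClosedUnderFiniteProducts :=
    ⟨fun _ ↦ inferInstance⟩
  exact YExt.toExt_bijective LModData.hasAcyclicEmbeddings_top map_id_top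
    (fun _ _ _ _ ↦ Function.bijective_id) trivial trivial
    fun _ ↦ NExt.sectionwiseExact_iff_exactUnder_id.trans (and_iff_right fun _ ↦ trivial).symm

lemma exists_bijective_yExt {Z : Scheme.{0}} [CompactSpace Z] {A : AlgData k Z Set.univ}
    [A.StructureMap] {W : Set Z.Opens} (hA : IsQCohMod A.strOpens (LModData.regular A))
    (hW : W ⊆ Z.affineOpens) (hinf : ∀ U ∈ W, ∀ V ∈ W, U ⊓ V ∈ W)
    (hcover : ⨆ U : W, (U : Z.Opens) = ⊤) {M N : LModData k Z Set.univ A}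
    (hM : LModData.quasicoherentSheaf A M) (hN : LModData.quasicoherentSheaf A N) (n : ℕ) :
    ∃ Φ : YExt (n + 1) M N
          (fun E ↦ (∀ i, LModData.quasicoherentSheaf A (E.obj i)) ∧ E.LocallyExact) →
        YExt (n + 1) (M.reindex (Set.subset_univ W)) (N.reindex (Set.subset_univ W))
          (fun E ↦ E.SectionwiseExact),
      Function.Bijective Φ ∧ ∀ E E', E'.1 = E.1.reindex (Set.subset_univ W) →
        Φ (Quot.mk _ E) = Quot.mk _ E' := by
  have hB := isAffineBasis_affineRefinements hW hinf hcover
  have hWB := subset_affineRefinements hW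
  have hle := exists_le_of_mem_affineRefinements (W := W)
  have := LModData.isClosedUnderKernels_map_quasicoherentSheaf hB hWB hinf hle hA
  have := LModData.isClosedUnderFiniteProducts_map_quasicoherentSheaf (A := A) hB hWB
  have hcond (E : NExt (n + 1) M N) :
      ((∀ i, LModData.quasicoherentSheaf A (E.obj i)) ∧ E.LocallyExact) ↔
        (∀ i, LModData.quasicoherentSheaf A (E.obj i)) ∧
          E.ExactUnder (LModData.restriction A (Set.subset_univ W)) :=
    and_congr_right fun hE ↦
      (NExt.locallyExact_iff hB hWB hle hE).trans (NExt.sectionwiseExact_reindex_iff _)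
  have bijective_toExt := YExt.toExt_bijective
    (LModData.hasAcyclicEmbeddings_map_quasicoherentSheaf hW hinf hcover hA) rfl
    (fun _ _ ↦ LModData.bijective_restriction_map_of_quasicoherentSheaf hB hWB hinf hle hA)
    hM hN hcond
  refine ⟨(Equiv.ofBijective _ YExt.toExt_id_bijective).symm ∘
    YExt.toExt fun E hE ↦ ((hcond E).1 hE).2,
    (Equiv.bijective _).comp bijective_toExt, ?_⟩
  rintro E ⟨_, hE'⟩ rfl
  exact (Equiv.symm_apply_eq _).2 (NExt.cls_map_id_reindex _ _ _).symm

theorem restriction_to_W_fully_faithful_on_Ext_general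
    (hqc : CompactSpace Z)
    (A : AlgData k Z (Set.univ : Set Z.Opens))
    (str : ∀ U : Z.Opens, Γ(Z, U) →+* A.sec ⟨U, trivial⟩)
    (str_res : ∀ {U V : Z.Opens} (h : V ≤ U) (c : Γ(Z, U)),
      A.res (U := ⟨U, trivial⟩) (V := ⟨V, trivial⟩) h (str U c) =
        str V (Z.presheaf.map (homOfLE h).op c))
    (hA : IsQCohMod str (LModData.regular A))
    (W : Set Z.Opens) (hW : W ⊆ Z.affineOpens)
    (hinf : ∀ U V : Z.Opens, U ∈ W → V ∈ W → U ⊓ V ∈ W)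
    (hcover : (⨆ U : W, (U : Z.Opens)) = ⊤)
    (M N : LModData k Z Set.univ A)
    (hM : M.IsSheafCond ∧ IsQCohMod str M) (hN : N.IsSheafCond ∧ IsQCohMod str N) :
    Function.Bijective (fun φ : LModHom M N ↦ φ.reindex (Set.subset_univ W)) ∧
    ∀ n : ℕ, 1 ≤ n →
      (∀ E : {E : NExt n M N //
          (∀ i, (E.obj i).IsSheafCond ∧ IsQCohMod str (E.obj i)) ∧ E.LocallyExact},
        (E.1.reindex (Set.subset_univ W)).SectionwiseExact) ∧
      ∃ Φ : YExt n M N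
            (fun E ↦ (∀ i, (E.obj i).IsSheafCond ∧ IsQCohMod str (E.obj i)) ∧
              E.LocallyExact) →
          YExt n (M.reindex (Set.subset_univ W)) (N.reindex (Set.subset_univ W))
            (fun E' ↦ E'.SectionwiseExact),
        Function.Bijective Φ ∧
        ∀ (E : {E : NExt n M N //
            (∀ i, (E.obj i).IsSheafCond ∧ IsQCohMod str (E.obj i)) ∧ E.LocallyExact})
          (E' : {E' : NExt n (M.reindex (Set.subset_univ W))
              (N.reindex (Set.subset_univ W)) // E'.SectionwiseExact}),
          E'.1 = E.1.reindex (Set.subset_univ W) →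
          Φ (Quot.mk _ E) = Quot.mk _ E' := by
  let : A.StructureMap := ⟨fun U ↦ str U, fun h c ↦ str_res h c⟩
  replace hinf U (hU : U ∈ W) V (hV : V ∈ W) := hinf U V hU hV
  have hB := isAffineBasis_affineRefinements hW hinf hcover
  have hWB := subset_affineRefinements hW
  have hle := exists_le_of_mem_affineRefinements (W := W)
  refine ⟨LModData.bijective_restriction_map_of_quasicoherentSheaf hB hWB hinf hle hA hM hN,
    fun n hn ↦ ?_⟩
  obtain ⟨n, rfl⟩ := Nat.exists_eq_add_of_le' hn
  exact ⟨fun E ↦ (NExt.locallyExact_iff hB hWB hle E.2.1).1 E.2.2,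
    exists_bijective_yExt hA hW hinf hcover hM hN n⟩

end RestrictionOnExt

theorem restriction_to_W_fully_faithful_on_Ext
    -- `Z` is a quasicompact separated scheme over `k`:
    (hqc : CompactSpace Z) (hsep : Z.IsSeparated)
    (kstr : ∀ U : Z.Opens, k →+* Γ(Z, U))
    (kstr_res : ∀ {U V : Z.Opens} (h : V ≤ U) (c : k),
      Z.presheaf.map (homOfLE h).op (kstr U c) = kstr V c)
    -- a quasicoherent sheaf of `k`-algebras `A_Z` on `Z`:
    (A : AlgData k Z (Set.univ : Set Z.Opens))
    (hAsheaf : ∀ (U : (Set.univ : Set Z.Opens)) (ι : Type) (V : ι → (Set.univ : Set Z.Opens))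
      (hle : ∀ i, (V i : Z.Opens) ≤ (U : Z.Opens)),
      ((⨆ i, (V i : Z.Opens)) = (U : Z.Opens)) →
      ∀ s : ∀ i, A.sec (V i),
        (∀ (i j : ι) (W' : (Set.univ : Set Z.Opens)) (h1 : (W' : Z.Opens) ≤ V i)
          (h2 : (W' : Z.Opens) ≤ V j), A.res h1 (s i) = A.res h2 (s j)) →
        ∃! t : A.sec U, ∀ i, A.res (hle i) t = s i)
    (str : ∀ U : Z.Opens, Γ(Z, U) →+* A.sec ⟨U, trivial⟩)
    (str_res : ∀ {U V : Z.Opens} (h : V ≤ U) (c : Γ(Z, U)),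
      A.res (U := ⟨U, trivial⟩) (V := ⟨V, trivial⟩) h (str U c) =
        str V (Z.presheaf.map (homOfLE h).op c))
    (str_k : ∀ (U : Z.Opens) (c : k), str U (kstr U c) = algebraMap k _ c)
    (hAqcoh : ∀ (U : Z.Opens), IsAffineOpen U → ∀ f : Γ(Z, U),
      (∀ y : A.sec ⟨Z.basicOpen f, trivial⟩, ∃ (p : ℕ) (m : A.sec ⟨U, trivial⟩),
        (str (Z.basicOpen f) (Z.presheaf.map (homOfLE (Z.basicOpen_le f)).op f)) ^ p * y =
          A.res (U := ⟨U, trivial⟩) (V := ⟨Z.basicOpen f, trivial⟩) (Z.basicOpen_le f) m) ∧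
      (∀ m : A.sec ⟨U, trivial⟩,
        A.res (U := ⟨U, trivial⟩) (V := ⟨Z.basicOpen f, trivial⟩) (Z.basicOpen_le f) m = 0 →
          ∃ p : ℕ, (str U f) ^ p * m = 0))
    -- `W ⊆ Aff(Z)`, closed under pairwise intersections, covering `Z`:
    (W : Set Z.Opens)
    (hWaff : W ⊆ Z.affineOpens)
    (hWinter : ∀ U V : Z.Opens, U ∈ W → V ∈ W → U ⊓ V ∈ W)
    (hWcover : (⨆ U : W, (U : Z.Opens)) = ⊤)
    -- `M, N ∈ μ(A_Z)`:
    (M N : LModData k Z Set.univ A)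
    (hM : M.IsSheafCond) (hMq : IsQCohMod str M)
    (hN : N.IsSheafCond) (hNq : IsQCohMod str N) :
    -- `n = 0`: `j*` is bijective on `Hom`:
    (Function.Bijective
      (fun φ : LModHom M N => φ.reindex (Set.subset_univ W))) ∧
    -- `n ≥ 1`: `j*` is exact (sends extensions in `μ(A_Z)` to sectionwise exact sequences
    -- of presheaves of `A_W`-modules) and induces a bijection on Yoneda Ext:
    ∀ n : ℕ, 1 ≤ n →
      (∀ E : {E : NExt n M N //
          (∀ i, (E.obj i).IsSheafCond ∧ IsQCohMod str (E.obj i)) ∧ E.LocallyExact},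
        (E.1.reindex (Set.subset_univ W)).SectionwiseExact) ∧
      ∃ Φ : YExt n M N
            (fun E => (∀ i, (E.obj i).IsSheafCond ∧ IsQCohMod str (E.obj i)) ∧
              E.LocallyExact) →
          YExt n (M.reindex (Set.subset_univ W)) (N.reindex (Set.subset_univ W))
            (fun E' => E'.SectionwiseExact),
        Function.Bijective Φ ∧
        ∀ (E : {E : NExt n M N //
            (∀ i, (E.obj i).IsSheafCond ∧ IsQCohMod str (E.obj i)) ∧ E.LocallyExact})
          (E' : {E' : NExt n (M.reindex (Set.subset_univ W))
              (N.reindex (Set.subset_univ W)) // E'.SectionwiseExact}),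
          E'.1 = E.1.reindex (Set.subset_univ W) →
          Φ (Quot.mk _ E) = Quot.mk _ E' :=
  restriction_to_W_fully_faithful_on_Ext_general hqc A str str_res hAqcoh W hWaff hWinter
    hWcover M N ⟨hM, hMq⟩ ⟨hN, hNq⟩

end
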